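/- arXiv:math/9907213 — 3 statements merged into one kernel-verified Lean document; each statement's English description precedes it below -/
import Mathlib

section
/- Suppose q ≠ 2, or q = 2 and T ∤ M and (T+1) ∤ M. Let e_M(Γ) = gcd(e(Γ'/Γ), M) and let Γ_φ = {a ∈ Γ : ⟨σ, a⟩ = 0 for all σ ∈ H_Γ(M)} be the kernel of the induced map φ : Γ → Hom_A(H_Γ(M), Λ_M). Then Γ_φ^{e_M(Γ)} ⊆ Γ^M, i.e. the image of Γ_φ under the Carlitz action of e_M(Γ) is contained in the image of Γ under the Carlitz action of M. -/
open Polynomial IntermediateField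

set_option synthInstance.maxHeartbeats 1000000
set_option maxHeartbeats 1000000

/-- `ψ` is the Carlitz module: the ring homomorphism `A = 𝔽_q[T] → End_{𝔽_q}(k̄, +)`
determined by `T ↦ (α ↦ Tα + α^q)` and `c ↦ (α ↦ cα)` for constants `c ∈ 𝔽_q`. -/
def IsCarlitz {Fq : Type} [Field Fq] [Fintype Fq]
    (ψ : Polynomial Fq →+* AddMonoid.End (AlgebraicClosure (RatFunc Fq))) : Prop :=
  (∀ α, ψ X α = algebraMap (RatFunc Fq) (AlgebraicClosure (RatFunc Fq)) RatFunc.X * α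
      + α ^ Fintype.card Fq) ∧
  (∀ (c : Fq) (α), ψ (C c) α
      = algebraMap (RatFunc Fq) (AlgebraicClosure (RatFunc Fq)) (RatFunc.C c) * α)

/-- An automorphism `τ ∈ Gal(E/k)` fixes the `M`-torsion points `Λ_M` pointwise; when
`E ⊇ K = k(Λ_M)` this says exactly `τ ∈ Gal(E/K)`. -/
def FixesTorsion {Fq : Type} [Field Fq] [Fintype Fq]
    (ψ : Polynomial Fq →+* AddMonoid.End (AlgebraicClosure (RatFunc Fq)))
    (M : Polynomial Fq)
    {E : IntermediateField (RatFunc Fq) (AlgebraicClosure (RatFunc Fq))}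
    (τ : ↥E ≃ₐ[RatFunc Fq] ↥E) : Prop :=
  ∀ x : ↥E, ψ M (x : AlgebraicClosure (RatFunc Fq)) = 0 → τ x = x

/-- An automorphism `s ∈ Gal(E/k)` is an extension of `σ_B ∈ Gal(K/k)`, i.e. it acts on
the `M`-torsion points `Λ_M ⊆ E` by `λ ↦ λ^B`. -/
def ExtendsSigma {Fq : Type} [Field Fq] [Fintype Fq]
    (ψ : Polynomial Fq →+* AddMonoid.End (AlgebraicClosure (RatFunc Fq)))
    (M : Polynomial Fq)
    {E : IntermediateField (RatFunc Fq) (AlgebraicClosure (RatFunc Fq))}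
    (s : ↥E ≃ₐ[RatFunc Fq] ↥E) (B : Polynomial Fq) : Prop :=
  ∀ x : ↥E, ψ M (x : AlgebraicClosure (RatFunc Fq)) = 0 →
    ((s x : AlgebraicClosure (RatFunc Fq))) = ψ B (x : AlgebraicClosure (RatFunc Fq))

/-- `c` is the natural `A`-action on `Gal(E/K)`, defined via decompositions: for
`f ≡ f_1 + ⋯ + f_n (mod M)` with all `gcd(f_i, M) = 1` and extensions `s_i` of
`σ_{f_i}`, one has `c f τ = Σ_i s_i ∘ τ ∘ s_i⁻¹`. -/
def IsDecompConjAction {Fq : Type} [Field Fq] [Fintype Fq]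
    (ψ : Polynomial Fq →+* AddMonoid.End (AlgebraicClosure (RatFunc Fq)))
    (M : Polynomial Fq)
    {E : IntermediateField (RatFunc Fq) (AlgebraicClosure (RatFunc Fq))}
    (c : Polynomial Fq → (↥E ≃ₐ[RatFunc Fq] ↥E) → (↥E ≃ₐ[RatFunc Fq] ↥E)) : Prop :=
  ∀ (f : Polynomial Fq) (τ : ↥E ≃ₐ[RatFunc Fq] ↥E), FixesTorsion ψ M τ →
    ∀ (n : ℕ) (g : Fin n → Polynomial Fq), (∀ i, IsCoprime (g i) M) →
      M ∣ (f - ∑ i, g i) →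
      ∀ s : Fin n → (↥E ≃ₐ[RatFunc Fq] ↥E), (∀ i, ExtendsSigma ψ M (s i) (g i)) →
        c f τ = (List.ofFn (fun i => s i * τ * (s i)⁻¹)).prod

/-!
Let `a ∈ Γ_φ`. Unless `q = 2` and `T (T + 1)` shares a factor with `M`, there is a monic `B` such
that `B` and `B - 1` are both prime to `M`. A product of Frobenius elements, one for each prime
factor of `B`, acts on `Λ_M` by `λ ↦ λ^B`, because modulo a prime `P` the Carlitz action of `P` is
the `q ^ deg P`-power Frobenius and torsion of order prime to `P` injects into the residue field.
Call this automorphism `τ`: it commutes on `Λ_M` with the Galois group, and `τ - 1` is bijective on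
`Λ_M`. As in Sah's lemma, this lets one move a root `α` of `α^M = a` by a torsion point to a root
fixed by `τ`; since `a ∈ Γ_φ`, commutators of `τ` fix that root as well, so the whole Galois group
does. Hence `a = b^M` with `b ∈ k`, that is, `b ∈ Γ'`. Writing `e_M(Γ) = r e + s M`, the element
`b^(e_M(Γ)) = (b^e)^r + a^s` lies in `Γ`, and its image under `M` is `a^(e_M(Γ))`.
-/

lemma polynomial_induction_X_mul {A : Type*} [Semiring A] {motive : A[X] → Prop} (f : A[X])
    (C : ∀ a, motive (C a))
    (add : ∀ f g, motive f → motive g → motive (f + g))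
    (X_mul : ∀ f, motive f → motive (X * f)) : motive f := by
  induction f using Polynomial.induction_on with
  | C a => exact C a
  | add f g hf hg => exact add f g hf hg
  | monomial n a h => simpa only [pow_succ', ← mul_assoc, X_mul_C] using X_mul _ h

/-! ### The Carlitz module -/

section CarlitzModule

variable (Fq : Type*) [Field Fq] [Fintype Fq]
  (R : Type*) [CommRing R] [Algebra Fq R] [Algebra Fq[X] R]

/-- The action `r ↦ T r + r ^ q` of `T` on an `𝔽_q[T]`-algebra `R` through the Carlitz module. -/
noncomputable def carlitzT : Module.End Fq R :=
  LinearMap.mulLeft Fq (algebraMap Fq[X] R X) + (FiniteField.frobeniusAlgHom Fq R).toLinearMap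

/-- The Carlitz module over an `𝔽_q[T]`-algebra `R`; `carlitz Fq R f r` is written `r ^ f` in the
literature. Over `R[X]`, the value `carlitz Fq R[X] f X` is the Carlitz polynomial of `f`. -/
noncomputable def carlitz : Fq[X] →ₐ[Fq] Module.End Fq R :=
  aeval (carlitzT Fq R)

variable {Fq R}

lemma carlitzT_apply (r : R) :
    carlitzT Fq R r = algebraMap Fq[X] R X * r + r ^ Fintype.card Fq := rfl

lemma carlitz_C_mul (c : Fq) (f : Fq[X]) (r : R) :
    carlitz Fq R (C c * f) r = c • carlitz Fq R f r := by
  rw [← smul_eq_C_mul, map_smul, LinearMap.smul_apply]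

lemma carlitz_mul_apply (f g : Fq[X]) (r : R) :
    carlitz Fq R (f * g) r = carlitz Fq R f (carlitz Fq R g r) := by
  rw [map_mul, Module.End.mul_apply]

lemma carlitz_comm (f g : Fq[X]) (r : R) :
    carlitz Fq R f (carlitz Fq R g r) = carlitz Fq R g (carlitz Fq R f r) := by
  rw [← carlitz_mul_apply, mul_comm, carlitz_mul_apply]

lemma carlitz_X_mul (f : Fq[X]) (r : R) :
    carlitz Fq R (X * f) r =
      algebraMap Fq[X] R X * carlitz Fq R f r + carlitz Fq R f r ^ Fintype.card Fq := by
  rw [carlitz_mul_apply, carlitz, aeval_X, carlitzT_apply]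

lemma carlitz_eq_zero_of_dvd {f g : Fq[X]} (h : f ∣ g) {r : R} (hr : carlitz Fq R f r = 0) :
    carlitz Fq R g r = 0 := by
  obtain ⟨u, rfl⟩ := h
  rw [mul_comm, carlitz_mul_apply, hr, map_zero]

lemma bijOn_carlitz_ker {f M : Fq[X]} (h : IsCoprime f M) :
    Set.BijOn (carlitz Fq R f) (LinearMap.ker (carlitz Fq R M))
      (LinearMap.ker (carlitz Fq R M)) := by
  obtain ⟨u, v, huv⟩ := h
  have mapsTo (g : Fq[X]) : Set.MapsTo (carlitz Fq R g) (LinearMap.ker (carlitz Fq R M))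
      (LinearMap.ker (carlitz Fq R M)) := fun x hx ↦ by
    rw [SetLike.mem_coe, LinearMap.mem_ker] at hx ⊢
    rw [carlitz_comm, hx, map_zero]
  have leftInv (x : R) (hx : x ∈ LinearMap.ker (carlitz Fq R M)) :
      carlitz Fq R u (carlitz Fq R f x) = x := by
    rw [LinearMap.mem_ker] at hx
    rw [← carlitz_mul_apply, eq_sub_of_add_eq huv, map_sub, LinearMap.sub_apply, map_one,
      Module.End.one_apply, carlitz_mul_apply, hx, map_zero, sub_zero]
  refine Set.InvOn.bijOn ⟨leftInv, fun x hx ↦ ?_⟩ (mapsTo f) (mapsTo u)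
  rw [carlitz_comm, leftInv x hx]

lemma monic_carlitz_X_pow [Nontrivial R] (n : ℕ) :
    (carlitz Fq R[X] (X ^ n) X).Monic ∧
      (carlitz Fq R[X] (X ^ n) X).natDegree = Fintype.card Fq ^ n := by
  induction n with
  | zero => simp [monic_X]
  | succ n ih =>
    obtain ⟨hmonic, hdeg⟩ := ih
    rw [pow_succ', carlitz_X_mul]
    set p : R[X] := carlitz Fq R[X] (X ^ n) X
    have hpow : (p ^ Fintype.card Fq).natDegree = Fintype.card Fq ^ (n + 1) := by
      rw [hmonic.natDegree_pow, hdeg, pow_succ']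
    have hlt : (algebraMap Fq[X] R[X] X * p).degree < (p ^ Fintype.card Fq).degree := by
      rw [IsScalarTower.algebraMap_apply Fq[X] R R[X], algebraMap_eq]
      refine degree_lt_degree ((natDegree_C_mul_le _ _).trans_lt ?_)
      rw [hpow, hdeg]
      exact Nat.pow_lt_pow_right Fintype.one_lt_card n.lt_succ_self
    exact ⟨(hmonic.pow _).add_of_right hlt, by rw [natDegree_add_eq_right_of_degree_lt hlt, hpow]⟩

lemma monic_carlitz_X {f : Fq[X]} (hf : f.Monic) : (carlitz Fq R[X] f X).Monic := by
  nontriviality R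
  obtain ⟨hmonic, hdeg⟩ := monic_carlitz_X_pow (R := R) f.natDegree (Fq := Fq)
  rw [hf.as_sum, map_add, LinearMap.add_apply, map_sum, LinearMap.sum_apply]
  refine hmonic.add_of_left ?_
  rw [degree_eq_natDegree hmonic.ne_zero, hdeg, ← mem_degreeLT]
  refine sum_mem fun i hi ↦ ?_
  obtain ⟨hmonic_i, hdeg_i⟩ := monic_carlitz_X_pow (R := R) i (Fq := Fq)
  rw [carlitz_C_mul, mem_degreeLT]
  refine (degree_smul_le _ _).trans_lt ?_
  rw [degree_eq_natDegree hmonic_i.ne_zero, hdeg_i]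
  exact_mod_cast Nat.pow_lt_pow_right Fintype.one_lt_card (Finset.mem_range.1 hi)

variable [IsScalarTower Fq Fq[X] R]

lemma carlitz_C (c : Fq) (r : R) : carlitz Fq R (C c) r = algebraMap Fq[X] R (C c) * r := by
  rw [← mul_one (C c), carlitz_C_mul, map_one, Module.End.one_apply, Algebra.smul_def,
    IsScalarTower.algebraMap_apply Fq Fq[X] R, algebraMap_eq, mul_one]

lemma map_carlitz {S : Type*} [CommRing S] [Algebra Fq S] [Algebra Fq[X] S]
    [IsScalarTower Fq Fq[X] S] {A F : Type*} [CommSemiring A] [Algebra Fq[X] A]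
    [Algebra A R] [IsScalarTower Fq[X] A R] [Algebra A S] [IsScalarTower Fq[X] A S] [FunLike F R S]
    [AlgHomClass F A R S] (φ : F) (f : Fq[X]) (r : R) :
    φ (carlitz Fq R f r) = carlitz Fq S f (φ r) := by
  have map_algebraMap (g : Fq[X]) : φ (algebraMap Fq[X] R g) = algebraMap Fq[X] S g := by
    rw [IsScalarTower.algebraMap_apply Fq[X] A R, AlgHomClass.commutes,
      ← IsScalarTower.algebraMap_apply]
  induction f using polynomial_induction_X_mul with
  | C c => rw [carlitz_C, carlitz_C, map_mul, map_algebraMap]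
  | add f g hf hg => simp only [map_add, LinearMap.add_apply, hf, hg]
  | X_mul f hf =>
    rw [carlitz_X_mul, carlitz_X_mul, map_add, map_mul, map_pow, hf, map_algebraMap]

lemma aeval_carlitz_X {A : Type*} [CommRing A] [Algebra Fq A] [Algebra Fq[X] A]
    [IsScalarTower Fq Fq[X] A] [Algebra A R] [IsScalarTower Fq[X] A R] (f : Fq[X]) (r : R) :
    aeval r (carlitz Fq A[X] f X) = carlitz Fq R f r := by
  simpa using map_carlitz (aeval (R := A) r) f X

lemma sq_dvd_carlitz_sub (f : Fq[X]) (r : R) :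
    r ^ 2 ∣ carlitz Fq R f r - algebraMap Fq[X] R f * r := by
  induction f using polynomial_induction_X_mul with
  | C c => simp [carlitz_C]
  | add f g hf hg =>
    convert dvd_add hf hg using 1
    rw [map_add, map_add, LinearMap.add_apply]
    ring
  | X_mul f hf =>
    have hr : r ∣ carlitz Fq R f r :=
      (dvd_sub_left (Dvd.intro_left _ rfl)).1 ((Dvd.intro_left _ (pow_succ r 1).symm).trans hf)
    convert dvd_add (hf.mul_left (algebraMap Fq[X] R X))
      ((pow_dvd_pow r Fintype.one_lt_card).trans (pow_dvd_pow_of_dvd hr (Fintype.card Fq))) using 1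
    rw [carlitz_X_mul, map_mul]
    ring

lemma eq_zero_of_mem_of_carlitz_eq_zero [IsDomain R] {I : Ideal R} {M : Fq[X]}
    (hM : algebraMap Fq[X] R M ∉ I) {r : R} (hrI : r ∈ I) (hr : carlitz Fq R M r = 0) : r = 0 := by
  obtain ⟨u, hu⟩ := sq_dvd_carlitz_sub M r
  have : r * (algebraMap Fq[X] R M + r * u) = 0 := by linear_combination hr - hu
  refine (mul_eq_zero.1 this).resolve_right fun h ↦ hM ?_
  rw [eq_neg_of_add_eq_zero_left h]
  exact neg_mem (I.mul_mem_right u hrI)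

lemma derivative_carlitz (f : Fq[X]) (p : R[X]) :
    derivative (carlitz Fq R[X] f p) = algebraMap Fq[X] R[X] f * derivative p := by
  have card_eq_zero : ((Fintype.card Fq : ℕ) : R[X]) = 0 := by
    rw [← map_natCast (algebraMap Fq R[X]), FiniteField.cast_card_eq_zero, map_zero]
  induction f using polynomial_induction_X_mul with
  | C c =>
    rw [carlitz_C, IsScalarTower.algebraMap_apply Fq[X] R R[X], algebraMap_eq, derivative_C_mul]
  | add f g hf hg => simp only [map_add, LinearMap.add_apply, hf, hg, add_mul]
  | X_mul f hf =>
    rw [carlitz_X_mul, derivative_add, derivative_pow, map_natCast, card_eq_zero, zero_mul,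
      zero_mul, add_zero, map_mul (algebraMap Fq[X] R[X]), mul_assoc, ← hf,
      IsScalarTower.algebraMap_apply Fq[X] R R[X] X, algebraMap_eq, derivative_C_mul]

lemma isIntegral_of_carlitz_eq_zero {M : Fq[X]} (hM : M ≠ 0) {r : R}
    (hr : carlitz Fq R M r = 0) : IsIntegral Fq[X] r := by
  classical
  refine ⟨carlitz Fq Fq[X][X] (normalize M) X, monic_carlitz_X (monic_normalize hM), ?_⟩
  rw [← aeval_def, aeval_carlitz_X]
  exact carlitz_eq_zero_of_dvd (dvd_normalize_iff.2 dvd_rfl) hr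

end CarlitzModule

/-! ### Reduction modulo a prime -/

section ResidueField

variable {Fq : Type*} [Field Fq] [Fintype Fq] {R : Type*} [CommRing R]

lemma pow_card_pow_injOn [IsDomain R] [Algebra Fq R] {P : Fq[X]} (hP : Irreducible P)
    (hPm : P.Monic) {θ : R} (hθ : aeval θ P = 0) :
    Set.InjOn (fun j ↦ θ ^ Fintype.card Fq ^ j) (Set.Iio P.natDegree) := by
  suffices h : ∀ i j, i < j → j < P.natDegree →
      θ ^ Fintype.card Fq ^ i ≠ θ ^ Fintype.card Fq ^ j by
    intro i hi j hj hij
    by_contra hne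
    rcases lt_or_gt_of_ne hne with hlt | hlt
    exacts [h i j hlt hj hij, h j i hlt hi hij.symm]
  intro i j hij hj heq
  obtain ⟨n, rfl⟩ := Nat.exists_eq_add_of_lt hij
  have hfix : θ ^ Fintype.card Fq ^ (n + 1) = θ := by
    have frobenius_injective : Function.Injective (FiniteField.frobeniusAlgHom Fq R) :=
      (injective_iff_map_eq_zero _).2 fun x hx ↦ eq_zero_of_pow_eq_zero hx
    refine (frobenius_injective.iterate i) ?_
    simp only [FiniteField.coe_frobeniusAlgHom, pow_iterate, ← pow_mul, ← pow_add]
    rw [add_comm, ← add_assoc, heq]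
  have hdvd : P ∣ X ^ Nat.card Fq ^ (n + 1) - X := by
    rw [minpoly.eq_of_irreducible_of_monic hP hθ hPm]
    refine minpoly.dvd Fq θ ?_
    rw [map_sub, map_pow, aeval_X, Nat.card_eq_fintype_card, hfix, sub_self]
  have := Nat.le_of_dvd n.succ_pos (hP.natDegree_dvd_of_dvd_X_pow_card_pow_sub_X hdvd)
  omega

lemma aeval_pow_card_pow_eq_zero [Algebra Fq R] {f : Fq[X]} {θ : R} (hθ : aeval θ f = 0) (j : ℕ) :
    aeval (θ ^ Fintype.card Fq ^ j) f = 0 := by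
  induction j with
  | zero => simpa using hθ
  | succ j ih =>
    rw [pow_succ, pow_mul, ← FiniteField.frobeniusAlgHom_apply Fq R, aeval_algHom_apply, ih,
      map_zero]

lemma map_eq_prod_X_sub_C_pow_card [IsDomain R] [Algebra Fq R] {P : Fq[X]} (hP : Irreducible P)
    (hPm : P.Monic) {θ : R} (hθ : aeval θ P = 0) :
    P.map (algebraMap Fq R) =
      ∏ j ∈ Finset.range P.natDegree, (X - C (θ ^ Fintype.card Fq ^ j)) := by
  classical
  have hinj := pow_card_pow_injOn hP hPm hθ
  rw [← Finset.coe_range] at hinj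
  have hmap : (P.map (algebraMap Fq R)).Monic := hPm.map _
  rw [← Finset.prod_image (f := fun x ↦ X - C x) hinj]
  refine eq_of_monic_of_dvd_of_natDegree_le (monic_prod_X_sub_C id _) hmap ?_ ?_
  · refine (Multiset.prod_X_sub_C_dvd_iff_le_roots hmap.ne_zero _).2 ?_
    rw [Finset.val_le_iff_val_subset]
    simp only [Finset.image_val]
    intro x hx
    obtain ⟨j, -, rfl⟩ := Multiset.mem_map.1 (Multiset.mem_dedup.1 hx)
    rw [mem_roots hmap.ne_zero, IsRoot.def, eval_map_algebraMap]
    exact aeval_pow_card_pow_eq_zero hθ j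
  · refine (hPm.natDegree_map _).trans_le ?_
    refine Eq.ge ((natDegree_finsetProd_X_sub_C_eq_card _ id).trans ?_)
    rw [Finset.card_image_of_injOn hinj, Finset.card_range]

/- The operator `carlitzT` is not `R`-linear, but composing functions `R → R` with it on the right
is: this makes the factorization of `P` over `R` available for the evaluation at `carlitzT`. -/
lemma aeval_funLeft_map_apply_id {F : Type*} [Field F] [Algebra F R] (t : Module.End F R)
    (f : F[X]) : aeval (LinearMap.funLeft R R t) (f.map (algebraMap F R)) id = aeval t f := by
  induction f using polynomial_induction_X_mul with
  | C c => ext x; simp [Algebra.smul_def]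
  | add f g hf hg => simp only [Polynomial.map_add, map_add, LinearMap.add_apply, hf, hg]; rfl
  | X_mul f hf =>
    rw [Polynomial.map_mul, map_X, map_mul, aeval_X, Module.End.mul_apply, hf, X_mul, map_mul,
      aeval_X]
    rfl

lemma aeval_funLeft_carlitzT_prod_apply_id [Algebra Fq R] [Algebra Fq[X] R] (n : ℕ) :
    aeval (LinearMap.funLeft R R (carlitzT Fq R))
        (∏ j ∈ Finset.range n, (X - C (algebraMap Fq[X] R X ^ Fintype.card Fq ^ j))) id =
      fun x ↦ x ^ Fintype.card Fq ^ n := by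
  induction n with
  | zero => ext; simp
  | succ n ih =>
    rw [Finset.prod_range_succ_comm, map_mul, Module.End.mul_apply, ih]
    ext x
    have frobenius_add (y z : R) : (y + z) ^ Fintype.card Fq ^ n =
        y ^ Fintype.card Fq ^ n + z ^ Fintype.card Fq ^ n := by
      have := iterate_map_add (FiniteField.frobeniusAlgHom Fq R) n y z
      simpa [FiniteField.coe_frobeniusAlgHom, pow_iterate] using this
    rw [map_sub, aeval_X, aeval_C, LinearMap.sub_apply, Pi.sub_apply, LinearMap.funLeft_apply,
      Module.algebraMap_end_apply, Pi.smul_apply, carlitzT_apply, frobenius_add, mul_pow, ← pow_mul,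
      ← pow_succ', smul_eq_mul, add_sub_cancel_left]

lemma carlitz_apply_of_algebraMap_eq_zero [IsDomain R] [Algebra Fq R] [Algebra Fq[X] R]
    [IsScalarTower Fq Fq[X] R] {P : Fq[X]} (hP : Irreducible P) (hPm : P.Monic)
    (hPR : algebraMap Fq[X] R P = 0) (x : R) :
    carlitz Fq R P x = x ^ Fintype.card Fq ^ P.natDegree := by
  have hθ : aeval (algebraMap Fq[X] R X) P = 0 := by
    rw [aeval_algebraMap_apply, aeval_X_left_apply, hPR]
  rw [carlitz, ← aeval_funLeft_map_apply_id, map_eq_prod_X_sub_C_pow_card hP hPm hθ,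
    aeval_funLeft_carlitzT_prod_apply_id]

lemma pow_sub_carlitz_mem [Algebra Fq R] [Algebra Fq[X] R] [IsScalarTower Fq Fq[X] R]
    {P : Fq[X]} (hP : Irreducible P) (hPm : P.Monic) {Q : Ideal R} [Q.IsPrime]
    (hPQ : algebraMap Fq[X] R P ∈ Q) (x : R) :
    x ^ Fintype.card Fq ^ P.natDegree - carlitz Fq R P x ∈ Q := by
  have hPR : algebraMap Fq[X] (R ⧸ Q) P = 0 := Ideal.Quotient.eq_zero_iff_mem.2 hPQ
  rw [← Ideal.Quotient.eq_zero_iff_mem, map_sub, map_pow,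
    ← carlitz_apply_of_algebraMap_eq_zero hP hPm hPR, sub_eq_zero]
  exact (map_carlitz (Ideal.Quotient.mkₐ Fq[X] Q) P x).symm

end ResidueField

lemma natCard_quotient_span_singleton {F : Type*} [Field F] {P : F[X]} (hP : P.Monic) :
    Nat.card (F[X] ⧸ Ideal.span {P}) = Nat.card F ^ P.natDegree := by
  have : Module.Finite F (F[X] ⧸ Ideal.span {P}) := (AdjoinRoot.powerBasis' hP).finite
  rw [Module.natCard_eq_pow_finrank (K := F), finrank_quotient_span_eq_natDegree]

/-! ### Frobenius elements acting on torsion -/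

section Frobenius

lemma exists_prime_liesOver_galRestrict_sub_pow_mem (A K L : Type*) [CommRing A] [IsDomain A]
    [IsIntegrallyClosed A] [IsNoetherianRing A] [Field K] [Field L] [Algebra A K]
    [IsFractionRing A K] [Algebra K L] [Algebra A L] [IsScalarTower A K L] [FiniteDimensional K L]
    [IsGalois K L] (p : Ideal A) [p.IsMaximal] [Finite (A ⧸ p)] :
    ∃ Q : Ideal (integralClosure A L), Q.IsPrime ∧ Q.LiesOver p ∧
      ∃ σ : Gal(L/K), ∀ x,
        galRestrict A K L (integralClosure A L) σ x - x ^ Nat.card (A ⧸ p) ∈ Q := by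
  let S := integralClosure A L
  have : IsFractionRing S L := IsIntegralClosure.isFractionRing_of_finite_extension A K L S
  have : Algebra.IsInvariant A S (S ≃ₐ[A] S) := Algebra.isInvariant_of_isGalois' A K L S
  have : Finite (S ≃ₐ[A] S) := Finite.of_equiv _ (galRestrict A K L S).toEquiv
  have : Module.Finite A S := IsIntegralClosure.finite A K L S
  have : FaithfulSMul A S := by
    have : Function.Injective (algebraMap A L) := by
      rw [IsScalarTower.algebraMap_eq A K L]
      exact (algebraMap K L).injective.comp (IsFractionRing.injective A K)
    rw [faithfulSMul_iff_algebraMap_injective]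
    exact Function.Injective.of_comp (f := algebraMap S L) this
  obtain ⟨Q, hQ, hQp⟩ := Ideal.exists_maximal_ideal_liesOver_of_isIntegral (S := S) p
  have : Finite (S ⧸ Q) := Module.finite_of_finite (A ⧸ p)
  obtain ⟨σ, hσ⟩ := IsArithFrobAt.exists_of_isInvariant A (S ≃ₐ[A] S) Q
  refine ⟨Q, hQ.isPrime, hQp, (galRestrict A K L S).symm σ, fun x ↦ ?_⟩
  rw [MulEquiv.apply_symm_apply, hQp.over]
  exact hσ x

variable {Fq : Type*} [Field Fq] [Fintype Fq] (K L : Type*) [Field K] [Field L]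
  [Algebra Fq[X] K] [IsFractionRing Fq[X] K] [Algebra K L] [Algebra Fq[X] L]
  [IsScalarTower Fq[X] K L] [Algebra Fq L] [IsScalarTower Fq Fq[X] L] [FiniteDimensional K L]
  [IsGalois K L]

lemma exists_gal_eq_carlitz_of_irreducible {M : Fq[X]} (hM : M ≠ 0) {P : Fq[X]}
    (hP : Irreducible P) (hPm : P.Monic) (hPM : ¬P ∣ M) :
    ∃ σ : Gal(L/K), ∀ x, carlitz Fq L M x = 0 → σ x = carlitz Fq L P x := by
  have : (Ideal.span {P}).IsMaximal := PrincipalIdealRing.isMaximal_of_irreducible hP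
  have hcard : Nat.card (Fq[X] ⧸ Ideal.span {P}) = Fintype.card Fq ^ P.natDegree := by
    rw [natCard_quotient_span_singleton hPm, Nat.card_eq_fintype_card]
  have : Finite (Fq[X] ⧸ Ideal.span {P}) := by
    refine Nat.finite_of_card_ne_zero ?_
    rw [hcard]
    exact pow_ne_zero _ Fintype.card_ne_zero
  obtain ⟨Q, hQ, hQP, σ, hσ⟩ :=
    exists_prime_liesOver_galRestrict_sub_pow_mem Fq[X] K L (Ideal.span {P})
  let S := integralClosure Fq[X] L
  have mem_Q_iff (f : Fq[X]) : algebraMap Fq[X] S f ∈ Q ↔ P ∣ f := by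
    rw [← Ideal.mem_of_liesOver Q (Ideal.span {P}), Ideal.mem_span_singleton]
  refine ⟨σ, fun x hx ↦ ?_⟩
  let s : S := ⟨x, isIntegral_of_carlitz_eq_zero hM hx⟩
  have hs : carlitz Fq S M s = 0 :=
    Subtype.val_injective ((map_carlitz S.val M s).trans hx)
  let τ := galRestrict Fq[X] K L S σ
  have hmem : τ s - carlitz Fq S P s ∈ Q := by
    have := add_mem (hσ s) (pow_sub_carlitz_mem hP hPm ((mem_Q_iff P).2 dvd_rfl) s)
    rwa [hcard, sub_add_sub_cancel] at this
  have htorsion : carlitz Fq S M (τ s - carlitz Fq S P s) = 0 := by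
    rw [map_sub, carlitz_comm, hs, map_zero, sub_zero]
    have := map_carlitz τ M s
    rw [hs, map_zero] at this
    exact this.symm
  have heq := sub_eq_zero.1 <|
    eq_zero_of_mem_of_carlitz_eq_zero ((mem_Q_iff M).not.2 hPM) hmem htorsion
  calc σ x = S.val (τ s) := (algebraMap_galRestrict_apply Fq[X] σ s).symm
    _ = S.val (carlitz Fq S P s) := by rw [heq]
    _ = carlitz Fq L P x := map_carlitz S.val P s

lemma exists_gal_eq_carlitz {M : Fq[X]} (hM : M ≠ 0) {f : Fq[X]} (hf : f.Monic)
    (hfM : IsCoprime f M) :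
    ∃ σ : Gal(L/K), ∀ x, carlitz Fq L M x = 0 → σ x = carlitz Fq L f x := by
  classical
  rw [← hf.normalize_eq_self, ← UniqueFactorizationMonoid.prod_normalizedFactors_eq hf.ne_zero]
  refine Multiset.prod_induction
    (fun f ↦ ∃ σ : Gal(L/K), ∀ x, carlitz Fq L M x = 0 → σ x = carlitz Fq L f x) _ ?_ ?_ ?_
  · rintro f g ⟨σ, hσ⟩ ⟨τ, hτ⟩
    refine ⟨σ * τ, fun x hx ↦ ?_⟩
    rw [AlgEquiv.mul_apply, hτ x hx, hσ _ (by rw [carlitz_comm, hx, map_zero]), carlitz_mul_apply]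
  · exact ⟨1, fun x _ ↦ by rw [map_one, AlgEquiv.one_apply, Module.End.one_apply]⟩
  · intro P hP
    have hirr := UniqueFactorizationMonoid.irreducible_of_normalized_factor P hP
    refine exists_gal_eq_carlitz_of_irreducible K L hM hirr ?_ fun hPM ↦ ?_
    · rw [← UniqueFactorizationMonoid.normalize_normalized_factor P hP]
      exact monic_normalize hirr.ne_zero
    · exact hirr.not_isUnit (hfM.isUnit_of_dvd'
        (UniqueFactorizationMonoid.dvd_of_mem_normalizedFactors hP) hPM)

end Frobenius

lemma exists_monic_isCoprime_isCoprime_sub_one {F : Type*} [Field F] [Fintype F] {M : F[X]}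
    (hM : M ≠ 0) (hF : ¬(Fintype.card F = 2 ∧ (X ∣ M ∨ X + 1 ∣ M))) :
    ∃ B : F[X], B.Monic ∧ IsCoprime B M ∧ IsCoprime (B - 1) M := by
  classical
  by_cases hcard : Fintype.card F = 2
  · rw [not_and, not_or] at hF
    obtain ⟨hX, hX1⟩ := hF hcard
    have : CharP F 2 := charP_of_card_eq_prime hcard
    have h1 : (X - 1 : F[X]) = X + 1 := CharTwo.sub_eq_add X 1
    have hirr : Irreducible (X + 1 : F[X]) := by
      rw [← h1, ← C_1]
      exact irreducible_X_sub_C 1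
    refine ⟨X, monic_X, irreducible_X.coprime_iff_not_dvd.2 hX, ?_⟩
    rw [h1]
    exact hirr.coprime_iff_not_dvd.2 hX1
  · obtain ⟨c, hc⟩ : ∃ c : F, c ∉ ({0, 1} : Finset F) := by
      have hlt : ({0, 1} : Finset F).card < (Finset.univ : Finset F).card := by
        have := Fintype.one_lt_card (α := F)
        have := Finset.card_le_two (a := (0 : F)) (b := 1)
        rw [Finset.card_univ]
        omega
      obtain ⟨c, -, hc⟩ := Finset.exists_mem_notMem_of_card_lt_card hlt
      exact ⟨c, hc⟩
    simp only [Finset.mem_insert, Finset.mem_singleton, not_or] at hc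
    obtain ⟨hc0, hc1⟩ := hc
    have hcoprime {a : F} (ha : a ≠ 0) : IsCoprime (X * normalize M + C a) M := by
      have h : IsCoprime (C a) M :=
        isCoprime_one_left.of_isCoprime_of_dvd_left (isUnit_C.2 ha.isUnit).dvd
      obtain ⟨u, hu⟩ : M ∣ X * normalize M := (dvd_normalize_iff.2 dvd_rfl).mul_left X
      rw [hu, add_comm]
      exact h.add_mul_left_left _
    refine ⟨X * normalize M + C c, ?_, hcoprime hc0, ?_⟩
    · refine (monic_X.mul (monic_normalize hM)).add_of_left (degree_C_le.trans_lt ?_)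
      rw [← natDegree_pos_iff_degree_pos, natDegree_X_mul (normalize_eq_zero.not.2 hM)]
      exact Nat.succ_pos _
    · rw [add_sub_assoc, ← C_1, ← C_sub]
      exact hcoprime (sub_ne_zero.2 hc1)

lemma exists_mem_forall_smul_add_eq {G V : Type*} [Group G] [AddCommGroup V]
    [DistribMulAction G V] {W : AddSubgroup V} (hW : ∀ (g : G), ∀ w ∈ W, g • w ∈ W) {τ : G}
    (hτ : ∀ (g : G), ∀ w ∈ W, g • τ • w = τ • g • w)
    (hbij : Set.BijOn (fun w ↦ τ • w - w) (W : Set V) W) {α : V} (hα : ∀ g : G, g • α - α ∈ W)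
    (hfix : ∀ g : G, (∀ w ∈ W, g • w = w) → g • α = α) :
    ∃ w ∈ W, ∀ g : G, g • (α + w) = α + w := by
  obtain ⟨v, hv, hτv : τ • v - v = τ • α - α⟩ := hbij.surjOn (hα τ)
  have hτβ : τ • (α - v) = α - v := by
    rw [smul_sub, sub_eq_sub_iff_sub_eq_sub, hτv]
  refine ⟨-v, neg_mem hv, fun g ↦ ?_⟩
  rw [← sub_eq_add_neg]
  -- The commutator of `g` and `τ` is trivial on `W`, so it fixes `α`.
  have hcomm : g • τ • (α - v) = τ • g • (α - v) := by
    have h : (τ * g)⁻¹ • (g * τ) • (α - v) = (α - v) := by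
      have hw : ∀ w ∈ W, ((τ * g)⁻¹ * (g * τ)) • w = w := fun w hw ↦ by
        rw [mul_smul, inv_smul_eq_iff, mul_smul, mul_smul, hτ g w hw]
      rw [smul_smul, smul_sub, hw v hv, hfix _ hw]
    rwa [inv_smul_eq_iff, mul_smul, mul_smul] at h
  have hmem : g • (α - v) - (α - v) ∈ W := by
    rw [smul_sub, sub_sub_sub_comm]
    exact sub_mem (hα g) (sub_mem (hW g v hv) hv)
  refine sub_eq_zero.1 (hbij.injOn hmem W.zero_mem ?_)
  simp only [smul_sub τ (g • _), ← hcomm, hτβ, sub_self, smul_zero]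

/-! ### Carlitz–Kummer extensions -/

section KummerTheory

variable {Fq : Type*} [Field Fq] [Fintype Fq] {K : Type*} [Field K] [Algebra Fq[X] K]
  [Algebra Fq K] [IsScalarTower Fq Fq[X] K]

lemma derivative_carlitz_X_sub_C (M : Fq[X]) (a : K) :
    derivative (carlitz Fq K[X] M X - C a) = C (algebraMap Fq[X] K M) := by
  rw [derivative_sub, derivative_C, sub_zero, derivative_carlitz, derivative_X, mul_one,
    IsScalarTower.algebraMap_apply Fq[X] K K[X], algebraMap_eq]

lemma separable_carlitz_X_sub_C {M : Fq[X]} (hM : algebraMap Fq[X] K M ≠ 0) (a : K) :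
    (carlitz Fq K[X] M X - C a).Separable := by
  rw [separable_def, derivative_carlitz_X_sub_C]
  exact isCoprime_one_right.of_isCoprime_of_dvd_right (isUnit_C.2 hM.isUnit).dvd

lemma aeval_carlitz_X_sub_C {R : Type*} [CommRing R] [Algebra K R] [Algebra Fq[X] R]
    [IsScalarTower Fq[X] K R] [Algebra Fq R] [IsScalarTower Fq Fq[X] R] (M : Fq[X]) (a : K)
    (r : R) :
    aeval r (carlitz Fq K[X] M X - C a) = carlitz Fq R M r - algebraMap K R a := by
  rw [map_sub, aeval_carlitz_X, aeval_C]

lemma carlitz_surjective [IsSepClosed K] {M : Fq[X]} (hM : algebraMap Fq[X] K M ≠ 0) :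
    Function.Surjective (carlitz Fq K M) := by
  intro a
  have hdeg : (carlitz Fq K[X] M X - C a).degree ≠ 0 := fun h ↦ by
    have := derivative_carlitz_X_sub_C M a
    rw [eq_C_of_degree_eq_zero h, derivative_C, eq_comm, C_eq_zero] at this
    exact hM this
  obtain ⟨x, hx⟩ := IsSepClosed.exists_aeval_eq_zero K _ hdeg (separable_carlitz_X_sub_C hM a)
  rw [aeval_carlitz_X_sub_C, sub_eq_zero] at hx
  exact ⟨x, hx⟩

lemma finite_setOf_carlitz_eq_zero {M : Fq[X]} (hM : algebraMap Fq[X] K M ≠ 0) :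
    {x : K | carlitz Fq K M x = 0}.Finite := by
  refine (rootSet_finite (carlitz Fq K[X] M X - C 0) K).subset fun x hx ↦ ?_
  refine mem_rootSet.2 ⟨(separable_carlitz_X_sub_C hM 0).ne_zero, ?_⟩
  rwa [aeval_carlitz_X_sub_C, map_zero, sub_zero]

variable {Ω : Type*} [Field Ω] [Algebra K Ω] [Algebra Fq[X] Ω] [IsScalarTower Fq[X] K Ω]
  [Algebra Fq Ω] [IsScalarTower Fq Fq[X] Ω]

lemma isSeparable_of_carlitz_mem_range {M : Fq[X]} (hM : algebraMap Fq[X] K M ≠ 0) {x : Ω}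
    (hx : carlitz Fq Ω M x ∈ Set.range (algebraMap K Ω)) : IsSeparable K x := by
  obtain ⟨a, ha⟩ := hx
  refine (separable_carlitz_X_sub_C hM a).of_dvd (minpoly.dvd K x ?_)
  rw [aeval_carlitz_X_sub_C, ha, sub_self]

lemma isGalois_adjoin_carlitz_preimage [Normal K Ω] {M : Fq[X]}
    (hM : algebraMap Fq[X] K M ≠ 0) {Γ : Set Ω} (hΓ : Γ ⊆ Set.range (algebraMap K Ω)) :
    IsGalois K (adjoin K (carlitz Fq Ω M ⁻¹' Γ)) where
  to_isSeparable := (isSeparable_adjoin_iff_isSeparable K Ω).2 fun _ hx ↦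
    isSeparable_of_carlitz_mem_range hM (hΓ hx)
  to_normal := by
    rw [normal_iff_forall_map_le]
    intro σ
    rw [adjoin_map, adjoin_le_iff]
    rintro _ ⟨x, hx, rfl⟩
    refine subset_adjoin K _ ?_
    obtain ⟨a, ha⟩ := hΓ hx
    have hσx : carlitz Fq Ω M (σ x) = carlitz Fq Ω M x := by
      rw [← map_carlitz, ← ha, σ.commutes]
    exact hσx.symm.subst (motive := (· ∈ Γ)) hx

lemma mem_range_of_isSeparable_of_forall_gal [Normal K Ω] {x : Ω} (hx : IsSeparable K x)
    (hfix : ∀ σ : Gal(Ω/K), σ x = x) : x ∈ Set.range (algebraMap K Ω) := by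
  let x' : separableClosure K Ω := ⟨x, mem_separableClosure_iff.2 hx⟩
  have : x' ∈ (⊥ : IntermediateField K (separableClosure K Ω)) := by
    rw [InfiniteGalois.mem_bot_iff_fixed]
    intro σ
    refine Subtype.val_injective ?_
    exact (σ.liftNormal_commutes Ω x').symm.trans (hfix _)
  obtain ⟨a, ha⟩ := mem_bot.1 this
  exact ⟨a, congrArg Subtype.val ha⟩

variable [IsFractionRing Fq[X] K] [Normal K Ω]

variable (K Ω) in
lemma exists_gal_eq_carlitz_of_normal {M : Fq[X]} (hM : M ≠ 0) {f : Fq[X]} (hf : f.Monic)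
    (hfM : IsCoprime f M) :
    ∃ σ : Gal(Ω/K), ∀ x, carlitz Fq Ω M x = 0 → σ x = carlitz Fq Ω f x := by
  have hMK : algebraMap Fq[X] K M ≠ 0 := by simpa using hM
  have hMΩ : algebraMap Fq[X] Ω M ≠ 0 := by
    simpa [IsScalarTower.algebraMap_apply Fq[X] K Ω] using hM
  have : IsScalarTower Fq K Ω := IsScalarTower.to₁₃₄ Fq Fq[X] K Ω
  let L : IntermediateField K Ω := adjoin K (carlitz Fq Ω M ⁻¹' {0})
  have : IsGalois K L :=
    isGalois_adjoin_carlitz_preimage hMK (Set.singleton_subset_iff.2 ⟨0, map_zero _⟩)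
  have : FiniteDimensional K L := by
    have : Finite (carlitz Fq Ω M ⁻¹' {0}) := (finite_setOf_carlitz_eq_zero hMΩ).to_subtype
    exact finiteDimensional_adjoin fun x _ ↦ Normal.isIntegral inferInstance x
  have : IsScalarTower Fq Fq[X] L :=
    ⟨fun c f x ↦ Subtype.val_injective (smul_assoc c f (x : Ω))⟩
  obtain ⟨σ, hσ⟩ := exists_gal_eq_carlitz K L hM hf hfM
  refine ⟨σ.liftNormal Ω, fun x hx ↦ ?_⟩
  let y : L := ⟨x, subset_adjoin K _ hx⟩
  have carlitz_coe (g : Fq[X]) : ((carlitz Fq L g y : L) : Ω) = carlitz Fq Ω g x :=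
    map_carlitz L.val g y
  have hy : carlitz Fq L M y = 0 := Subtype.val_injective ((carlitz_coe M).trans hx)
  calc σ.liftNormal Ω x = ((σ y : L) : Ω) := σ.liftNormal_commutes Ω y
    _ = carlitz Fq Ω f x := by rw [hσ y hy, carlitz_coe]

lemma exists_carlitz_eq_of_forall_gal [IsSepClosed Ω] {M : Fq[X]} (hM : M ≠ 0)
    (hq : ¬(Fintype.card Fq = 2 ∧ (X ∣ M ∨ X + 1 ∣ M))) {a : K}
    (hfix : ∀ σ : Gal(Ω/K), (∀ x, carlitz Fq Ω M x = 0 → σ x = x) →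
      ∀ α, carlitz Fq Ω M α = algebraMap K Ω a → σ α = α) :
    ∃ b : K, carlitz Fq K M b = a := by
  have hMK : algebraMap Fq[X] K M ≠ 0 := by simpa using hM
  have hMΩ : algebraMap Fq[X] Ω M ≠ 0 := by
    simpa [IsScalarTower.algebraMap_apply Fq[X] K Ω] using hM
  obtain ⟨B, hB, hBM, hB1M⟩ := exists_monic_isCoprime_isCoprime_sub_one hM hq
  obtain ⟨τ, hτ⟩ := exists_gal_eq_carlitz_of_normal K Ω hM hB hBM
  let W : AddSubgroup Ω := (LinearMap.ker (carlitz Fq Ω M)).toAddSubgroup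
  have gal_mem_W (σ : Gal(Ω/K)) (w : Ω) (hw : carlitz Fq Ω M w = 0) :
      carlitz Fq Ω M (σ w) = 0 := by
    rw [← map_carlitz, hw, map_zero]
  have τ_comm (σ : Gal(Ω/K)) (w : Ω) (hw : carlitz Fq Ω M w = 0) : σ (τ w) = τ (σ w) := by
    rw [hτ w hw, hτ _ (gal_mem_W σ w hw), map_carlitz]
  have τ_sub : Set.BijOn (fun w ↦ τ w - w) W W := (bijOn_carlitz_ker hB1M).congr fun w hw ↦ by
    rw [map_sub, map_one, LinearMap.sub_apply, Module.End.one_apply]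
    exact congrArg (· - w) (hτ w hw).symm
  obtain ⟨α, hα⟩ := carlitz_surjective hMΩ (algebraMap K Ω a)
  have α_cocycle (σ : Gal(Ω/K)) : carlitz Fq Ω M (σ α - α) = 0 := by
    rw [map_sub, ← map_carlitz, hα, σ.commutes, sub_self]
  obtain ⟨w, hw, hβ⟩ := exists_mem_forall_smul_add_eq (G := Gal(Ω/K)) (W := W) gal_mem_W τ_comm
    τ_sub α_cocycle fun σ hσ ↦ hfix σ hσ α hα
  have hM_β : carlitz Fq Ω M (α + w) = algebraMap K Ω a := by
    rw [map_add, hα, show carlitz Fq Ω M w = 0 from hw, add_zero]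
  obtain ⟨b, hb⟩ := mem_range_of_isSeparable_of_forall_gal
    (isSeparable_of_carlitz_mem_range hMK ⟨a, hM_β.symm⟩) hβ
  refine ⟨b, (algebraMap K Ω).injective ?_⟩
  rw [← hM_β, ← hb]
  exact map_carlitz (IsScalarTower.toAlgHom Fq[X] K Ω) M b

theorem carlitz_kummer_kernel_bound_general [IsSepClosed Ω] {M : Fq[X]} (hM : M ≠ 0)
    (hq : ¬(Fintype.card Fq = 2 ∧ (X ∣ M ∨ X + 1 ∣ M))) {Γ : AddSubgroup Ω}
    (hΓK : (Γ : Set Ω) ⊆ Set.range (algebraMap K Ω))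
    (hΓ : ∀ f, ∀ x ∈ Γ, carlitz Fq Ω f x ∈ Γ) {E : IntermediateField K Ω}
    (hE : E = adjoin K (carlitz Fq Ω M ⁻¹' Γ)) {e : Fq[X]}
    (he : ∀ x ∈ Set.range (algebraMap K Ω), carlitz Fq Ω M x ∈ Γ → carlitz Fq Ω e x ∈ Γ)
    {d : Fq[X]} (hd : d ∈ Ideal.span {e, M}) {a : Ω} (ha : a ∈ Γ)
    (hfix : ∀ σ : Gal(E/K), (∀ x : E, carlitz Fq Ω M x = 0 → σ x = x) →
      ∀ α : E, carlitz Fq Ω M α = a → σ α = α) :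
    ∃ γ ∈ Γ, carlitz Fq Ω M γ = carlitz Fq Ω d a := by
  have hMK : algebraMap Fq[X] K M ≠ 0 := by simpa using hM
  have : IsGalois K E := hE ▸ isGalois_adjoin_carlitz_preimage hMK hΓK
  have mem_E (x : Ω) (hx : carlitz Fq Ω M x ∈ Γ) : x ∈ E := hE ▸ subset_adjoin K _ hx
  obtain ⟨a', rfl⟩ := hΓK ha
  obtain ⟨b, rfl⟩ : ∃ b : K, carlitz Fq K M b = a' := by
    refine exists_carlitz_eq_of_forall_gal (Ω := Ω) hM hq fun σ hσ α hα ↦ ?_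
    have restrict_coe (x : E) : ((σ.restrictNormal E x : E) : Ω) = σ x :=
      σ.restrictNormal_commutes E x
    have hfixα := hfix (σ.restrictNormal E)
      (fun x hx ↦ Subtype.val_injective ((restrict_coe x).trans (hσ x hx)))
      ⟨α, mem_E α (hα ▸ ha)⟩ hα
    exact (restrict_coe _).symm.trans (congrArg Subtype.val hfixα)
  rw [← IsScalarTower.toAlgHom_apply Fq[X] K Ω, map_carlitz, IsScalarTower.toAlgHom_apply] at *
  set β : Ω := algebraMap K Ω b
  obtain ⟨r, s, rfl⟩ := Ideal.mem_span_pair.1 hd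
  refine ⟨carlitz Fq Ω (r * e + s * M) β, ?_, ?_⟩
  · simp only [map_add, LinearMap.add_apply, carlitz_mul_apply]
    exact add_mem (hΓ r _ (he β ⟨b, rfl⟩ ha)) (hΓ s _ ha)
  · exact carlitz_comm _ _ _

end KummerTheory

lemma IsCarlitz.apply_eq {Fq : Type} [Field Fq] [Fintype Fq]
    {ψ : Fq[X] →+* AddMonoid.End (AlgebraicClosure (RatFunc Fq))} (hψ : IsCarlitz ψ) (f : Fq[X])
    (α : AlgebraicClosure (RatFunc Fq)) :
    ψ f α = carlitz Fq (AlgebraicClosure (RatFunc Fq)) f α := by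
  induction f using polynomial_induction_X_mul with
  | C c =>
    rw [hψ.2, carlitz_C, IsScalarTower.algebraMap_apply Fq[X] (RatFunc Fq), RatFunc.algebraMap_C]
  | add f g hf hg =>
    rw [map_add, map_add, LinearMap.add_apply, ← hf, ← hg]
    rfl
  | X_mul f hf =>
    rw [map_mul, AddMonoid.End.coe_mul, Function.comp_apply, hψ.1, hf, carlitz_X_mul,
      IsScalarTower.algebraMap_apply Fq[X] (RatFunc Fq), RatFunc.algebraMap_X]

/-- **Theorem 2.9.**
Suppose `q ≠ 2`, or `q = 2` and `T ∤ M` and `(T+1) ∤ M`.  Let `Γ` be a finitely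
generated `A`-submodule of `(k,+)`, `Γ' = (1/M)Γ ∩ k`, let `e = e(Γ'/Γ)` be the monic
polynomial of smallest degree with `Γ'^e ⊆ Γ`, and let `e_M(Γ) = gcd(e(Γ'/Γ), M)`.
Let `Γ_φ` be the kernel of the map `φ : Γ → Hom_A(H_Γ(M), Λ_M)`, i.e.
`Γ_φ = {a ∈ Γ : ⟨σ, a⟩ = 0 for all σ ∈ H_Γ(M)}`.  Then `Γ_φ^{e_M(Γ)} ⊆ Γ^M`:
the image of `Γ_φ` under the Carlitz action of `e_M(Γ)` is contained in the image of
`Γ` under the Carlitz action of `M`. -/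
theorem carlitz_kummer_kernel_bound
    {Fq : Type} [Field Fq] [Fintype Fq]
    (ψ : Polynomial Fq →+* AddMonoid.End (AlgebraicClosure (RatFunc Fq)))
    (hψ : IsCarlitz ψ)
    (M : Polynomial Fq) (hM : 0 < M.natDegree)
    (hq : ¬ (Fintype.card Fq = 2 ∧ (X ∣ M ∨ X + 1 ∣ M)))
    -- Γ : a finitely generated A-submodule of (k, +)
    (Γ : AddSubgroup (AlgebraicClosure (RatFunc Fq)))
    (hΓk : ∀ x ∈ Γ, x ∈ Set.range (algebraMap (RatFunc Fq) (AlgebraicClosure (RatFunc Fq))))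
    (hΓA : ∀ (f : Polynomial Fq), ∀ x ∈ Γ, ψ f x ∈ Γ)
    (hΓfg : ∃ (n : ℕ) (a : Fin n → AlgebraicClosure (RatFunc Fq)), (∀ i, a i ∈ Γ) ∧
      ∀ x ∈ Γ, ∃ g : Fin n → Polynomial Fq, x = ∑ i, ψ (g i) (a i))
    -- k_{M,Γ} = k(Λ_M, (1/M)Γ)
    (E : IntermediateField (RatFunc Fq) (AlgebraicClosure (RatFunc Fq)))
    (hE : E = adjoin (RatFunc Fq) {x | ψ M x ∈ Γ})
    -- e = e(Γ'/Γ) : the exponent of Γ' = (1/M)Γ ∩ k over Γ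
    (e : Polynomial Fq) (he : e.Monic)
    (heΓ : ∀ x : AlgebraicClosure (RatFunc Fq),
      x ∈ Set.range (algebraMap (RatFunc Fq) (AlgebraicClosure (RatFunc Fq))) →
      ψ M x ∈ Γ → ψ e x ∈ Γ)
    (hemin : ∀ e' : Polynomial Fq, e'.Monic →
      (∀ x : AlgebraicClosure (RatFunc Fq),
        x ∈ Set.range (algebraMap (RatFunc Fq) (AlgebraicClosure (RatFunc Fq))) →
        ψ M x ∈ Γ → ψ e' x ∈ Γ) →
      e.degree ≤ e'.degree)
    -- d = e_M(Γ) = gcd(e(Γ'/Γ), M)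
    (d : Polynomial Fq) (hd1 : d ∣ e) (hd2 : d ∣ M)
    (hd3 : ∀ d' : Polynomial Fq, d' ∣ e → d' ∣ M → d' ∣ d) :
    -- Γ_φ^{e_M(Γ)} ⊆ Γ^M
    ∀ a ∈ Γ,
      (∀ σ : ↥E ≃ₐ[RatFunc Fq] ↥E, FixesTorsion ψ M σ →
        ∀ α : ↥E, ψ M (α : AlgebraicClosure (RatFunc Fq)) = a → σ α = α) →
      ∃ γ ∈ Γ, ψ M γ = ψ d a := by
  classical
  intro a ha hfix
  have hd : d ∈ Ideal.span {e, M} := by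
    rw [← EuclideanDomain.span_gcd, Ideal.mem_span_singleton]
    exact hd3 _ (EuclideanDomain.gcd_dvd_left e M) (EuclideanDomain.gcd_dvd_right e M)
  simp only [FixesTorsion, hψ.apply_eq] at hΓA hE heΓ hfix ⊢
  exact carlitz_kummer_kernel_bound_general (ne_zero_of_natDegree_gt hM) hq hΓk hΓA hE heΓ hd ha
    hfix
end

section
/- Suppose q ≠ 2, or q = 2 and T ∤ M and (T+1) ∤ M. If e_M(Γ) = gcd(e(Γ'/Γ), M) = 1, then Γ^M = Γ ∩ K^M = Γ ∩ k^M, the pairing H_Γ(M) × Γ/Γ^M → Λ_M is nondegenerate, and the induced map φ : Γ/Γ^M → Hom_A(H_Γ(M), Λ_M) is an A-module (equivalently A/(M)-module) isomorphism. -/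
open Polynomial IntermediateField

set_option synthInstance.maxHeartbeats 1000000
set_option maxHeartbeats 1000000

/-!
Write `C_f` for the polynomial `x ↦ x ^ f`. If `P` is a monic prime, then `C_P ≡ X ^ (q ^ deg P)`
modulo `P`, so for `P ∤ M` the automorphisms of `Λ_M` given by `P`, and hence by every `B` prime
to `M`, are induced by Galois. The condition on `q` and `M` provides a `B` such that `B` and `B - 1`
are both prime to `M`. Then `σ_B - 1` is invertible on `Λ_M`, and Sah's lemma shows that an element
of `K` with `M`-multiple in `Γ` differs from an element of `k` by an `M`-torsion point. That
element of `k` lies in `Γ` as `gcd(e, M) = 1`. This computes both `Γ ∩ K^M` and the right kernel.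

By the Chinese remainder theorem, the same `B` shows that every `f` is a sum of two elements
prime to `M`; so the action of `f` on `H_Γ(M)` comes from conjugations and the pairing is
`A`-linear. As a nonzero `C_f` has at most `#(A / f)` zeros, a finite `A`-module `V` has at most
`#V` homomorphisms to the Carlitz module, and counting turns nondegeneracy into surjectivity of `φ`.
-/

namespace CarlitzKummer

section Duality

variable {R L V : Type*} [CommRing R] [AddCommGroup L] [Module R L] [AddCommGroup V] [Module R V]

variable (R L) in
/-- `L` has at most as much `f`-torsion as a module embedding into `Frac R / R`, for every `f ≠ 0`.
Such an `L` can serve as the dualizing module in a duality of finite `R`-modules. -/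
def TorsionBounded : Prop :=
  ∀ f : R, f ≠ 0 → Finite (Submodule.torsionBy R L f) ∧
    Nat.card (Submodule.torsionBy R L f) ≤ Nat.card (R ⧸ Ideal.span {f})

theorem TorsionBounded.of_injective (hL : TorsionBounded R L) (i : V →ₗ[R] L)
    (hi : Function.Injective i) : TorsionBounded R V := by
  intro f hf
  obtain ⟨_, hcard⟩ := hL f hf
  let j : Submodule.torsionBy R V f → Submodule.torsionBy R L f :=
    fun v ↦ ⟨i v, (i.map_smul f v).symm.trans ((congrArg i v.2).trans i.map_zero)⟩
  have hj : Function.Injective j := fun v w h ↦ Subtype.ext (hi (congrArg Subtype.val h))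
  exact ⟨Finite.of_injective j hj, (Nat.card_le_card_of_injective j hj).trans hcard⟩

theorem TorsionBounded.natCard_linearMap_pi_le (hL : TorsionBounded R L) {ι : Type*} [Finite ι]
    {a : ι → R} (ha : ∀ i, a i ≠ 0) : Finite ((∀ i, R ⧸ R ∙ a i) →ₗ[R] L) ∧
      Nat.card ((∀ i, R ⧸ R ∙ a i) →ₗ[R] L) ≤ Nat.card (∀ i, R ⧸ R ∙ a i) := by
  classical
  have := Fintype.ofFinite ι
  let gen (i : ι) : ∀ i, R ⧸ R ∙ a i := Pi.single i (Submodule.Quotient.mk 1)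
  have smul_gen (i : ι) : a i • gen i = 0 := by
    rw [← Pi.single_smul, ← Submodule.Quotient.mk_smul, smul_eq_mul, mul_one,
      (Submodule.Quotient.mk_eq_zero _).2 (Submodule.mem_span_singleton_self _), Pi.single_zero]
  let onGen (φ : (∀ i, R ⧸ R ∙ a i) →ₗ[R] L) (i : ι) : Submodule.torsionBy R L (a i) :=
    ⟨φ (gen i), (φ.map_smul _ _).symm.trans ((congrArg φ (smul_gen i)).trans φ.map_zero)⟩
  have onGen_injective : Function.Injective onGen := fun φ χ h ↦
    LinearMap.pi_ext' fun i ↦ Submodule.linearMap_qext _ <| LinearMap.ext_ring <|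
      congrArg Subtype.val (congrFun h i)
  have (i : ι) := (hL (a i) (ha i)).1
  refine ⟨Finite.of_injective onGen onGen_injective, ?_⟩
  calc Nat.card ((∀ i, R ⧸ R ∙ a i) →ₗ[R] L)
      ≤ Nat.card (∀ i, Submodule.torsionBy R L (a i)) :=
        Nat.card_le_card_of_injective onGen onGen_injective
    _ = ∏ i, Nat.card (Submodule.torsionBy R L (a i)) := Nat.card_pi
    _ ≤ ∏ i, Nat.card (R ⧸ R ∙ a i) := Finset.prod_le_prod' fun i _ ↦ (hL (a i) (ha i)).2
    _ = Nat.card (∀ i, R ⧸ R ∙ a i) := Nat.card_pi.symm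

variable [IsDomain R]

theorem module_isTorsion_of_finite [Infinite R] [Finite V] : Module.IsTorsion R V := by
  intro v
  obtain ⟨a, b, hne, hab⟩ := Finite.exists_ne_map_eq_of_infinite fun r : R ↦ r • v
  refine ⟨⟨a - b, mem_nonZeroDivisors_of_ne_zero (sub_ne_zero.2 hne)⟩, ?_⟩
  exact (sub_smul a b v).trans (sub_eq_zero.2 hab)

variable [IsPrincipalIdealRing R] [Infinite R]

theorem TorsionBounded.natCard_linearMap_le (hL : TorsionBounded R L) [Finite V] :
    Finite (V →ₗ[R] L) ∧ Nat.card (V →ₗ[R] L) ≤ Nat.card V := by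
  have : Module.Finite R V := .of_finite
  obtain ⟨ι, _, p, hp, n, ⟨d⟩⟩ :=
    Module.equiv_directSum_of_isTorsion (module_isTorsion_of_finite (R := R) (V := V))
  classical
  let d' := d.trans (DirectSum.linearEquivFunOnFintype R ι _)
  obtain ⟨_, hcard⟩ := hL.natCard_linearMap_pi_le fun i ↦ pow_ne_zero (n i) (hp i).ne_zero
  let e := d'.congrLeft L R
  exact ⟨.of_equiv _ e.symm.toEquiv,
    (Nat.card_congr e.toEquiv).trans_le (hcard.trans_eq (Nat.card_congr d'.symm.toEquiv))⟩

theorem TorsionBounded.eq_top_of_separating (hL : TorsionBounded R L)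
    (S : Submodule R (V →ₗ[R] L)) [Finite S] (hS : ∀ v, (∀ φ ∈ S, φ v = 0) → v = 0) : S = ⊤ := by
  obtain ⟨_, hS'⟩ := hL.natCard_linearMap_le (V := S)
  have eval_injective : Function.Injective S.subtype.flip :=
    (injective_iff_map_eq_zero _).2 fun v hv ↦ hS v fun φ hφ ↦ LinearMap.congr_fun hv ⟨φ, hφ⟩
  have : Finite V := Finite.of_injective _ eval_injective
  obtain ⟨_, hV⟩ := hL.natCard_linearMap_le (V := V)
  -- `#Hom(V, L) ≤ #V ≤ #Hom(S, L) ≤ #S`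
  have hcard := hV.trans ((Nat.card_le_card_of_injective _ eval_injective).trans hS')
  have := S.injective_subtype.bijective_of_nat_card_le hcard
  rw [← S.range_subtype, LinearMap.range_eq_top]
  exact this.2

theorem TorsionBounded.exists_eq_apply (hL : TorsionBounded R L) (P : Submodule R V)
    [Finite (V ⧸ P)] (N : Submodule R (V →ₗ[R] L)) (hN : ∀ φ ∈ N, P ≤ LinearMap.ker φ)
    (t : N →ₗ[R] L) : ∃ v, ∀ φ : N, t φ = (φ : V →ₗ[R] L) v := by
  have hP : P ≤ LinearMap.ker N.subtype.flip :=
    fun v hv ↦ LinearMap.ext fun φ ↦ hN φ φ.2 hv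
  have : Finite (LinearMap.range N.subtype.flip) := by
    rw [← Submodule.range_liftQ P _ hP]
    exact Finite.of_surjective _ (LinearMap.surjective_rangeRestrict _)
  have htop := hL.eq_top_of_separating (LinearMap.range N.subtype.flip) fun φ hφ ↦
    Subtype.ext (LinearMap.ext fun v ↦ hφ _ ⟨v, rfl⟩)
  obtain ⟨v, rfl⟩ := LinearMap.range_eq_top.1 htop t
  exact ⟨v, fun φ ↦ rfl⟩

theorem TorsionBounded.exists_eq_apply_of_semilinear (hL : TorsionBounded R L) (P : Submodule R V)
    [Finite (V ⧸ P)] {X : Type*} [AddGroup X] (δ : X →+ (V →ₗ[R] L))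
    (hδ : Function.Injective δ) (hP : ∀ x, P ≤ LinearMap.ker (δ x)) (c : R → X → X)
    (hc : ∀ f x, δ (c f x) = f • δ x) (t : X →+ L) (ht : ∀ f x, t (c f x) = f • t x) :
    ∃ v, ∀ x, t x = δ x v := by
  let N : Submodule R (V →ₗ[R] L) :=
    { δ.range with smul_mem' := by rintro f _ ⟨x, rfl⟩; exact ⟨c f x, hc f x⟩ }
  let δN : X ≃+ N := AddMonoidHom.ofInjective hδ
  have δN_c (f : R) (x : X) : δN (c f x) = f • δN x := Subtype.ext (hc f x)
  let tN : N →ₗ[R] L :=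
    { t.comp δN.symm.toAddMonoidHom with
      map_smul' := by
        intro f y
        obtain ⟨x, rfl⟩ := δN.surjective y
        simp [← δN_c, ht] }
  obtain ⟨v, hv⟩ := hL.exists_eq_apply P N (by rintro _ ⟨x, rfl⟩; exact hP x) tN
  refine ⟨v, fun x ↦ ?_⟩
  rw [← show (δN x : V →ₗ[R] L) = δ x from rfl, ← hv]
  simp [tN]

theorem TorsionBounded.isPrincipal_top (hV : TorsionBounded R V) [Finite V] :
    (⊤ : Submodule R V).IsPrincipal := by
  have : Module.Finite R V := .of_finite
  obtain ⟨x, hx⟩ := Module.exists_ker_toSpanSingleton_eq_annihilator (R := R) (M := V)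
  obtain ⟨f, hf⟩ := (inferInstance : (Module.annihilator R V).IsPrincipal).principal
  have hf0 : f ≠ 0 := by
    rintro rfl
    obtain ⟨a, ha⟩ := module_isTorsion_of_finite (R := R) (V := V) (x := x)
    have : (a : R) ∈ LinearMap.ker (LinearMap.toSpanSingleton R V x) := ha
    rw [hx, hf, Submodule.span_zero_singleton, Submodule.mem_bot] at this
    exact nonZeroDivisors.coe_ne_zero a this
  have f_smul (v : V) : f • v = 0 :=
    Module.mem_annihilator.1 (hf ▸ Submodule.mem_span_singleton_self f) v
  obtain ⟨_, hcard⟩ := hV f hf0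
  have : Nat.card V ≤ Nat.card (LinearMap.range (LinearMap.toSpanSingleton R V x)) := by
    calc Nat.card V
        ≤ Nat.card (Submodule.torsionBy R V f) :=
          Nat.card_le_card_of_injective (fun v ↦ ⟨v, f_smul v⟩) fun _ _ ↦ congrArg Subtype.val
      _ ≤ Nat.card (R ⧸ LinearMap.ker (LinearMap.toSpanSingleton R V x)) := by rwa [hx, hf]
      _ = _ := Nat.card_congr (LinearMap.quotKerEquivRange _).toEquiv
  have := (Submodule.injective_subtype _).bijective_of_nat_card_le this
  refine ⟨x, ?_⟩
  rw [LinearMap.range_toSpanSingleton] at this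
  rw [eq_comm, ← Submodule.range_subtype (R ∙ x), LinearMap.range_eq_top]
  exact this.2

end Duality

section Coprimality

open scoped Classical in
theorem exists_isCoprime_isCoprime_add_eq {R : Type*} [CommRing R] [IsDomain R]
    [IsPrincipalIdealRing R] {M B : R} (hM : M ≠ 0) (hB : IsCoprime B M)
    (hB' : IsCoprime (B - 1) M) (f : R) :
    ∃ g h, IsCoprime g M ∧ IsCoprime h M ∧ g + h = f := by
  have hM' : Ideal.span {M} ≠ ⊥ := mt Ideal.span_singleton_eq_bot.1 hM
  let s : Finset (Ideal R) :=
    (UniqueFactorizationMonoid.normalizedFactors (Ideal.span {M})).toFinset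
  have mem_s {P : Ideal R} : P ∈ s ↔ P.IsPrime ∧ M ∈ P := by
    rw [Multiset.mem_toFinset, Ideal.mem_normalizedFactors_iff hM', Ideal.span_singleton_le_iff_mem]
  have notMem {P : Ideal R} (hP : P ∈ s) {x : R} (hx : IsCoprime x M) : x ∉ P := by
    intro hxP
    obtain ⟨u, v, huv⟩ := hx
    refine (mem_s.1 hP).1.ne_top (P.eq_top_iff_one.2 (huv ▸ ?_))
    exact P.add_mem (P.mul_mem_left u hxP) (P.mul_mem_left v (mem_s.1 hP).2)
  have isCoprime_of {x : R} (hx : ∀ P ∈ s, x ∉ P) : IsCoprime x M :=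
    isCoprime_of_prime_dvd (fun h ↦ hM h.2) fun P hP hPx hPM ↦
      hx _ (mem_s.2 ⟨(Ideal.span_singleton_prime hP.ne_zero).2 hP, Ideal.mem_span_singleton.2 hPM⟩)
        (Ideal.mem_span_singleton.2 hPx)
  -- Modulo a prime dividing `M`, neither `g` nor `f - g` may vanish: if `f ≡ 1`, use `g ≡ B`.
  obtain ⟨g, hg⟩ := IsDedekindDomain.exists_forall_sub_mem_ideal (fun P : Ideal R ↦ P)
    (fun _ ↦ 1) (s := s)
    (fun P hP ↦ UniqueFactorizationMonoid.prime_of_normalized_factor P (Multiset.mem_toFinset.1 hP))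
    (fun _ _ _ _ h ↦ h) fun P ↦ if f - 1 ∈ P.1 then B else 1
  refine ⟨g, f - g, isCoprime_of fun P hP hgP ↦ ?_, isCoprime_of fun P hP hgP ↦ ?_,
    add_sub_cancel g f⟩ <;>
    have hg := pow_one P ▸ hg P hP <;> split_ifs at hg with hf
  · exact notMem hP hB ((P.sub_mem_iff_right hgP).1 hg)
  · exact notMem hP isCoprime_one_left ((P.sub_mem_iff_right hgP).1 hg)
  · exact notMem hP hB' (by simpa using P.sub_mem hf (P.add_mem hgP hg))
  · exact hf (by simpa using P.add_mem hgP hg)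

theorem exists_monic_add_mul {K : Type*} [Field K] {M : K[X]} (hM : M ≠ 0) (B : K[X]) :
    ∃ D, (B + M * D).Monic := by
  refine ⟨C M.leadingCoeff⁻¹ - B / M, ?_⟩
  have : B + M * (C M.leadingCoeff⁻¹ - B / M) = B % M + M * C M.leadingCoeff⁻¹ := by
    linear_combination -EuclideanDomain.mod_add_div B M
  rw [this]
  refine (monic_mul_leadingCoeff_inv hM).add_of_right ?_
  rw [degree_mul_leadingCoeff_inv _ hM]
  exact degree_mod_lt B hM

end Coprimality

section KummerPairing

variable {R G V : Type*} [CommRing R] [Group G] [AddCommGroup V] [Module R V]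

theorem mem_of_isCoprime_of_smul_mem {e m : R} (hem : IsCoprime e m) {Γ : Submodule R V} {x : V}
    (he : e • x ∈ Γ) (hm : m • x ∈ Γ) : x ∈ Γ := by
  obtain ⟨u, v, huv⟩ := hem
  rw [← one_smul R x, ← huv, add_smul, mul_smul, mul_smul]
  exact Γ.add_mem (Γ.smul_mem u he) (Γ.smul_mem v hm)

/-- The module `m⁻¹Γ` of `m`-division points of `Γ`. -/
abbrev divisionPoints (m : R) (Γ : Submodule R V) : Submodule R V :=
  Γ.comap (LinearMap.lsmul R V m)

open scoped Pointwise in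
theorem finite_quotient_divisionPoints (m : R) [Finite (R ⧸ Ideal.span {m})] {Γ : Submodule R V}
    (hΓ : Γ.FG) : Finite (divisionPoints m Γ ⧸
      (m • (⊤ : Submodule R Γ)).comap ((LinearMap.lsmul R V m).submoduleComap Γ)) := by
  have : Module.Finite R Γ := .of_fg hΓ
  have : Finite (Γ ⧸ m • (⊤ : Submodule R Γ)) :=
    Submodule.ideal_span_singleton_smul m (⊤ : Submodule R Γ) ▸
      Submodule.finite_quotient_smul _ Module.Finite.fg_top
  exact Finite.of_injective (Submodule.mapQ _ _ _ le_rfl) <| LinearMap.ker_eq_bot.1 <|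
    Submodule.ker_liftQ_eq_bot _ _ _ <| (LinearMap.ker_comp _ _).trans_le <|
      Submodule.comap_mono (Submodule.ker_mkQ _).le

variable {ρ : Representation R G V} {m B : R} {Γ : Submodule R V} {s τ : G} {x : V}

variable (ρ m) in
/-- The subgroup fixing the `m`-torsion pointwise. For the Galois representation on the field
generated by `m⁻¹Γ` this is `H_Γ(m)`. -/
def torsionFixer : Subgroup G where
  carrier := {σ | ∀ x, m • x = 0 → ρ σ x = x}
  one_mem' _ _ := by rw [map_one, Module.End.one_apply]
  mul_mem' hσ hτ x hx := by rw [map_mul, Module.End.mul_apply, hτ x hx, hσ x hx]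
  inv_mem' {σ} hσ x hx := by
    conv_lhs => rw [← hσ x hx]
    exact ρ.inv_self_apply σ x

instance torsionFixer_normal : (torsionFixer ρ m).Normal where
  conj_mem τ hτ s x hx := by
    have : ρ τ (ρ s⁻¹ x) = ρ s⁻¹ x := hτ _ (by rw [← map_smul, hx, map_zero])
    rw [map_mul, map_mul, Module.End.mul_apply, Module.End.mul_apply, this, ρ.self_inv_apply]

theorem smul_apply_sub_self (hx : m • x ∈ ρ.invariants) (σ : G) : m • (ρ σ x - x) = 0 := by
  rw [smul_sub, ← map_smul, hx σ, sub_self]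

variable (m) in
/-- The Kummer pairing `⟨σ, α⟩ = σα - α` for `α ∈ m⁻¹Γ`. -/
def kummerPairing (hΓ : Γ ≤ ρ.invariants) :
    Additive (torsionFixer ρ m) →+ (divisionPoints m Γ →ₗ[R] V) where
  toFun σ := (ρ (σ.toMul : G) - 1) ∘ₗ Submodule.subtype _
  map_zero' := by
    ext x
    simp
  map_add' σ τ := by
    ext ⟨x, hx⟩
    have hfix := σ.toMul.2 _ (smul_apply_sub_self (hΓ hx) τ.toMul)
    rw [map_sub, sub_eq_iff_eq_add] at hfix
    simp only [toMul_add, Subgroup.coe_mul, map_mul, LinearMap.comp_apply, LinearMap.sub_apply,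
      LinearMap.add_apply, Submodule.subtype_apply, Module.End.mul_apply, Module.End.one_apply,
      hfix]
    abel

theorem apply_conj_sub_self (hs : ∀ x, m • x = 0 → ρ s x = B • x) (hτ : τ ∈ torsionFixer ρ m)
    (hx : m • x ∈ ρ.invariants) : ρ (s * τ * s⁻¹) x - x = B • (ρ τ x - x) := by
  have hfix := hτ _ (smul_apply_sub_self hx s⁻¹)
  rw [map_sub, sub_eq_sub_iff_sub_eq_sub] at hfix
  rw [← hs _ (smul_apply_sub_self hx τ), ← hfix, map_sub, ρ.self_inv_apply, map_mul, map_mul,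
    Module.End.mul_apply, Module.End.mul_apply]

theorem kummerPairing_conj (hΓ : Γ ≤ ρ.invariants) (hs : ∀ x, m • x = 0 → ρ s x = B • x)
    (τ : torsionFixer ρ m) :
    kummerPairing m hΓ (.ofMul ⟨s * τ * s⁻¹, torsionFixer_normal.conj_mem _ τ.2 s⟩) =
      B • kummerPairing m hΓ (.ofMul τ) := by
  ext ⟨x, hx⟩
  exact apply_conj_sub_self hs τ.2 (hΓ hx)

theorem kummerPairing_conj_mul_conj (hΓ : Γ ≤ ρ.invariants) {s₁ s₂ : G} {B₁ B₂ : R}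
    (hs₁ : ∀ x, m • x = 0 → ρ s₁ x = B₁ • x) (hs₂ : ∀ x, m • x = 0 → ρ s₂ x = B₂ • x)
    {σ τ : torsionFixer ρ m} (hσ : (σ : G) = s₁ * τ * s₁⁻¹ * (s₂ * τ * s₂⁻¹)) :
    kummerPairing m hΓ (.ofMul σ) = (B₁ + B₂) • kummerPairing m hΓ (.ofMul τ) := by
  rw [add_smul, ← kummerPairing_conj hΓ hs₁, ← kummerPairing_conj hΓ hs₂, ← map_add, ← ofMul_mul]
  exact congrArg _ (congrArg _ (Subtype.ext hσ))

theorem exists_smul_eq_zero_apply_sub_eq (hs : ∀ x, m • x = 0 → ρ s x = B • x)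
    (hB : IsCoprime (B - 1) m) (hx : m • x ∈ ρ.invariants) :
    ∃ z, m • z = 0 ∧ ρ s (x - z) = x - z := by
  obtain ⟨u, v, huv⟩ := hB
  have hz : m • (ρ s x - x) = 0 := smul_apply_sub_self hx s
  have huz : m • u • (ρ s x - x) = 0 := by rw [smul_comm, hz, smul_zero]
  refine ⟨u • (ρ s x - x), huz, ?_⟩
  have : B • u • (ρ s x - x) = u • (ρ s x - x) + (ρ s x - x) := by
    calc B • u • (ρ s x - x)
        = u • (ρ s x - x) + (u * (B - 1) + v * m) • (ρ s x - x) - v • m • (ρ s x - x) := by module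
      _ = u • (ρ s x - x) + (ρ s x - x) := by rw [huv, hz, one_smul, smul_zero, sub_zero]
  rw [map_sub, hs _ huz, this]
  abel

/-- Sah's lemma: `s` acts on the `m`-torsion through a scalar, hence is central modulo
`torsionFixer ρ m`, and the scalar `B - 1` is invertible modulo `m`. -/
theorem mem_invariants_of_apply_eq_self (hs : ∀ x, m • x = 0 → ρ s x = B • x)
    (hB : IsCoprime (B - 1) m) (hx : ∀ σ ∈ torsionFixer ρ m, ρ σ x = x) (hsx : ρ s x = x)
    (hmx : m • x ∈ ρ.invariants) : x ∈ ρ.invariants := by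
  intro τ
  have comm_mem : (τ * s)⁻¹ * (s * τ) ∈ torsionFixer ρ m := by
    intro y hy
    have hτy : m • ρ τ y = 0 := by rw [← map_smul, hy, map_zero]
    have : ρ (s * τ) y = ρ (τ * s) y := by
      simp only [map_mul, Module.End.mul_apply, hs y hy, hs _ hτy, map_smul]
    rw [map_mul, Module.End.mul_apply, this, ρ.inv_self_apply]
  have sτ_fix : ρ s (ρ τ x) = ρ τ x :=
    calc ρ s (ρ τ x) = ρ (τ * s * ((τ * s)⁻¹ * (s * τ))) x := by
          rw [mul_inv_cancel_left, map_mul, Module.End.mul_apply]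
      _ = ρ τ x := by
          rw [map_mul, Module.End.mul_apply, hx _ comm_mem, map_mul, Module.End.mul_apply, hsx]
  have hmw := smul_apply_sub_self hmx τ
  have hBw : (B - 1) • (ρ τ x - x) = 0 := by
    rw [sub_smul, one_smul, ← hs _ hmw, map_sub, sτ_fix, hsx, sub_self]
  exact sub_eq_zero.1 ((Submodule.mem_bot R).1 (mem_of_isCoprime_of_smul_mem hB hBw hmw))

theorem exists_mem_invariants_smul_eq (hs : ∀ x, m • x = 0 → ρ s x = B • x)
    (hB : IsCoprime (B - 1) m) (hx : ∀ σ ∈ torsionFixer ρ m, ρ σ x = x)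
    (hmx : m • x ∈ ρ.invariants) : ∃ y ∈ ρ.invariants, m • y = m • x := by
  obtain ⟨z, hz, hsz⟩ := exists_smul_eq_zero_apply_sub_eq hs hB hmx
  have hmz : m • (x - z) = m • x := by rw [smul_sub, hz, sub_zero]
  refine ⟨x - z, mem_invariants_of_apply_eq_self hs hB (fun σ hσ ↦ ?_) hsz (hmz ▸ hmx), hmz⟩
  rw [map_sub, hx σ hσ, hσ z hz]

open scoped Pointwise in
theorem TorsionBounded.exists_eq_kummerPairing [IsDomain R] [IsPrincipalIdealRing R] [Infinite R]
    (hV : TorsionBounded R V) [Finite (R ⧸ Ideal.span {m})] (hΓ : Γ ≤ ρ.invariants) (hfg : Γ.FG)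
    (hinj : Function.Injective (kummerPairing m hΓ))
    (c : R → Additive (torsionFixer ρ m) → Additive (torsionFixer ρ m))
    (hc : ∀ f σ, kummerPairing m hΓ (c f σ) = f • kummerPairing m hΓ σ)
    (t : Additive (torsionFixer ρ m) →+ V) (ht : ∀ f σ, t (c f σ) = f • t σ) :
    ∃ α, ∀ σ, t σ = kummerPairing m hΓ σ α := by
  have := finite_quotient_divisionPoints m hfg
  refine hV.exists_eq_apply_of_semilinear
    (Submodule.comap ((LinearMap.lsmul R V m).submoduleComap Γ) (m • (⊤ : Submodule R Γ)))
    (kummerPairing m hΓ) hinj ?_ c hc t ht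
  rintro σ ⟨x, hx⟩ hxP
  obtain ⟨⟨γ, hγ⟩, -, hγx⟩ := hxP
  have hγx : m • γ = m • x := congrArg Subtype.val hγx
  have hfix := σ.toMul.2 (x - γ) (by rw [smul_sub, hγx, sub_self])
  rw [map_sub, hΓ hγ, sub_left_inj] at hfix
  exact sub_eq_zero.2 hfix

end KummerPairing

section CarlitzPolynomials

variable {R : Type*} [CommRing R] {q : ℕ} {t : R}

/-- The `R`-linear extension of `X ^ n ↦ φ ∘ ⋯ ∘ φ` (`n` times), where `φ = t X + X ^ q`. -/
noncomputable def carlitzPoly (q : ℕ) (t : R) : R[X] →ₗ[R] R[X] :=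
  LinearMap.applyₗ X ∘ₗ (aeval (aeval (C t * X + X ^ q) : R[X] →ₐ[R] R[X]).toLinearMap).toLinearMap

theorem carlitzPoly_C (a : R) : carlitzPoly q t (C a) = C a * X := by
  simp [carlitzPoly, Module.algebraMap_end_apply, smul_eq_C_mul]

theorem carlitzPoly_mul_X (g : R[X]) :
    carlitzPoly q t (g * X) = (carlitzPoly q t g).comp (C t * X + X ^ q) := by
  rw [mul_comm, carlitzPoly, LinearMap.comp_apply, AlgHom.toLinearMap_apply, map_mul, aeval_X]
  rfl

theorem carlitzPoly_C_mul (a : R) (g : R[X]) :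
    carlitzPoly q t (C a * g) = C a * carlitzPoly q t g := by
  rw [← smul_eq_C_mul, map_smul, smul_eq_C_mul]

theorem map_carlitzPoly {S : Type*} [CommRing S] (φ : R →+* S) (g : R[X]) :
    (carlitzPoly q t g).map φ = carlitzPoly q (φ t) (g.map φ) := by
  induction g using Polynomial.induction_on with
  | C a => simp [carlitzPoly_C]
  | add g h hg hh => simp only [map_add, Polynomial.map_add, hg, hh]
  | monomial n a h =>
    rw [pow_succ, ← mul_assoc, Polynomial.map_mul, map_X, carlitzPoly_mul_X, carlitzPoly_mul_X,
      Polynomial.map_comp, h]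
    simp

theorem derivative_carlitzPoly (hq : (q : R) = 0) (g : R[X]) :
    derivative (carlitzPoly q t g) = C (g.eval t) := by
  induction g using Polynomial.induction_on with
  | C a => simp [carlitzPoly_C]
  | add g h hg hh => simp only [map_add, eval_add, hg, hh]
  | monomial n a h =>
    have : derivative (C t * X + X ^ q) = C t := by simp [derivative_X_pow, hq]
    rw [pow_succ, ← mul_assoc, carlitzPoly_mul_X, derivative_comp, h, C_comp, this, eval_mul_X,
      mul_comm, C_mul]

theorem natDegree_leadingCoeff_carlitzPoly [IsDomain R] (hq : 1 < q) {g : R[X]} (hg : g ≠ 0) :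
    (carlitzPoly q t g).natDegree = q ^ g.natDegree ∧
      (carlitzPoly q t g).leadingCoeff = g.leadingCoeff := by
  have hφ : (C t * X : R[X]).degree < (q : WithBot ℕ) :=
    (degree_C_mul_X_le t).trans_lt (mod_cast hq)
  have natDegree_φ : (C t * X + X ^ q : R[X]).natDegree = q := by
    rw [natDegree_add_eq_right_of_degree_lt (by rwa [degree_X_pow]), natDegree_X_pow]
  have monic_φ : (C t * X + X ^ q : R[X]).Monic := by
    rw [add_comm]
    exact monic_X_pow_add hφ
  induction hn : g.natDegree generalizing g with
  | zero =>
    obtain ⟨a, rfl⟩ := natDegree_eq_zero.1 hn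
    rw [carlitzPoly_C, natDegree_C_mul_X a (C_ne_zero.1 hg), leadingCoeff_mul_X, pow_zero]
    exact ⟨rfl, rfl⟩
  | succ n ih =>
    have hn' : g.divX.natDegree = n := by rw [natDegree_divX_eq_natDegree_tsub_one, hn]; rfl
    have hdivX : g.divX ≠ 0 := fun h ↦ by
      rw [divX_eq_zero_iff.1 h, natDegree_C] at hn
      exact n.succ_ne_zero hn.symm
    obtain ⟨ih₁, ih₂⟩ := ih hdivX hn'
    have leadingCoeff_divX : g.divX.leadingCoeff = g.leadingCoeff := by
      rw [leadingCoeff, leadingCoeff, coeff_divX, hn', hn]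
    have horner : carlitzPoly q t g =
        (carlitzPoly q t g.divX).comp (C t * X + X ^ q) + C (g.coeff 0) * X := by
      rw [← carlitzPoly_mul_X, ← carlitzPoly_C, ← map_add, divX_mul_X_add]
    have natDegree_comp' : ((carlitzPoly q t g.divX).comp (C t * X + X ^ q)).natDegree =
        q ^ (n + 1) := by rw [natDegree_comp, ih₁, natDegree_φ, pow_succ]
    have hlt : (C (g.coeff 0) * X).degree <
        ((carlitzPoly q t g.divX).comp (C t * X + X ^ q)).degree := by
      refine degree_lt_degree (((natDegree_C_mul_le _ _).trans natDegree_X_le).trans_lt ?_)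
      rw [natDegree_comp']
      exact Nat.one_lt_pow n.succ_ne_zero hq
    rw [horner, natDegree_add_eq_left_of_degree_lt hlt, leadingCoeff_add_of_degree_lt' hlt,
      natDegree_comp', leadingCoeff_comp (by omega), monic_φ, one_pow, mul_one, ih₂,
      leadingCoeff_divX]
    exact ⟨rfl, rfl⟩

theorem frobeniusAlgHom_pow_apply (K : Type*) [Field K] [Fintype K] [Algebra K R] (n : ℕ) (x : R) :
    (FiniteField.frobeniusAlgHom K R ^ n) x = x ^ Fintype.card K ^ n := by
  rw [AlgHom.coe_pow, FiniteField.coe_frobeniusAlgHom, pow_iterate]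

theorem carlitzPoly_prod_X_sub_C_pow (K : Type*) [Field K] [Fintype K] [Algebra K R] (n : ℕ) :
    carlitzPoly (Fintype.card K) t
      (∏ i ∈ Finset.range n, (X - C (t ^ Fintype.card K ^ i))) = X ^ Fintype.card K ^ n := by
  induction n with
  | zero => rw [Finset.prod_range_zero, ← C_1, carlitzPoly_C, C_1, one_mul, pow_zero, pow_one]
  | succ n ih =>
    have pow_add : (C t * X + X ^ Fintype.card K : R[X]) ^ Fintype.card K ^ n =
        (C t * X) ^ Fintype.card K ^ n + (X ^ Fintype.card K) ^ Fintype.card K ^ n := by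
      simp only [← frobeniusAlgHom_pow_apply K, map_add]
    rw [Finset.prod_range_succ, mul_sub, map_sub, carlitzPoly_mul_X, mul_comm _ (C _),
      carlitzPoly_C_mul, ih, X_pow_comp, pow_add, ← pow_mul, mul_pow, ← C_pow, pow_succ']
    ring

variable {K : Type*} [Field K] [Fintype K]

theorem card_root_pow_injOn (P : K[X]) [Fact (Irreducible P)] (hP : P.Monic) :
    Set.InjOn (fun i ↦ AdjoinRoot.root P ^ Fintype.card K ^ i) (Finset.range P.natDegree) := by
  have : Module.Finite K (AdjoinRoot P) := hP.finite_adjoinRoot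
  have : Finite (AdjoinRoot P) := Module.finite_of_finite K
  have horder : orderOf (FiniteField.frobeniusAlgHom K (AdjoinRoot P)) = P.natDegree := by
    rw [FiniteField.orderOf_frobeniusAlgHom, (AdjoinRoot.powerBasis' hP).finrank,
      AdjoinRoot.powerBasis'_dim]
  intro i hi j hj hij
  rw [Finset.mem_coe, Finset.mem_range, ← horder] at hi hj
  refine pow_injOn_Iio_orderOf hi hj (AdjoinRoot.algHom_ext ?_)
  rwa [frobeniusAlgHom_pow_apply, frobeniusAlgHom_pow_apply]

theorem map_algebraMap_eq_prod_X_sub_C_pow (P : K[X]) [Fact (Irreducible P)] (hP : P.Monic) :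
    P.map (algebraMap K (AdjoinRoot P)) =
      ∏ i ∈ Finset.range P.natDegree, (X - C (AdjoinRoot.root P ^ Fintype.card K ^ i)) := by
  have monic (i : ℕ) : (X - C (AdjoinRoot.root P ^ Fintype.card K ^ i)).Monic := monic_X_sub_C _
  refine eq_of_monic_of_dvd_of_natDegree_le (monic_prod_of_monic _ _ fun i _ ↦ monic i) (hP.map _)
    (Finset.prod_dvd_of_coprime ?_ ?_) ?_
  · intro i hi j hj hij
    refine isCoprime_X_sub_C_of_isUnit_sub (sub_ne_zero.2 fun h ↦ hij ?_).isUnit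
    exact card_root_pow_injOn P hP hi hj h
  · intro i _
    rw [dvd_iff_isRoot, IsRoot, eval_map_algebraMap, ← frobeniusAlgHom_pow_apply,
      aeval_algHom_apply, AdjoinRoot.aeval_eq, AdjoinRoot.mk_self, map_zero]
  · rw [hP.natDegree_map, natDegree_prod_of_monic _ _ fun i _ ↦ monic i]
    simp only [natDegree_X_sub_C, Finset.sum_const, Finset.card_range, smul_eq_mul, mul_one, le_rfl]

/-- The polynomial `C_M ∈ A[X]` with `α ^ M = C_M(α)` in the Carlitz module. -/
noncomputable def carlitz (M : K[X]) : K[X][X] := carlitzPoly (Fintype.card K) X (M.map C)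

theorem natDegree_carlitz {M : K[X]} (hM : M ≠ 0) :
    (carlitz M).natDegree = Fintype.card K ^ M.natDegree := by
  rw [carlitz, (natDegree_leadingCoeff_carlitzPoly Fintype.one_lt_card
    ((Polynomial.map_ne_zero_iff C_injective).2 hM)).1, natDegree_map_eq_of_injective C_injective]

theorem leadingCoeff_carlitz {M : K[X]} (hM : M ≠ 0) :
    (carlitz M).leadingCoeff = C M.leadingCoeff := by
  rw [carlitz, (natDegree_leadingCoeff_carlitzPoly Fintype.one_lt_card
    ((Polynomial.map_ne_zero_iff C_injective).2 hM)).2, leadingCoeff_map_of_injective C_injective]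

theorem natDegree_map_carlitz {S : Type*} [CommRing S] [Nontrivial S] (φ : K[X] →+* S) {M : K[X]}
    (hM : M ≠ 0) : ((carlitz M).map φ).natDegree = Fintype.card K ^ M.natDegree := by
  rw [natDegree_map_of_leadingCoeff_ne_zero, natDegree_carlitz hM]
  rw [leadingCoeff_carlitz hM]
  exact (((leadingCoeff_ne_zero.2 hM).isUnit.map C).map φ).ne_zero

theorem map_carlitz_ne_zero {S : Type*} [CommRing S] [Nontrivial S] (φ : K[X] →+* S) {M : K[X]}
    (hM : M ≠ 0) : (carlitz M).map φ ≠ 0 :=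
  ne_zero_of_natDegree_gt (n := 0) <| by
    rw [natDegree_map_carlitz φ hM]
    exact pow_pos Fintype.card_pos _

theorem derivative_carlitz (M : K[X]) : derivative (carlitz M) = C M := by
  have hq : (Fintype.card K : K[X]) = 0 := by
    rw [← map_natCast C, FiniteField.cast_card_eq_zero, map_zero]
  rw [carlitz, derivative_carlitzPoly hq, eval_map, eval₂_C_X]

theorem separable_map_carlitz_sub_C {S : Type*} [CommRing S] (φ : K[X] →+* S) {M : K[X]}
    (hM : IsUnit (φ M)) (a : S) : ((carlitz M).map φ - C a).Separable := by
  rw [Polynomial.Separable, derivative_sub, derivative_C, sub_zero, derivative_map,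
    derivative_carlitz, map_C]
  exact (isCoprime_zero_left.2 (isUnit_C.2 hM)).of_isCoprime_of_dvd_left (dvd_zero _)

theorem map_mk_carlitz_self (P : K[X]) [Fact (Irreducible P)] (hP : P.Monic) :
    (carlitz P).map (AdjoinRoot.mk P) = X ^ Fintype.card K ^ P.natDegree := by
  rw [carlitz, map_carlitzPoly, AdjoinRoot.mk_X, Polynomial.map_map,
    ← carlitzPoly_prod_X_sub_C_pow, ← map_algebraMap_eq_prod_X_sub_C_pow P hP]
  rfl

theorem dvd_pow_map_mk_of_dvd_comp_carlitz {P : K[X]} [Fact (Irreducible P)] (hP : P.Monic)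
    {f h : K[X][X]} (hf : f ∣ h.comp (carlitz P)) :
    f.map (AdjoinRoot.mk P) ∣ h.map (AdjoinRoot.mk P) ^ Fintype.card K ^ P.natDegree := by
  have : Module.Finite K (AdjoinRoot P) := hP.finite_adjoinRoot
  have : Finite (AdjoinRoot P) := Module.finite_of_finite K
  let _ := Fintype.ofFinite (AdjoinRoot P)
  have hcard : Fintype.card K ^ P.natDegree = Fintype.card (AdjoinRoot P) := by
    rw [Module.card_eq_pow_finrank (K := K) (V := AdjoinRoot P),
      (AdjoinRoot.powerBasis' hP).finrank, AdjoinRoot.powerBasis'_dim]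
  have := Polynomial.map_dvd (AdjoinRoot.mk P) hf
  rwa [Polynomial.map_comp, map_mk_carlitz_self P hP, hcard, ← expand_eq_comp_X_pow,
    FiniteField.expand_card, ← hcard] at this

theorem isIntegral_of_aeval_carlitz_eq_zero {Ω : Type*} [CommRing Ω] [Algebra K[X] Ω] {M : K[X]}
    (hM : M ≠ 0) {x : Ω} (hx : aeval x (carlitz M) = 0) : IsIntegral K[X] x := by
  have hu : IsUnit (carlitz M).leadingCoeff := by
    rw [leadingCoeff_carlitz hM]
    exact (leadingCoeff_ne_zero.2 hM).isUnit.map C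
  refine ⟨hu.unit⁻¹ • carlitz M, monic_of_isUnit_leadingCoeff_inv_smul hu, ?_⟩
  rw [← aeval_def, Units.smul_def, map_smul, hx, smul_zero]

theorem aeval_carlitz_minpoly_eq_zero {Ω : Type*} [CommRing Ω] [IsDomain Ω] [Algebra K[X] Ω]
    [Module.IsTorsionFree K[X] Ω] {P M : K[X]} (hP : P.Monic) (hPi : Irreducible P)
    (hPM : IsCoprime P M) (hM : M ≠ 0) {x : Ω} (hx : aeval x (carlitz M) = 0)
    (hxP : aeval (aeval x (carlitz P)) (carlitz M) = 0) :
    aeval (aeval x (carlitz P)) (minpoly K[X] x) = 0 := by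
  have : Fact (Irreducible P) := ⟨hPi⟩
  have hint := isIntegral_of_aeval_carlitz_eq_zero hM hx
  obtain ⟨h, hh⟩ := minpoly.isIntegrallyClosed_dvd hint hx
  by_contra hne
  have h_root : aeval (aeval x (carlitz P)) h = 0 := by
    rw [hh, map_mul] at hxP
    exact (mul_eq_zero.1 hxP).resolve_left hne
  have hdvd := dvd_pow_map_mk_of_dvd_comp_carlitz hP <|
    minpoly.isIntegrallyClosed_dvd hint ((aeval_comp _).trans h_root)
  have hunit : IsUnit (AdjoinRoot.mk P M) := by
    have := hPM.map (AdjoinRoot.mk P)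
    rwa [AdjoinRoot.mk_self, isCoprime_zero_left] at this
  have hsep := separable_map_carlitz_sub_C (AdjoinRoot.mk P) hunit 0
  rw [C_0, sub_zero, hh, Polynomial.map_mul] at hsep
  have hdeg := natDegree_eq_zero_of_isUnit <| hsep.isCoprime.pow_right.isUnit_of_dvd' dvd_rfl hdvd
  rw [(minpoly.monic hint).natDegree_map] at hdeg
  exact (minpoly.natDegree_pos hint).ne' hdeg

variable {Ω : Type*} [Field Ω] [Algebra K[X] Ω]

theorem exists_aeval_carlitz_eq [IsAlgClosed Ω] {M : K[X]} (hM : M ≠ 0) (a : Ω) :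
    ∃ x, aeval x (carlitz M) = a := by
  obtain ⟨x, hx⟩ := IsAlgClosed.exists_root ((carlitz M).map (algebraMap K[X] Ω) - C a) fun h ↦ by
    have hdeg := natDegree_eq_of_degree_eq_some h
    rw [natDegree_sub_C, natDegree_map_carlitz _ hM] at hdeg
    exact (pow_pos Fintype.card_pos _).ne' hdeg
  exact ⟨x, by rwa [IsRoot, eval_sub, eval_C, eval_map_algebraMap, sub_eq_zero] at hx⟩

variable {F : Type*} [Field F] [Algebra K[X] F] [IsFractionRing K[X] F] [Algebra F Ω]
  [IsScalarTower K[X] F Ω] {M : K[X]}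

theorem isSeparable_of_aeval_carlitz_mem_range (hM : M ≠ 0) {x : Ω}
    (hx : aeval x (carlitz M) ∈ Set.range (algebraMap F Ω)) : IsSeparable F x := by
  obtain ⟨a, ha⟩ := hx
  have map_ne_zero : algebraMap K[X] F M ≠ 0 := by
    rwa [Ne, FaithfulSMul.algebraMap_eq_zero_iff]
  refine (separable_map_carlitz_sub_C _ map_ne_zero.isUnit a).of_dvd (minpoly.dvd F x ?_)
  rw [map_sub, aeval_map_algebraMap, aeval_C, ha, sub_self]

theorem isGalois_of_eq_adjoin_aeval_carlitz_mem [Normal F Ω] (hM : M ≠ 0) {S : Set Ω}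
    (hS : S ⊆ Set.range (algebraMap F Ω)) {E : IntermediateField F Ω}
    (hE : E = adjoin F {x | aeval x (carlitz M) ∈ S}) : IsGalois F E := by
  have : Algebra.IsSeparable F E := hE ▸
    (isSeparable_adjoin_iff_isSeparable F Ω).2 fun _ hx ↦
      isSeparable_of_aeval_carlitz_mem_range hM (hS hx)
  have : Normal F E := by
    rw [normal_iff_forall_map_le', hE]
    refine fun σ ↦ (adjoin_map F _ _).trans_le (adjoin.mono F _ _ ?_)
    rintro _ ⟨x, hx, rfl⟩
    obtain ⟨a, ha⟩ := hS hx
    have aeval_apply : aeval (σ x) (carlitz M) = aeval x (carlitz M) := by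
      rw [← ha, ← σ.commutes a, ha]
      exact aeval_algHom_apply (σ.toAlgHom.restrictScalars K[X]) x _
    exact (congrArg (· ∈ S) aeval_apply).mpr hx
  exact ⟨⟩

end CarlitzPolynomials

section CarlitzModule

variable {K : Type*} [Field K] [Fintype K] {Ω : Type*}

theorem eq_aeval_carlitz [CommRing Ω] [Algebra K[X] Ω] (act : K[X] → Ω → Ω)
    (hC : ∀ a x, act (C a) x = algebraMap K[X] Ω (C a) * x)
    (hadd : ∀ f g x, act (f + g) x = act f x + act g x)
    (hX : ∀ f x, act (f * X) x = act f (algebraMap K[X] Ω X * x + x ^ Fintype.card K))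
    (f : K[X]) (x : Ω) : act f x = aeval x (carlitz f) := by
  induction f using Polynomial.induction_on generalizing x with
  | C a => simp [hC, carlitz, carlitzPoly_C]
  | add f g hf hg => simp only [hadd, hf, hg, carlitz, Polynomial.map_add, map_add]
  | monomial n a h =>
    rw [pow_succ, ← mul_assoc, hX, h, carlitz, carlitz, Polynomial.map_mul (p := _ * _), map_X,
      carlitzPoly_mul_X, aeval_comp]
    simp

variable (K Ω) in
/-- The endomorphism `x ↦ T x + x ^ q` of an `A`-algebra. -/
noncomputable def carlitzEnd [CommRing Ω] [Algebra K Ω] [Algebra K[X] Ω] [IsScalarTower K K[X] Ω] :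
    Module.End K Ω :=
  Algebra.lsmul K K Ω (X : K[X]) + (FiniteField.frobeniusAlgHom K Ω).toLinearMap

variable (K Ω) in
/-- The Carlitz module of an `A`-algebra: its additive group, on which `T` acts by `carlitzEnd`. -/
abbrev CarlitzModule [CommRing Ω] [Algebra K Ω] [Algebra K[X] Ω] [IsScalarTower K K[X] Ω] :
    Type _ :=
  Module.AEval' (carlitzEnd K Ω)

section CommRing

variable [CommRing Ω] [Algebra K Ω] [Algebra K[X] Ω] [IsScalarTower K K[X] Ω]

variable (K) in
/-- The identity map onto the Carlitz module. -/
noncomputable def toCarlitz : Ω ≃ₗ[K] CarlitzModule K Ω := Module.AEval'.of (carlitzEnd K Ω)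

theorem smul_toCarlitz (f : K[X]) (x : Ω) :
    f • toCarlitz K x = toCarlitz K (aeval x (carlitz f)) := by
  rw [← LinearEquiv.symm_apply_eq]
  refine eq_aeval_carlitz (fun f x ↦ (toCarlitz K).symm (f • toCarlitz K x)) (fun a x ↦ ?_)
    (fun f g x ↦ by rw [add_smul, map_add]) (fun f x ↦ ?_) f x
  · rw [Module.AEval.C_smul, ← map_smul, LinearEquiv.symm_apply_apply, ← algebraMap_eq,
      ← IsScalarTower.algebraMap_apply, Algebra.smul_def]
  · rw [mul_smul, toCarlitz, Module.AEval'.X_smul_of]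
    simp only [carlitzEnd, LinearMap.add_apply, Algebra.lsmul_coe, Algebra.smul_def]
    rfl

theorem symm_toCarlitz_smul (f : K[X]) (x : CarlitzModule K Ω) :
    (toCarlitz K).symm (f • x) = aeval ((toCarlitz K).symm x) (carlitz f) := by
  rw [LinearEquiv.symm_apply_eq, ← smul_toCarlitz, LinearEquiv.apply_symm_apply]

theorem finite_quotient_span_singleton {K : Type*} [Field K] [Finite K] {f : K[X]} (hf : f ≠ 0) :
    Finite (K[X] ⧸ Ideal.span {f}) :=
  have : Module.Finite K (K[X] ⧸ Ideal.span {f}) := (AdjoinRoot.powerBasis hf).finite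
  Module.finite_of_finite K

theorem natCard_quotient_span_singleton {f : K[X]} (hf : f ≠ 0) :
    Nat.card (K[X] ⧸ Ideal.span {f}) = Fintype.card K ^ f.natDegree := by
  have : Module.Finite K (K[X] ⧸ Ideal.span {f}) := (AdjoinRoot.powerBasis hf).finite
  rw [Module.natCard_eq_pow_finrank (K := K), finrank_quotient_span_eq_natDegree,
    Nat.card_eq_fintype_card]

theorem torsionBounded_carlitzModule [IsDomain Ω] : TorsionBounded K[X] (CarlitzModule K Ω) := by
  intro f hf
  have mem_rootSet (x : Submodule.torsionBy K[X] (CarlitzModule K Ω) f) :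
      (toCarlitz K).symm x.1 ∈ (carlitz f).rootSet Ω := by
    refine mem_rootSet'.2 ⟨map_carlitz_ne_zero _ hf, ?_⟩
    rw [← symm_toCarlitz_smul, (Submodule.mem_torsionBy_iff _ _).1 x.2, map_zero]
  have injective : Function.Injective fun x ↦ (⟨_, mem_rootSet x⟩ : (carlitz f).rootSet Ω) :=
    fun x y h ↦ Subtype.ext ((toCarlitz K).symm.injective (Subtype.mk.inj h))
  refine ⟨Finite.of_injective _ injective, ?_⟩
  calc Nat.card (Submodule.torsionBy K[X] (CarlitzModule K Ω) f)
      ≤ Nat.card ((carlitz f).rootSet Ω) := Nat.card_le_card_of_injective _ injective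
    _ ≤ (carlitz f).natDegree := ncard_rootSet_le _ _
    _ = Nat.card (K[X] ⧸ Ideal.span {f}) := by
        rw [natDegree_carlitz hf, natCard_quotient_span_singleton hf]

section Galois

variable {F : Type*} [CommRing F] [Algebra K[X] F] [Algebra F Ω] [IsScalarTower K[X] F Ω]

theorem smul_toCarlitz_algHom (f : K[X]) (σ : Ω →ₐ[F] Ω) (x : Ω) :
    f • toCarlitz K (σ x) = toCarlitz K (σ ((toCarlitz K).symm (f • toCarlitz K x))) := by
  rw [smul_toCarlitz, smul_toCarlitz, LinearEquiv.symm_apply_apply]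
  exact congrArg _ (aeval_algHom_apply (σ.restrictScalars K[X]) x _)

variable (K Ω F) in
/-- The representation of `Gal(Ω/F)` on the Carlitz module of `Ω`. -/
noncomputable def galRep : Representation K[X] (Ω ≃ₐ[F] Ω) (CarlitzModule K Ω) where
  toFun σ :=
    { toFun x := toCarlitz K (σ ((toCarlitz K).symm x))
      map_add' x y := by simp only [map_add]
      map_smul' f x := by
        rw [RingHom.id_apply]
        exact (smul_toCarlitz_algHom f σ.toAlgHom ((toCarlitz K).symm x)).symm }
  map_one' := rfl
  map_mul' σ τ := rfl

theorem galRep_toCarlitz (σ : Ω ≃ₐ[F] Ω) (x : Ω) :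
    galRep K Ω F σ (toCarlitz K x) = toCarlitz K (σ x) := rfl

end Galois

end CommRing

section Field

variable [Field Ω] [Algebra K Ω] [Algebra K[X] Ω] [IsScalarTower K K[X] Ω]
  {F : Type*} [Field F] [Algebra K[X] F] [Algebra F Ω] [IsScalarTower K[X] F Ω]

theorem toCarlitz_mem_invariants_iff [IsGalois F Ω] {x : Ω} :
    toCarlitz K x ∈ (galRep K Ω F).invariants ↔ x ∈ Set.range (algebraMap F Ω) := by
  simp only [Representation.mem_invariants, galRep_toCarlitz, EmbeddingLike.apply_eq_iff_eq,
    InfiniteGalois.mem_range_algebraMap_iff_fixed]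

variable [IsFractionRing K[X] F]

theorem minpoly_smul_eq_of_irreducible {M P : K[X]} (hM : M ≠ 0) (hP : P.Monic)
    (hPi : Irreducible P) (hPM : IsCoprime P M) {x : CarlitzModule K Ω} (hx : M • x = 0) :
    minpoly F ((toCarlitz K).symm (P • x)) = minpoly F ((toCarlitz K).symm x) := by
  have : Module.IsTorsionFree K[X] Ω := .trans_faithfulSMul K[X] F Ω
  have hx' : aeval ((toCarlitz K).symm x) (carlitz M) = 0 := by
    rw [← symm_toCarlitz_smul, hx, map_zero]
  have hPx : aeval (aeval ((toCarlitz K).symm x) (carlitz P)) (carlitz M) = 0 := by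
    rw [← symm_toCarlitz_smul, ← symm_toCarlitz_smul, smul_comm, hx, smul_zero, map_zero]
  have hint := isIntegral_of_aeval_carlitz_eq_zero hM hx'
  have hint' : IsIntegral F ((toCarlitz K).symm x) := hint.tower_top
  rw [eq_comm, minpoly.eq_iff_aeval_eq_zero (minpoly.irreducible hint') (minpoly.monic hint'),
    minpoly.isIntegrallyClosed_eq_field_fractions' F hint, aeval_map_algebraMap,
    symm_toCarlitz_smul, aeval_carlitz_minpoly_eq_zero hP hPi hPM hM hx' hPx]

open scoped Classical in
open UniqueFactorizationMonoid in
theorem minpoly_smul_eq_of_monic {M B : K[X]} (hM : M ≠ 0) (hB : B.Monic) (hBM : IsCoprime B M)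
    {x : CarlitzModule K Ω} (hx : M • x = 0) :
    minpoly F ((toCarlitz K).symm (B • x)) = minpoly F ((toCarlitz K).symm x) := by
  let S : Submonoid K[X] :=
    { carrier := {B | ∀ x : CarlitzModule K Ω, M • x = 0 →
        minpoly F ((toCarlitz K).symm (B • x)) = minpoly F ((toCarlitz K).symm x)}
      one_mem' x _ := by rw [one_smul]
      mul_mem' {f g} hf hg x hx := by
        rw [mul_smul, hf _ (by rw [smul_comm, hx, smul_zero]), hg x hx] }
  have prime_mem (P : K[X]) (hP : P ∈ normalizedFactors B) : P ∈ S := fun x hx ↦ by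
    have hPi := irreducible_of_normalized_factor P hP
    refine minpoly_smul_eq_of_irreducible hM ?_ hPi ?_ hx
    · rw [← normalize_normalized_factor P hP]
      exact monic_normalize hPi.ne_zero
    · exact hBM.of_isCoprime_of_dvd_left (dvd_of_mem_normalizedFactors hP)
  refine (?_ : B ∈ S) x hx
  rw [← hB.normalize_eq_self, ← prod_normalizedFactors_eq hB.ne_zero]
  exact S.multiset_prod_mem _ prime_mem

variable (F) in
theorem exists_galRep_eq_smul [Normal F Ω] {M B : K[X]} (hM : M ≠ 0) (hB : IsCoprime B M) :
    ∃ σ, ∀ x, M • x = 0 → galRep K Ω F σ x = B • x := by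
  have bounded := torsionBounded_carlitzModule (K := K) (Ω := Ω)
  have := (bounded M hM).1
  obtain ⟨l, hgen⟩ :=
    (bounded.of_injective _ (Submodule.injective_subtype (.torsionBy _ _ M))).isPrincipal_top
  have hl : M • l.1 = 0 := (Submodule.mem_torsionBy_iff _ _).1 l.2
  obtain ⟨D, hD⟩ := exists_monic_add_mul hM B
  have smul_eq : (B + M * D) • l.1 = B • l.1 := by
    rw [add_smul, mul_comm, mul_smul, hl, smul_zero, add_zero]
  have hconj := minpoly_smul_eq_of_monic (F := F) hM hD (hB.add_mul_left_left D) hl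
  rw [smul_eq, Normal.minpoly_eq_iff_mem_orbit] at hconj
  obtain ⟨σ, hσ⟩ := hconj
  have hσl : galRep K Ω F σ l = B • l.1 := (LinearEquiv.symm_apply_eq _).1 hσ.symm |>.symm
  refine ⟨σ, fun x hx ↦ ?_⟩
  have hxl : (⟨x, hx⟩ : Submodule.torsionBy K[X] _ M) ∈ K[X] ∙ l := hgen ▸ Submodule.mem_top
  obtain ⟨g, hg⟩ := Submodule.mem_span_singleton.1 hxl
  have hgx : g • l.1 = x := congrArg Subtype.val hg
  rw [← hgx, map_smul, hσl, smul_comm]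

end Field

end CarlitzModule

section KummerTheory

variable {K : Type*} [Field K] [Fintype K]

theorem exists_isCoprime_isCoprime_sub_one {M : K[X]}
    (hM : ¬ (Fintype.card K = 2 ∧ (X ∣ M ∨ X + 1 ∣ M))) :
    ∃ B, IsCoprime B M ∧ IsCoprime (B - 1) M := by
  by_cases hcard : Fintype.card K = 2
  · have two_eq_zero : (2 : K[X]) = 0 := by
      rw [← map_ofNat C, ← Nat.cast_ofNat, ← hcard, FiniteField.cast_card_eq_zero, map_zero]
    have sub_one_eq : (X - 1 : K[X]) = X + 1 := by linear_combination -two_eq_zero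
    obtain ⟨hX, hX1⟩ := not_or.1 (hM ⟨hcard, ·⟩)
    rw [← sub_one_eq] at hX1
    refine ⟨X, irreducible_X.coprime_iff_not_dvd.2 hX, ?_⟩
    exact (C_1 (R := K) ▸ irreducible_X_sub_C 1).coprime_iff_not_dvd.2 hX1
  · have hcard' : 2 < Fintype.card K := lt_of_le_of_ne' Fintype.one_lt_card hcard
    obtain ⟨a, ha0, ha1⟩ := ENat.exists_ne_ne_of_three_le
      (by rw [ENat.card_eq_coe_fintype_card]; exact_mod_cast hcard') (0 : K) 1
    have isCoprime_C {b : K} (hb : b ≠ 0) : IsCoprime (C b) M :=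
      isCoprime_one_left.of_isCoprime_of_dvd_left (isUnit_C.2 hb.isUnit).dvd
    refine ⟨C a, isCoprime_C ha0, ?_⟩
    rw [← C_1, ← C_sub]
    exact isCoprime_C (sub_ne_zero.2 ha1)

variable {F Ω : Type*} [Field F] [Algebra K[X] F] [IsFractionRing K[X] F] [Field Ω] [Algebra K Ω]
  [Algebra K[X] Ω] [IsScalarTower K K[X] Ω] [Algebra F Ω] [IsScalarTower K[X] F Ω]
  {M : K[X]} {Γ : Submodule K[X] (CarlitzModule K Ω)}

theorem exists_mem_smul_eq_of_apply_eq_self [Normal F Ω] (hM : M ≠ 0)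
    (hM' : ¬ (Fintype.card K = 2 ∧ (X ∣ M ∨ X + 1 ∣ M))) (hΓ : Γ ≤ (galRep K Ω F).invariants)
    {e : K[X]} (he : ∀ y ∈ (galRep K Ω F).invariants, M • y ∈ Γ → e • y ∈ Γ) (heM : IsCoprime e M)
    {x : CarlitzModule K Ω} (hx : M • x ∈ Γ)
    (hfix : ∀ σ ∈ torsionFixer (galRep K Ω F) M, galRep K Ω F σ x = x) :
    ∃ γ ∈ Γ, M • γ = M • x := by
  obtain ⟨B, hB, hB'⟩ := exists_isCoprime_isCoprime_sub_one hM'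
  obtain ⟨s, hs⟩ := exists_galRep_eq_smul (Ω := Ω) F hM hB
  obtain ⟨y, hy, hyx⟩ := exists_mem_invariants_smul_eq hs hB' hfix (hΓ hx)
  have hMy : M • y ∈ Γ := hyx ▸ hx
  exact ⟨y, mem_of_isCoprime_of_smul_mem heM (he y hy hMy) hMy, hyx⟩

end KummerTheory

section Adjoin

variable {F L : Type*} [Field F] [Field L] [Algebra F L] {E : IntermediateField F L} {S : Set L}

theorem mem_of_eq_adjoin_setOf {p : L → Prop} (hE : E = adjoin F {x | p x}) {x : L} (hx : p x) :
    x ∈ E :=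
  hE ▸ subset_adjoin F _ hx

theorem apply_eq_self_of_mem_adjoin (hS : S ⊆ E) (σ : E →ₐ[F] E)
    (hσ : ∀ x : E, (x : L) ∈ S → σ x = x) {x : E} (hx : (x : L) ∈ adjoin F S) : σ x = x := by
  have h : E.val.comp (σ.comp (inclusion (adjoin_le_iff.2 hS))) = (adjoin F S).val :=
    adjoin_algHom_ext F fun y hy ↦ congrArg Subtype.val (hσ ⟨y, hS hy⟩ hy)
  exact Subtype.ext (AlgHom.congr_fun h ⟨x, hx⟩)

theorem eq_one_of_eq_adjoin (hE : E = adjoin F S) {σ : Gal(E/F)}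
    (hσ : ∀ x : E, (x : L) ∈ S → σ x = x) : σ = 1 :=
  AlgEquiv.ext fun x ↦
    apply_eq_self_of_mem_adjoin (hE ▸ subset_adjoin F S) σ hσ (hE.le x.2)

end Adjoin

section GaloisGroup

variable {Fq : Type} [Field Fq] [Fintype Fq]
  {ψ : Fq[X] →+* AddMonoid.End (AlgebraicClosure (RatFunc Fq))} {M : Fq[X]}
  {E : IntermediateField (RatFunc Fq) (AlgebraicClosure (RatFunc Fq))}
  {Γ : AddSubgroup (AlgebraicClosure (RatFunc Fq))}

local notation "kbar" => AlgebraicClosure (RatFunc Fq)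

theorem isCarlitz_apply (hψ : IsCarlitz ψ) (f : Fq[X]) (x : kbar) : ψ f x = aeval x (carlitz f) :=
  eq_aeval_carlitz (fun f ↦ ψ f) (fun a x ↦ hψ.2 a x) (fun f g x ↦ by rw [map_add]; rfl)
    (fun f x ↦ by rw [map_mul]; exact congrArg _ (hψ.1 x)) f x

instance : IsScalarTower Fq Fq[X] E := .of_algebraMap_eq fun _ ↦ rfl

theorem coe_symm_toCarlitz_smul (hψ : IsCarlitz ψ) (f : Fq[X]) (x : CarlitzModule Fq E) :
    (((toCarlitz Fq).symm (f • x) : E) : kbar) = ψ f ((toCarlitz Fq).symm x : E) := by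
  rw [isCarlitz_apply hψ, symm_toCarlitz_smul]
  exact (aeval_algHom_apply (E.val.restrictScalars Fq[X]) _ _).symm

theorem smul_toCarlitz_eq_zero_iff (hψ : IsCarlitz ψ) {x : E} :
    M • toCarlitz Fq x = 0 ↔ ψ M (x : kbar) = 0 := by
  rw [← (toCarlitz Fq).symm.map_eq_zero_iff, ← ZeroMemClass.coe_eq_zero,
    coe_symm_toCarlitz_smul hψ, LinearEquiv.symm_apply_apply]

theorem mem_torsionFixer_iff (hψ : IsCarlitz ψ) {σ : Gal(E/RatFunc Fq)} :
    σ ∈ torsionFixer (galRep Fq E (RatFunc Fq)) M ↔ FixesTorsion ψ M σ := by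
  refine (toCarlitz Fq).surjective.forall.trans (forall_congr' fun x ↦ ?_)
  rw [smul_toCarlitz_eq_zero_iff hψ, galRep_toCarlitz, EmbeddingLike.apply_eq_iff_eq]

theorem extendsSigma_iff (hψ : IsCarlitz ψ) {s : Gal(E/RatFunc Fq)} {B : Fq[X]} :
    ExtendsSigma ψ M s B ↔ ∀ x, M • x = 0 → galRep Fq E (RatFunc Fq) s x = B • x := by
  refine .symm ((toCarlitz Fq).surjective.forall.trans (forall_congr' fun x ↦ ?_))
  rw [smul_toCarlitz_eq_zero_iff hψ, galRep_toCarlitz, ← LinearEquiv.eq_symm_apply, Subtype.ext_iff,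
    coe_symm_toCarlitz_smul hψ, LinearEquiv.symm_apply_apply]

/-- An `A`-submodule of `k̄`, viewed in the Carlitz module of an intermediate field. -/
def carlitzSubmodule (hψ : IsCarlitz ψ) (E : IntermediateField (RatFunc Fq) kbar)
    (Γ : AddSubgroup kbar) (hΓ : ∀ f : Fq[X], ∀ x ∈ Γ, ψ f x ∈ Γ) :
    Submodule Fq[X] (CarlitzModule Fq E) where
  carrier := {x | ((toCarlitz Fq).symm x : E).1 ∈ Γ}
  zero_mem' := Γ.zero_mem
  add_mem' := Γ.add_mem
  smul_mem' f x hx := (congrArg (· ∈ Γ) (coe_symm_toCarlitz_smul hψ f x)).mpr (hΓ f _ hx)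

theorem smul_toCarlitz_mem_carlitzSubmodule_iff (hψ : IsCarlitz ψ)
    (hΓ : ∀ f : Fq[X], ∀ x ∈ Γ, ψ f x ∈ Γ)
    {f : Fq[X]} {x : E} :
    f • toCarlitz Fq x ∈ carlitzSubmodule hψ E Γ hΓ ↔ ψ f (x : kbar) ∈ Γ :=
  iff_of_eq (congrArg (· ∈ Γ) (coe_symm_toCarlitz_smul hψ f (toCarlitz Fq x)))

theorem carlitzSubmodule_le_invariants (hψ : IsCarlitz ψ) (hΓA : ∀ f : Fq[X], ∀ x ∈ Γ, ψ f x ∈ Γ)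
    (hΓk : ∀ x ∈ Γ, x ∈ Set.range (algebraMap (RatFunc Fq) kbar)) :
    carlitzSubmodule hψ E Γ hΓA ≤ (galRep Fq E (RatFunc Fq)).invariants := by
  refine (toCarlitz Fq).surjective.forall.2 fun x hx σ ↦ ?_
  obtain ⟨r, hr⟩ := hΓk _ hx
  obtain rfl : algebraMap (RatFunc Fq) E r = x := Subtype.ext hr
  rw [galRep_toCarlitz, σ.commutes]

theorem carlitzSubmodule_fg (hψ : IsCarlitz ψ) (hΓA : ∀ f : Fq[X], ∀ x ∈ Γ, ψ f x ∈ Γ)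
    (hΓE : ∀ x ∈ Γ, x ∈ E)
    (hΓfg : ∃ (n : ℕ) (a : Fin n → kbar), (∀ i, a i ∈ Γ) ∧
      ∀ x ∈ Γ, ∃ g : Fin n → Fq[X], x = ∑ i, ψ (g i) (a i)) :
    (carlitzSubmodule hψ E Γ hΓA).FG := by
  obtain ⟨n, a, ha, hspan⟩ := hΓfg
  let b (i : Fin n) : CarlitzModule Fq E := toCarlitz Fq ⟨a i, hΓE _ (ha i)⟩
  refine Submodule.fg_def.2 ⟨Set.range b, Set.finite_range b, le_antisymm ?_ fun x hx ↦ ?_⟩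
  · exact Submodule.span_le.2 (Set.range_subset_iff.2 ha)
  · obtain ⟨g, hg⟩ := hspan _ hx
    refine (Submodule.mem_span_range_iff_exists_fun _).2 ⟨g, ?_⟩
    refine (toCarlitz Fq).symm.injective (Subtype.ext (Eq.trans ?_ hg.symm))
    simp only [map_sum, AddSubmonoidClass.coe_finsetSum, coe_symm_toCarlitz_smul hψ, b,
      LinearEquiv.symm_apply_apply]

theorem isGalois_of_eq_adjoin_carlitz_mem (hψ : IsCarlitz ψ) (hM : M ≠ 0)
    (hΓk : ∀ x ∈ Γ, x ∈ Set.range (algebraMap (RatFunc Fq) kbar))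
    (hE : E = adjoin (RatFunc Fq) {x | ψ M x ∈ Γ}) : IsGalois (RatFunc Fq) E := by
  simp only [isCarlitz_apply hψ] at hE
  exact isGalois_of_eq_adjoin_aeval_carlitz_mem hM hΓk hE

theorem exists_coe_carlitz_eq (hψ : IsCarlitz ψ) (hM : M ≠ 0)
    (hE : E = adjoin (RatFunc Fq) {x | ψ M x ∈ Γ}) {a : kbar} (ha : a ∈ Γ) :
    ∃ α : E, ψ M (α : kbar) = a := by
  obtain ⟨α, hα⟩ := exists_aeval_carlitz_eq hM a
  rw [← isCarlitz_apply hψ] at hα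
  exact ⟨⟨α, mem_of_eq_adjoin_setOf hE (hα ▸ ha)⟩, hα⟩

theorem exists_mem_carlitz_eq_of_apply_eq_self [IsGalois (RatFunc Fq) E] (hψ : IsCarlitz ψ)
    (hM : M ≠ 0) (hq : ¬ (Fintype.card Fq = 2 ∧ (X ∣ M ∨ X + 1 ∣ M)))
    (hΓk : ∀ x ∈ Γ, x ∈ Set.range (algebraMap (RatFunc Fq) kbar))
    (hΓA : ∀ f : Fq[X], ∀ x ∈ Γ, ψ f x ∈ Γ) {e : Fq[X]}
    (heΓ : ∀ x : kbar, x ∈ Set.range (algebraMap (RatFunc Fq) kbar) → ψ M x ∈ Γ → ψ e x ∈ Γ)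
    (heM : IsCoprime e M) {x : E}
    (hx : ψ M (x : kbar) ∈ Γ) (hfix : ∀ σ, FixesTorsion ψ M σ → σ x = x) :
    ∃ γ ∈ Γ, ψ M γ = ψ M (x : kbar) := by
  have he : ∀ y ∈ (galRep Fq E (RatFunc Fq)).invariants,
      M • y ∈ carlitzSubmodule hψ E Γ hΓA → e • y ∈ carlitzSubmodule hψ E Γ hΓA := by
    refine (toCarlitz Fq).surjective.forall.2 fun y hy hMy ↦ ?_
    obtain ⟨r, rfl⟩ := toCarlitz_mem_invariants_iff.1 hy
    rw [smul_toCarlitz_mem_carlitzSubmodule_iff] at hMy ⊢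
    exact heΓ _ ⟨r, rfl⟩ hMy
  have hfix' : ∀ σ ∈ torsionFixer (galRep Fq E (RatFunc Fq)) M,
      galRep Fq E (RatFunc Fq) σ (toCarlitz Fq x) = toCarlitz Fq x := fun σ hσ ↦ by
    rw [galRep_toCarlitz, hfix σ ((mem_torsionFixer_iff hψ).1 hσ)]
  obtain ⟨γ, hγ, hγx⟩ := exists_mem_smul_eq_of_apply_eq_self hM hq
    (carlitzSubmodule_le_invariants hψ hΓA hΓk) he heM
      ((smul_toCarlitz_mem_carlitzSubmodule_iff hψ hΓA).2 hx) hfix'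
  refine ⟨_, hγ, ?_⟩
  rw [← coe_symm_toCarlitz_smul hψ, hγx, coe_symm_toCarlitz_smul hψ, LinearEquiv.symm_apply_apply]

theorem exists_mem_carlitz_eq_of_mem_torsionField (hψ : IsCarlitz ψ) (hM : M ≠ 0)
    (hq : ¬ (Fintype.card Fq = 2 ∧ (X ∣ M ∨ X + 1 ∣ M)))
    (hΓk : ∀ x ∈ Γ, x ∈ Set.range (algebraMap (RatFunc Fq) kbar))
    (hΓA : ∀ f : Fq[X], ∀ x ∈ Γ, ψ f x ∈ Γ) {e : Fq[X]}
    (heΓ : ∀ x : kbar, x ∈ Set.range (algebraMap (RatFunc Fq) kbar) → ψ M x ∈ Γ → ψ e x ∈ Γ)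
    (heM : IsCoprime e M) {β : kbar}
    (hβ : β ∈ adjoin (RatFunc Fq) {x | ψ M x = 0}) (hβΓ : ψ M β ∈ Γ) :
    ∃ γ ∈ Γ, ψ M γ = ψ M β := by
  have := isGalois_of_eq_adjoin_carlitz_mem hψ hM hΓk rfl
  have torsion_subset : {x | ψ M x = 0} ⊆
      (adjoin (RatFunc Fq) {x | ψ M x ∈ Γ} : Set kbar) :=
    fun x (hx : ψ M x = 0) ↦ mem_of_eq_adjoin_setOf rfl (hx ▸ Γ.zero_mem)
  exact exists_mem_carlitz_eq_of_apply_eq_self (x := ⟨β, mem_of_eq_adjoin_setOf rfl hβΓ⟩)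
    hψ hM hq hΓk hΓA heΓ heM hβΓ fun σ hσ ↦
      apply_eq_self_of_mem_adjoin torsion_subset σ.toAlgHom hσ hβ

theorem kummerPairing_carlitzSubmodule_injective (hψ : IsCarlitz ψ)
    (hΓA : ∀ f : Fq[X], ∀ x ∈ Γ, ψ f x ∈ Γ)
    (hΓ : carlitzSubmodule hψ E Γ hΓA ≤ (galRep Fq E (RatFunc Fq)).invariants)
    (hE : E = adjoin (RatFunc Fq) {x | ψ M x ∈ Γ}) :
    Function.Injective (kummerPairing M hΓ) := by
  refine (injective_iff_map_eq_zero _).2 fun σ hσ ↦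
    Additive.toMul.injective (Subtype.ext (eq_one_of_eq_adjoin hE fun x hx ↦ ?_))
  have hx' := (smul_toCarlitz_mem_carlitzSubmodule_iff hψ hΓA).2 hx
  exact (toCarlitz Fq).injective (sub_eq_zero.1 (LinearMap.congr_fun hσ ⟨_, hx'⟩))

theorem apply_eq_conj_mul_conj_of_isDecompConjAction
    {c : Fq[X] → Gal(E/RatFunc Fq) → Gal(E/RatFunc Fq)}
    (hc : IsDecompConjAction ψ M c) {τ s₁ s₂ : Gal(E/RatFunc Fq)} (hτ : FixesTorsion ψ M τ)
    {B₁ B₂ : Fq[X]} (hB₁ : IsCoprime B₁ M) (hB₂ : IsCoprime B₂ M) (hs₁ : ExtendsSigma ψ M s₁ B₁)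
    (hs₂ : ExtendsSigma ψ M s₂ B₂) :
    c (B₁ + B₂) τ = s₁ * τ * s₁⁻¹ * (s₂ * τ * s₂⁻¹) := by
  have h := hc (B₁ + B₂) τ hτ 2 ![B₁, B₂] (Fin.forall_fin_two.2 ⟨hB₁, hB₂⟩)
    (by simp [Fin.sum_univ_two]) ![s₁, s₂] (Fin.forall_fin_two.2 ⟨hs₁, hs₂⟩)
  rw [h, List.ofFn_succ, List.ofFn_succ, List.ofFn_zero, List.prod_cons, List.prod_singleton]
  rfl

theorem kummerPairing_decompConjAction [IsGalois (RatFunc Fq) E] (hψ : IsCarlitz ψ)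
    (hM : M ≠ 0) (hq : ¬ (Fintype.card Fq = 2 ∧ (X ∣ M ∨ X + 1 ∣ M)))
    {Γ : Submodule Fq[X] (CarlitzModule Fq E)} (hΓ : Γ ≤ (galRep Fq E (RatFunc Fq)).invariants)
    {c : Fq[X] → Gal(E/RatFunc Fq) → Gal(E/RatFunc Fq)} (hc : IsDecompConjAction ψ M c)
    (f : Fq[X]) (τ : torsionFixer (galRep Fq E (RatFunc Fq)) M)
    (hcτ : c f τ ∈ torsionFixer (galRep Fq E (RatFunc Fq)) M) :
    kummerPairing M hΓ (.ofMul ⟨c f τ, hcτ⟩) = f • kummerPairing M hΓ (.ofMul τ) := by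
  obtain ⟨B, hB, hB'⟩ := exists_isCoprime_isCoprime_sub_one hq
  obtain ⟨B₁, B₂, hB₁, hB₂, rfl⟩ := exists_isCoprime_isCoprime_add_eq hM hB hB' f
  obtain ⟨s₁, hs₁⟩ := exists_galRep_eq_smul (Ω := E) (RatFunc Fq) hM hB₁
  obtain ⟨s₂, hs₂⟩ := exists_galRep_eq_smul (Ω := E) (RatFunc Fq) hM hB₂
  exact kummerPairing_conj_mul_conj hΓ hs₁ hs₂ <| apply_eq_conj_mul_conj_of_isDecompConjAction hc
    ((mem_torsionFixer_iff hψ).1 τ.2) hB₁ hB₂ ((extendsSigma_iff hψ).2 hs₁)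
      ((extendsSigma_iff hψ).2 hs₂)

theorem coe_apply_sub_self_eq_of_carlitz_eq {σ : Gal(E/RatFunc Fq)} (hσ : FixesTorsion ψ M σ)
    {α β : E} (h : ψ M (α : kbar) = ψ M β) : σ α - α = σ β - β := by
  have hαβ : ψ M ((α - β : E) : kbar) = 0 := by
    rw [AddSubgroupClass.coe_sub, map_sub, h, sub_self]
  have := hσ _ hαβ
  rw [map_sub] at this
  rwa [sub_eq_sub_iff_sub_eq_sub]

theorem exists_forall_eq_coe_apply_sub_self [IsGalois (RatFunc Fq) E] (hψ : IsCarlitz ψ)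
    (hM : M ≠ 0) (hq : ¬ (Fintype.card Fq = 2 ∧ (X ∣ M ∨ X + 1 ∣ M)))
    (hΓk : ∀ x ∈ Γ, x ∈ Set.range (algebraMap (RatFunc Fq) kbar))
    (hΓA : ∀ f : Fq[X], ∀ x ∈ Γ, ψ f x ∈ Γ)
    (hΓfg : ∃ (n : ℕ) (a : Fin n → kbar), (∀ i, a i ∈ Γ) ∧
      ∀ x ∈ Γ, ∃ g : Fin n → Fq[X], x = ∑ i, ψ (g i) (a i))
    (hE : E = adjoin (RatFunc Fq) {x | ψ M x ∈ Γ})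
    {c : Fq[X] → Gal(E/RatFunc Fq) → Gal(E/RatFunc Fq)} (hc : IsDecompConjAction ψ M c)
    (hcH : ∀ f τ, FixesTorsion ψ M τ → FixesTorsion ψ M (c f τ))
    {t : Gal(E/RatFunc Fq) → kbar} (htM : ∀ σ, FixesTorsion ψ M σ → ψ M (t σ) = 0)
    (ht : ∀ σ τ, FixesTorsion ψ M σ → FixesTorsion ψ M τ → t (σ * τ) = t σ + t τ)
    (htc : ∀ f σ, FixesTorsion ψ M σ → t (c f σ) = ψ f (t σ)) :
    ∃ α : E, ψ M (α : kbar) ∈ Γ ∧ ∀ σ, FixesTorsion ψ M σ → t σ = (σ α : kbar) - α := by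
  have := finite_quotient_span_singleton hM
  have mem_H_iff {σ} := mem_torsionFixer_iff (M := M) (E := E) hψ (σ := σ)
  have hΓ := carlitzSubmodule_le_invariants (E := E) hψ hΓA hΓk
  have hΓE (x) (hx : x ∈ Γ) : x ∈ E := by
    obtain ⟨r, rfl⟩ := hΓk x hx
    exact E.algebraMap_mem r
  have htE {σ} (hσ : FixesTorsion ψ M σ) : t σ ∈ E :=
    mem_of_eq_adjoin_setOf hE (htM σ hσ ▸ Γ.zero_mem)
  let t' : Additive (torsionFixer (galRep Fq E (RatFunc Fq)) M) →+ CarlitzModule Fq E :=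
    .mk' (fun σ ↦ toCarlitz Fq ⟨t σ.toMul, htE (mem_H_iff.1 σ.toMul.2)⟩) fun σ τ ↦
      Subtype.ext (ht _ _ (mem_H_iff.1 σ.toMul.2) (mem_H_iff.1 τ.toMul.2))
  let c' (f : Fq[X]) (σ : Additive (torsionFixer (galRep Fq E (RatFunc Fq)) M)) :
      Additive (torsionFixer (galRep Fq E (RatFunc Fq)) M) :=
    .ofMul ⟨c f σ.toMul, mem_H_iff.2 (hcH f _ (mem_H_iff.1 σ.toMul.2))⟩
  have ht' (f σ) : t' (c' f σ) = f • t' σ :=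
    (toCarlitz Fq).symm.injective <| Subtype.ext <| (htc f _ (mem_H_iff.1 σ.toMul.2)).trans <|
      (coe_symm_toCarlitz_smul hψ f (t' σ)).symm
  obtain ⟨⟨α, hα⟩, hαt⟩ := torsionBounded_carlitzModule.exists_eq_kummerPairing hΓ
    (carlitzSubmodule_fg hψ hΓA hΓE hΓfg) (kummerPairing_carlitzSubmodule_injective hψ hΓA hΓ hE)
    c' (fun f σ ↦ kummerPairing_decompConjAction hψ hM hq hΓ hc f σ.toMul _) t' ht'
  exact ⟨(toCarlitz Fq).symm α, (smul_toCarlitz_mem_carlitzSubmodule_iff hψ hΓA).1 hα,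
    fun σ hσ ↦ congrArg Subtype.val (hαt (.ofMul ⟨σ, mem_H_iff.2 hσ⟩))⟩

end GaloisGroup

end CarlitzKummer

open CarlitzKummer

/-- **Corollary 2.10.**
Suppose `q ≠ 2`, or `q = 2` and `T ∤ M` and `(T+1) ∤ M`.  If
`e_M(Γ) = gcd(e(Γ'/Γ), M) = 1`, then `Γ^M = Γ ∩ K^M = Γ ∩ k^M`, the pairing
`H_Γ(M) × Γ/Γ^M → Λ_M`, `(σ, a) ↦ ⟨σ, a⟩ = σα - α` (`α^M = a`) is nondegenerate, and
the induced map `φ : Γ/Γ^M → Hom_A(H_Γ(M), Λ_M)` is an `A`-module (equivalently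
`A/(M)`-module) isomorphism. -/
theorem carlitz_kummer_pairing_nondegenerate
    {Fq : Type} [Field Fq] [Fintype Fq]
    (ψ : Polynomial Fq →+* AddMonoid.End (AlgebraicClosure (RatFunc Fq)))
    (hψ : IsCarlitz ψ)
    (M : Polynomial Fq) (hM : 0 < M.natDegree)
    (hq : ¬ (Fintype.card Fq = 2 ∧ (X ∣ M ∨ X + 1 ∣ M)))
    -- Γ : a finitely generated A-submodule of (k, +)
    (Γ : AddSubgroup (AlgebraicClosure (RatFunc Fq)))
    (hΓk : ∀ x ∈ Γ, x ∈ Set.range (algebraMap (RatFunc Fq) (AlgebraicClosure (RatFunc Fq))))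
    (hΓA : ∀ (f : Polynomial Fq), ∀ x ∈ Γ, ψ f x ∈ Γ)
    (hΓfg : ∃ (n : ℕ) (a : Fin n → AlgebraicClosure (RatFunc Fq)), (∀ i, a i ∈ Γ) ∧
      ∀ x ∈ Γ, ∃ g : Fin n → Polynomial Fq, x = ∑ i, ψ (g i) (a i))
    -- K = k(Λ_M) and k_{M,Γ} = k(Λ_M, (1/M)Γ)
    (K : IntermediateField (RatFunc Fq) (AlgebraicClosure (RatFunc Fq)))
    (hK : K = adjoin (RatFunc Fq) {x | ψ M x = 0})
    (E : IntermediateField (RatFunc Fq) (AlgebraicClosure (RatFunc Fq)))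
    (hE : E = adjoin (RatFunc Fq) {x | ψ M x ∈ Γ})
    -- e = e(Γ'/Γ) : the exponent of Γ' = (1/M)Γ ∩ k over Γ
    (e : Polynomial Fq) (he : e.Monic)
    (heΓ : ∀ x : AlgebraicClosure (RatFunc Fq),
      x ∈ Set.range (algebraMap (RatFunc Fq) (AlgebraicClosure (RatFunc Fq))) →
      ψ M x ∈ Γ → ψ e x ∈ Γ)
    (hemin : ∀ e' : Polynomial Fq, e'.Monic →
      (∀ x : AlgebraicClosure (RatFunc Fq),
        x ∈ Set.range (algebraMap (RatFunc Fq) (AlgebraicClosure (RatFunc Fq))) →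
        ψ M x ∈ Γ → ψ e' x ∈ Γ) →
      e.degree ≤ e'.degree)
    -- e_M(Γ) = gcd(e(Γ'/Γ), M) = 1
    (hcop : IsCoprime e M)
    -- the natural A-module structure on H_Γ(M) = Gal(k_{M,Γ}/K)
    (c : Polynomial Fq → (↥E ≃ₐ[RatFunc Fq] ↥E) → (↥E ≃ₐ[RatFunc Fq] ↥E))
    (hc : IsDecompConjAction ψ M c)
    (hcH : ∀ f τ, FixesTorsion ψ M τ → FixesTorsion ψ M (c f τ)) :
    -- (1) Γ^M = Γ ∩ K^M = Γ ∩ k^M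
    (∀ a ∈ Γ,
      ((∃ γ ∈ Γ, ψ M γ = a) ↔
        (∃ β : AlgebraicClosure (RatFunc Fq), β ∈ K ∧ ψ M β = a)) ∧
      ((∃ γ ∈ Γ, ψ M γ = a) ↔
        (∃ β ∈ Set.range (algebraMap (RatFunc Fq) (AlgebraicClosure (RatFunc Fq))),
          ψ M β = a))) ∧
    -- (2) the pairing H_Γ(M) × Γ/Γ^M → Λ_M is nondegenerate:
    --   left kernel trivial
    (∀ σ : ↥E ≃ₐ[RatFunc Fq] ↥E, FixesTorsion ψ M σ →
      (∀ a ∈ Γ, ∀ α : ↥E, ψ M (α : AlgebraicClosure (RatFunc Fq)) = a → σ α = α) →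
      σ = 1) ∧
    --   right kernel is Γ^M
    (∀ a ∈ Γ,
      (∀ σ : ↥E ≃ₐ[RatFunc Fq] ↥E, FixesTorsion ψ M σ →
        ∀ α : ↥E, ψ M (α : AlgebraicClosure (RatFunc Fq)) = a → σ α = α) →
      ∃ γ ∈ Γ, ψ M γ = a) ∧
    -- (3) φ : Γ/Γ^M → Hom_A(H_Γ(M), Λ_M) is surjective (together with (2) it is an
    -- A-module isomorphism): every A-homomorphism t : H_Γ(M) → Λ_M equals φ_a for
    -- some a ∈ Γ
    (∀ t : (↥E ≃ₐ[RatFunc Fq] ↥E) → AlgebraicClosure (RatFunc Fq),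
      (∀ σ, FixesTorsion ψ M σ → ψ M (t σ) = 0) →
      (∀ σ τ, FixesTorsion ψ M σ → FixesTorsion ψ M τ → t (σ * τ) = t σ + t τ) →
      (∀ f σ, FixesTorsion ψ M σ → t (c f σ) = ψ f (t σ)) →
      ∃ a ∈ Γ, ∀ σ, FixesTorsion ψ M σ →
        ∀ α : ↥E, ψ M (α : AlgebraicClosure (RatFunc Fq)) = a →
          t σ = (σ α : AlgebraicClosure (RatFunc Fq))
              - (α : AlgebraicClosure (RatFunc Fq))) := by
  have hM₀ : M ≠ 0 := ne_zero_of_natDegree_gt hM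
  have := isGalois_of_eq_adjoin_carlitz_mem hψ hM₀ hΓk hE
  have of_mem_K {β} (hβ : β ∈ K) (hΓβ : ψ M β ∈ Γ) : ∃ γ ∈ Γ, ψ M γ = ψ M β :=
    exists_mem_carlitz_eq_of_mem_torsionField hψ hM₀ hq hΓk hΓA heΓ hcop (hK ▸ hβ) hΓβ
  refine ⟨fun a ha ↦ ⟨⟨?_, ?_⟩, ?_, ?_⟩, ?_, fun a ha hfix ↦ ?_, fun t htM ht htc ↦ ?_⟩
  · rintro ⟨γ, hγ, hγa⟩
    obtain ⟨r, rfl⟩ := hΓk γ hγ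
    exact ⟨_, K.algebraMap_mem r, hγa⟩
  · rintro ⟨β, hβ, rfl⟩
    exact of_mem_K hβ ha
  · exact fun ⟨γ, hγ, hγa⟩ ↦ ⟨γ, hΓk γ hγ, hγa⟩
  · rintro ⟨_, ⟨r, rfl⟩, rfl⟩
    exact of_mem_K (K.algebraMap_mem r) ha
  · exact fun σ _ hfix ↦ eq_one_of_eq_adjoin hE fun α hα ↦ hfix _ hα α rfl
  · obtain ⟨α, rfl⟩ := exists_coe_carlitz_eq hψ hM₀ hE ha
    exact exists_mem_carlitz_eq_of_apply_eq_self hψ hM₀ hq hΓk hΓA heΓ hcop ha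
      fun σ hσ ↦ hfix σ hσ α rfl
  · obtain ⟨α, hα, hαt⟩ :=
      exists_forall_eq_coe_apply_sub_self hψ hM₀ hq hΓk hΓA hΓfg hE hc hcH htM ht htc
    exact ⟨_, hα, fun σ hσ β hβ ↦ (hαt σ hσ).trans
      (congrArg Subtype.val (coe_apply_sub_self_eq_of_carlitz_eq hσ hβ.symm))⟩
end

section
/- Suppose q ≠ 2, or q = 2 and T ∤ M and (T+1) ∤ M. If e_M(Γ) = 1 and Γ is a free A-module of rank r with basis {a_1, …, a_r}, and φ_i : H_Γ(M) → Λ_M is defined by φ_i(σ) = σα_i − α_i where α_i^M = a_i, then the map H_Γ(M) → Λ_M × ⋯ × Λ_M (r copies) given by σ ↦ (φ_1(σ), …, φ_r(σ)) is an A-module (equivalently A/(M)-module) isomorphism. -/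
open Polynomial IntermediateField

set_option synthInstance.maxHeartbeats 1000000
set_option maxHeartbeats 1000000

/-!
Frobenius elements realise every unit `B` modulo `M` by some `σ_B ∈ Gal(E/k)` acting on `Λ_M` as
`B`, first for `B` a prime not dividing `M` and then multiplicatively. The condition on `q` provides
`v` such that `v` and `v - 1` are both units modulo `M`, which is used twice.

First, every scalar is then a sum of two units modulo `M`, so the image of the Kummer map is an
`A`-submodule of `Λ_M ^ r ≃ (A/M) ^ r`. If it is proper, it is annihilated by a linear form
`∑ g_i x_i` with some `g_i` not divisible by `M`; in other words `β = ∑ α_i ^ g_i` is fixed by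
`Gal(E/K)`. Second, since `v - 1` acts invertibly on `Λ_M`, the cocycle `σ ↦ σ β - β` with values in
`Λ_M` is a coboundary (Sah's argument with `σ_v`, which is central modulo `Gal(E/K)`): `β - l` lies
in `k` for some `l ∈ Λ_M`. Hence `∑ a_i ^ g_i = (β - l) ^ M` with `β - l ∈ Γ'`, and `e_M(Γ) = 1`
puts `β - l` in `Γ`. Freeness of `Γ` then forces `M ∣ g_i` for all `i`, a contradiction.
-/

namespace Carlitz

section CoprimeValues

lemma exists_isCoprime_eval {R : Type*} [CommRing R] [IsDedekindDomain R] {M : R} (hM : M ≠ 0)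
    (h : R[X]) (hloc : ∀ 𝔪 : Ideal R, 𝔪.IsMaximal → M ∈ 𝔪 → ∃ u, h.eval u ∉ 𝔪) :
    ∃ u, IsCoprime (h.eval u) M := by
  have hspan : Ideal.span {M} ≠ ⊥ := by rwa [Ne, Ideal.span_singleton_eq_bot]
  let s := {v : IsDedekindDomain.HeightOneSpectrum R | v.asIdeal ∣ Ideal.span {M}}
  have : Finite s := (Ideal.finite_factors hspan).to_subtype
  have hmem (v : s) : M ∈ v.1.asIdeal := by
    rw [← Ideal.span_singleton_le_iff_mem]; exact Ideal.le_of_dvd v.2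
  choose x hx using fun v : s ↦ hloc v.1.asIdeal v.1.isMaximal (hmem v)
  obtain ⟨u, hu⟩ := Ideal.exists_forall_sub_mem_ideal (I := fun v : s ↦ v.1.asIdeal)
    (fun v w hvw ↦ Ideal.isCoprime_iff_sup_eq.mpr <| v.1.isMaximal.coprime_of_ne w.1.isMaximal
      fun h ↦ hvw (Subtype.ext (IsDedekindDomain.HeightOneSpectrum.ext h))) x
  refine ⟨u, Ideal.isCoprime_span_singleton_iff _ _ |>.mp <| Ideal.isCoprime_iff_sup_eq.mpr <|
    by_contra fun hne ↦ ?_⟩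
  obtain ⟨𝔪, h𝔪, hle⟩ := Ideal.exists_le_maximal _ hne
  have hle' := sup_le_iff.mp hle
  let v : s := ⟨⟨𝔪, h𝔪.isPrime, ne_bot_of_le_ne_bot hspan hle'.2⟩, Ideal.dvd_iff_le.mpr hle'.2⟩
  have hsub : h.eval u - h.eval (x v) ∈ 𝔪 :=
    𝔪.mem_of_dvd (sub_dvd_eval_sub u (x v) h) (hu v)
  have heval : h.eval u ∈ 𝔪 := (Ideal.span_singleton_le_iff_mem _).mp hle'.1
  exact hx v (by simpa using sub_mem heval hsub)

lemma exists_isCoprime_isCoprime_sub {R : Type*} [CommRing R] [IsDedekindDomain R] {M : R}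
    (hM : M ≠ 0) (hv : ∃ v, IsCoprime v M ∧ IsCoprime (v - 1) M) (f : R) :
    ∃ u, IsCoprime u M ∧ IsCoprime (f - u) M := by
  obtain ⟨v, hvM, hv1M⟩ := hv
  have hnotMem {𝔪 : Ideal R} (h𝔪 : 𝔪.IsMaximal) (hM𝔪 : M ∈ 𝔪) {x : R} (hx : IsCoprime x M) :
      x ∉ 𝔪 := fun hx𝔪 ↦ by
    obtain ⟨a, b, hab⟩ := hx
    exact h𝔪.ne_top ((Ideal.eq_top_iff_one _).mpr
      (hab ▸ add_mem (𝔪.mul_mem_left a hx𝔪) (𝔪.mul_mem_left b hM𝔪)))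
  -- Modulo a prime dividing `M`, both `1` and `v` are units, and at most one of them equals `f`.
  obtain ⟨u, hu⟩ := exists_isCoprime_eval hM (X * (C f - X)) fun 𝔪 h𝔪 hM𝔪 ↦ by
    by_cases hf : f - 1 ∈ 𝔪
    · refine ⟨v, fun h ↦ ?_⟩
      rw [eval_mul, eval_sub, eval_X, eval_C] at h
      refine (h𝔪.isPrime.mem_or_mem h).elim (hnotMem h𝔪 hM𝔪 hvM) fun hfv ↦ ?_
      exact hnotMem h𝔪 hM𝔪 hv1M (by simpa using sub_mem hf hfv)
    · exact ⟨1, by simpa using hf⟩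
  rw [eval_mul, eval_sub, eval_X, eval_C] at hu
  exact ⟨u, hu.of_mul_left_left, hu.of_mul_left_right⟩

lemma exists_isCoprime_isCoprime_sub_one {F : Type*} [Field F] [Fintype F] {M : F[X]}
    (hq : ¬ (Fintype.card F = 2 ∧ (X ∣ M ∨ X + 1 ∣ M))) :
    ∃ v, IsCoprime v M ∧ IsCoprime (v - 1) M := by
  classical
  by_cases h2 : Fintype.card F = 2
  · obtain ⟨hX, hX1⟩ := not_or.mp fun h ↦ hq ⟨h2, h⟩
    have : CharP F 2 := charP_of_card_eq_prime h2
    have hirr : Irreducible (X - 1 : F[X]) := C_1 (R := F) ▸ irreducible_X_sub_C 1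
    refine ⟨X, irreducible_X.coprime_iff_not_dvd.mpr hX, hirr.coprime_iff_not_dvd.mpr ?_⟩
    rwa [CharTwo.sub_eq_add]
  · have hcard : ({0, 1} : Finset F).card < Fintype.card F := by
      rw [Finset.card_pair zero_ne_one]
      have := Fintype.one_lt_card (α := F)
      lia
    obtain ⟨c, hc⟩ := Finset.exists_mem_notMem_of_card_lt_card hcard
    simp only [Finset.mem_univ, Finset.mem_insert, Finset.mem_singleton, true_and, not_or] at hc
    have hunit {d : F} (hd : d ≠ 0) : IsCoprime (C d) M :=
      isCoprime_one_left.of_isCoprime_of_dvd_left (hd.isUnit.map C).dvd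
    exact ⟨C c, hunit hc.1, by rw [← C_1, ← C_sub]; exact hunit (sub_ne_zero.mpr hc.2)⟩

end CoprimeValues

section Duality

variable {R : Type*} [CommRing R] [IsDomain R] [IsPrincipalIdealRing R]

lemma submodule_eq_top_of_forall_dvd {V : Type*} [AddCommGroup V] [Module R V] [Module.Finite R V]
    [Module.Projective R V] {W : Submodule R V} {M : R} (hM : M ≠ 0) (hMW : ∀ v, M • v ∈ W)
    (h : ∀ φ : V →ₗ[R] R, (∀ w ∈ W, M ∣ φ w) → ∀ v, M ∣ φ v) : W = ⊤ := by
  -- The projection to a simple quotient `V ⧸ N ≃ R ⧸ (P)` lifts to a form `φ₀`, and `(M / P) • φ₀`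
  -- is then divisible by `M` exactly on `N`.
  refine (eq_top_or_exists_le_coatom W).resolve_right ?_
  rintro ⟨N, hN, hWN⟩
  have : IsSimpleModule R (V ⧸ N) := isSimpleModule_iff_isCoatom.mpr hN
  obtain ⟨I, hI, ⟨e⟩⟩ := isSimpleModule_iff_quot_maximal.mp this
  obtain ⟨P, rfl⟩ := (IsPrincipalIdealRing.principal I).principal
  let φ : V →ₗ[R] R ⧸ Ideal.span {P} := e.toLinearMap ∘ₗ N.mkQ
  have hφ : Function.Surjective φ := e.surjective.comp N.mkQ_surjective
  have hφN {w : V} (hw : w ∈ N) : φ w = 0 := by simp [φ, (Submodule.Quotient.mk_eq_zero N).mpr hw]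
  obtain ⟨φ₀, hφ₀⟩ := Module.projective_lifting_property (Submodule.mkQ (Ideal.span {P})) φ
    (Submodule.mkQ_surjective _)
  have hP (v : V) : φ v = 0 ↔ P ∣ φ₀ v := by
    rw [← hφ₀, ← Ideal.mem_span_singleton]; exact Submodule.Quotient.mk_eq_zero _
  have hPM : P ∣ M := by
    obtain ⟨v, hv⟩ := hφ (Ideal.Quotient.mk _ 1)
    rw [← Ideal.mem_span_singleton, ← Ideal.Quotient.eq_zero_iff_mem, ← hφN (hWN (hMW v)),
      map_smul, hv]
    exact (congrArg (Ideal.Quotient.mk _) (mul_one M)).symm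
  obtain ⟨D, rfl⟩ := hPM
  have hD : D ≠ 0 := right_ne_zero_of_mul hM
  have hdvd (v : V) : P * D ∣ (D • φ₀) v ↔ P ∣ φ₀ v := by
    rw [LinearMap.smul_apply, smul_eq_mul, mul_comm D, mul_dvd_mul_iff_right hD]
  have hzero (v : V) : φ v = 0 :=
    (hP v).mpr <| (hdvd v).mp <| h _ (fun w hw ↦ (hdvd w).mpr ((hP w).mp (hφN (hWN hw)))) v
  obtain ⟨v, hv⟩ := hφ 1
  exact one_ne_zero (hv.symm.trans (hzero v))

lemma pi_submodule_eq_top_of_forall_dvd {Λ ι : Type*} [AddCommGroup Λ] [Module R Λ] [Fintype ι]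
    {M : R} (hM : M ≠ 0) {lam : Λ} (hker : (LinearMap.toSpanSingleton R Λ lam).ker = Ideal.span {M})
    (hsurj : Function.Surjective (LinearMap.toSpanSingleton R Λ lam)) (W : Submodule R (ι → Λ))
    (h : ∀ g : ι → R, (∀ w ∈ W, ∑ i, g i • w i = 0) → ∀ i, M ∣ g i) : W = ⊤ := by
  classical
  have hlam {f : R} : f • lam = 0 ↔ M ∣ f := by
    rw [← Ideal.mem_span_singleton, ← hker]; rfl
  let π := (LinearMap.toSpanSingleton R Λ lam).compLeft ι
  have hπ : Function.Surjective π := hsurj.comp_left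
  refine Submodule.comap_injective_of_surjective hπ ?_
  rw [Submodule.comap_top]
  refine submodule_eq_top_of_forall_dvd hM (fun f ↦ ?_) fun φ hφ ↦ ?_
  · have : π (M • f) = 0 := funext fun i ↦ hlam.mpr (dvd_mul_right M (f i))
    rw [Submodule.mem_comap, this]
    exact W.zero_mem
  · have hφ_eq (f : ι → R) : φ f = ∑ i, φ (Pi.single i 1) * f i := by
      rw [LinearMap.pi_apply_eq_sum_univ φ f]
      exact Finset.sum_congr rfl fun i _ ↦ by
        rw [smul_eq_mul, mul_comm]; congr! with j; simp [Pi.single_apply, eq_comm]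
    have hdvd := h (fun i ↦ φ (Pi.single i 1)) fun w hw ↦ by
      obtain ⟨f, rfl⟩ := hπ w
      calc ∑ i, φ (Pi.single i 1) • π f i = φ f • lam := by
            rw [hφ_eq f, Finset.sum_smul]; exact Finset.sum_congr rfl fun i _ ↦ smul_smul _ _ _
        _ = 0 := hlam.mpr (hφ f hw)
    intro f
    rw [hφ_eq]
    exact Finset.dvd_sum fun i _ ↦ (hdvd i).mul_right _

end Duality

section Index

lemma dvd_of_apply_eq_sum {R V ι : Type*} [CommRing R] [AddCommGroup V] [Fintype ι]
    {ψ : R →+* AddMonoid.End V} {Γ : AddSubgroup V} {a : ι → V} (haΓ : ∀ i, a i ∈ Γ)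
    (hΓ : ∀ f, ∀ x ∈ Γ, ψ f x ∈ Γ) (hgen : ∀ x ∈ Γ, ∃ g : ι → R, x = ∑ i, ψ (g i) (a i))
    (hind : ∀ g : ι → R, ∑ i, ψ (g i) (a i) = 0 → ∀ i, g i = 0) {e M : R} (heM : IsCoprime e M)
    {g : ι → R} {y : V} (hey : ψ e y ∈ Γ) (hMy : ψ M y = ∑ i, ψ (g i) (a i)) (i : ι) :
    M ∣ g i := by
  have hMy_mem : ψ M y ∈ Γ := hMy ▸ sum_mem fun i _ ↦ hΓ _ _ (haΓ i)
  obtain ⟨c, d, hcd⟩ := heM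
  have hy_mem : y ∈ Γ := by
    have h1 : ψ (c * e + d * M) y = y := by rw [hcd, map_one]; rfl
    rw [← h1, map_add, map_mul, map_mul]
    exact add_mem (hΓ c _ hey) (hΓ d _ hMy_mem)
  obtain ⟨h, rfl⟩ := hgen y hy_mem
  refine ⟨h i, sub_eq_zero.mp (hind (fun i ↦ g i - M * h i) ?_ i)⟩
  have hsub (i : ι) : ψ (g i - M * h i) (a i) = ψ (g i) (a i) - ψ M (ψ (h i) (a i)) := by
    rw [map_sub, map_mul]; rfl
  rw [map_sum] at hMy
  simp only [hsub, Finset.sum_sub_distrib, ← hMy, sub_self]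

end Index

section Galois

lemma isGalois_adjoin {K Ω : Type*} [Field K] [Field Ω] [Algebra K Ω] [Normal K Ω]
    {S : Set Ω} (hsep : ∀ x ∈ S, IsSeparable K x) (hS : ∀ σ : Ω →ₐ[K] Ω, Set.MapsTo σ S S) :
    IsGalois K (adjoin K S) where
  to_isSeparable := (isSeparable_adjoin_iff_isSeparable K Ω).mpr hsep
  to_normal := normal_iff_forall_map_le.mpr fun σ ↦ by
    rw [adjoin_map]
    exact adjoin.mono K _ _ (hS σ).image_subset

end Galois

section Action

variable {F : Type*} [Field F] [Fintype F]

lemma add_pow_card (R : Type*) [CommRing R] [Algebra F[X] R] (x y : R) :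
    (x + y) ^ Fintype.card F = x ^ Fintype.card F + y ^ Fintype.card F := by
  let : Algebra F R := ((algebraMap F[X] R).comp C).toAlgebra
  exact map_add (FiniteField.frobeniusAlgHom F R) x y

variable (R : Type*) [CommRing R] [Algebra F[X] R]

/-- The additive operator `x ↦ T x + x ^ q` on an `𝔽_q[T]`-algebra, through which `T` acts in the
Carlitz module. -/
noncomputable def carlitzT : AddMonoid.End R where
  toFun x := algebraMap F[X] R X * x + x ^ Fintype.card F
  map_zero' := by simp
  map_add' x y := by rw [add_pow_card (F := F)]; ring

lemma commute_C_carlitzT (c : F) :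
    Commute ((Module.toAddMonoidEnd F[X] R).comp C c) (carlitzT (F := F) R) := by
  ext x
  have hc : algebraMap F[X] R (C c) ^ Fintype.card F = algebraMap F[X] R (C c) := by
    rw [← map_pow, ← C_pow, FiniteField.pow_card]
  change C c • (_ * x + _) = _ * C c • x + (C c • x) ^ _
  simp only [Algebra.smul_def, mul_pow, hc]
  ring

/-- The Carlitz module structure on a commutative `𝔽_q[T]`-algebra `R`: the ring homomorphism
`𝔽_q[T] → End (R, +)` sending `T` to `x ↦ T x + x ^ q` and a constant `c` to `x ↦ c x`. -/
noncomputable def carlitz : F[X] →+* AddMonoid.End R :=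
  eval₂RingHom' ((Module.toAddMonoidEnd F[X] R).comp C) (carlitzT R) (commute_C_carlitzT R)

variable {R}

lemma carlitz_X_apply (x : R) :
    carlitz R (X : F[X]) x = algebraMap F[X] R X * x + x ^ Fintype.card F := by
  simp only [carlitz, eval₂RingHom', RingHom.coe_mk, MonoidHom.coe_mk, OneHom.coe_mk, eval₂_X]
  rfl

lemma carlitz_C_apply (c : F) (x : R) : carlitz R (C c) x = algebraMap F[X] R (C c) * x := by
  simp only [carlitz, eval₂RingHom', RingHom.coe_mk, MonoidHom.coe_mk, OneHom.coe_mk, eval₂_C]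
  exact Algebra.smul_def _ _

lemma carlitz_mul_apply (M N : F[X]) (x : R) : carlitz R (M * N) x = carlitz R M (carlitz R N x) :=
  DFunLike.congr_fun (map_mul (carlitz R) M N) x

lemma carlitz_add_apply (M N : F[X]) (x : R) :
    carlitz R (M + N) x = carlitz R M x + carlitz R N x :=
  DFunLike.congr_fun (map_add (carlitz R) M N) x

lemma carlitz_one_apply (x : R) : carlitz R (1 : F[X]) x = x :=
  DFunLike.congr_fun (map_one (carlitz R)) x

lemma carlitz_comm (M N : F[X]) (x : R) :
    carlitz R M (carlitz R N x) = carlitz R N (carlitz R M x) := by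
  rw [← carlitz_mul_apply, mul_comm, carlitz_mul_apply]

lemma map_carlitz {R' H : Type*} [CommRing R'] [Algebra F[X] R'] [FunLike H R R']
    [AlgHomClass H F[X] R R'] (φ : H) (N : F[X]) (x : R) :
    φ (carlitz R N x) = carlitz R' N (φ x) := by
  have hX (x : R) : φ (carlitz R (X : F[X]) x) = carlitz R' (X : F[X]) (φ x) := by
    rw [carlitz_X_apply, carlitz_X_apply, map_add, map_mul, map_pow,
      AlgHomClass.commutes φ]
  induction N using Polynomial.induction_on generalizing x with
  | C c => rw [carlitz_C_apply, carlitz_C_apply, map_mul, AlgHomClass.commutes]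
  | add M N hM hN => rw [carlitz_add_apply, carlitz_add_apply, map_add, hM, hN]
  | monomial n c ih => rw [pow_succ, ← mul_assoc, carlitz_mul_apply, ih, hX, ← carlitz_mul_apply]

/-- The polynomial over `R` whose values are given by the Carlitz action of `N`. -/
noncomputable def carlitzPoly (R : Type*) [CommRing R] [Algebra F[X] R] (N : F[X]) : R[X] :=
  carlitz R[X] N X

lemma aeval_carlitzPoly {S : Type*} [CommRing S] [Algebra F[X] S] [Algebra R S]
    [IsScalarTower F[X] R S] (N : F[X]) (x : S) : aeval x (carlitzPoly R N) = carlitz S N x := by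
  rw [carlitzPoly, ← AlgHom.coe_restrictScalars' F[X], map_carlitz, AlgHom.coe_restrictScalars',
    aeval_X]

lemma eval_carlitzPoly (N : F[X]) (x : R) : (carlitzPoly R N).eval x = carlitz R N x := by
  rw [← coe_aeval_eq_eval, aeval_carlitzPoly]

lemma map_carlitzPoly {S : Type*} [CommRing S] [Algebra F[X] S] [Algebra R S]
    [IsScalarTower F[X] R S] (N : F[X]) :
    (carlitzPoly R N).map (algebraMap R S) = carlitzPoly S N := by
  have h := map_carlitz ((mapAlgHom (Algebra.ofId R S)).restrictScalars F[X]) N X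
  simpa [carlitzPoly] using h

lemma carlitzPoly_C (c : F) : carlitzPoly R (C c) = C (algebraMap F[X] R (C c)) * X :=
  carlitz_C_apply c X

lemma carlitzPoly_add (M N : F[X]) :
    carlitzPoly R (M + N) = carlitzPoly R M + carlitzPoly R N :=
  carlitz_add_apply M N X

lemma carlitzPoly_mul_X (N : F[X]) :
    carlitzPoly R (N * X) =
      C (algebraMap F[X] R X) * carlitzPoly R N + carlitzPoly R N ^ Fintype.card F := by
  rw [carlitzPoly, mul_comm, carlitz_mul_apply, carlitz_X_apply]
  rfl

lemma derivative_carlitzPoly (N : F[X]) :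
    derivative (carlitzPoly R N) = C (algebraMap F[X] R N) := by
  have hq : ((Fintype.card F : ℕ) : R) = 0 := by
    rw [← map_natCast ((algebraMap F[X] R).comp C), FiniteField.cast_card_eq_zero, map_zero]
  induction N using Polynomial.induction_on with
  | C c => simp [carlitzPoly_C]
  | add M N hM hN => rw [carlitzPoly_add, derivative_add, hM, hN, map_add, map_add]
  | monomial n c ih =>
    rw [pow_succ, ← mul_assoc, carlitzPoly_mul_X, derivative_add, derivative_C_mul, derivative_pow,
      ih, hq, C_0, zero_mul, zero_mul, add_zero, ← C_mul, ← map_mul, mul_comm]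

lemma natDegree_leadingCoeff_carlitzPoly [IsDomain R] {N : F[X]} (hN : N ≠ 0) :
    (carlitzPoly R N).natDegree = Fintype.card F ^ N.natDegree ∧
      (carlitzPoly R N).leadingCoeff = algebraMap F[X] R (C N.leadingCoeff) := by
  have hq : 1 < Fintype.card F := Fintype.one_lt_card
  induction N using Polynomial.recOnHorner with
  | M0 => exact absurd rfl hN
  | MC N c hN₀ hc ih =>
    have hc' : algebraMap F[X] R (C c) ≠ 0 :=
      (map_ne_zero_iff _ ((algebraMap F[X] R).comp C).injective).mpr hc
    rcases eq_or_ne N 0 with rfl | hN'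
    · rw [zero_add, carlitzPoly_C, natDegree_C_mul_X _ hc', leadingCoeff_C_mul_X, natDegree_C,
        leadingCoeff_C, pow_zero]
      exact ⟨rfl, rfl⟩
    · obtain ⟨hdeg, hlead⟩ := ih hN'
      have hpos : 0 < N.natDegree :=
        Nat.pos_of_ne_zero fun h ↦ hN' (by rw [eq_C_of_natDegree_eq_zero h, hN₀, C_0])
      have hlt : (carlitzPoly R (C c)).degree < (carlitzPoly R N).degree := by
        refine degree_lt_degree ?_
        rw [carlitzPoly_C, natDegree_C_mul_X _ hc', hdeg]
        exact Nat.one_lt_pow hpos.ne' hq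
      rw [carlitzPoly_add, natDegree_add_eq_left_of_degree_lt hlt,
        leadingCoeff_add_of_degree_lt' hlt, natDegree_add_C,
        leadingCoeff_add_of_degree_lt'
          (degree_C_le.trans_lt (natDegree_pos_iff_degree_pos.mp hpos))]
      exact ⟨hdeg, hlead⟩
  | MX N hN' ih =>
    obtain ⟨hdeg, hlead⟩ := ih hN'
    have hlt : (C (algebraMap F[X] R X) * carlitzPoly R N).degree <
        (carlitzPoly R N ^ Fintype.card F).degree := by
      refine degree_lt_degree ((natDegree_C_mul_le _ _).trans_lt ?_)
      rw [natDegree_pow, hdeg]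
      exact lt_mul_left (by positivity) hq
    rw [carlitzPoly_mul_X, natDegree_add_eq_right_of_degree_lt hlt,
      leadingCoeff_add_of_degree_lt hlt, natDegree_pow, leadingCoeff_pow, hdeg, hlead,
      natDegree_mul_X hN', leadingCoeff_mul_X, ← map_pow, ← C_pow, FiniteField.pow_card, pow_succ']
    exact ⟨rfl, rfl⟩

lemma natDegree_carlitzPoly [IsDomain R] {N : F[X]} (hN : N ≠ 0) :
    (carlitzPoly R N).natDegree = Fintype.card F ^ N.natDegree :=
  (natDegree_leadingCoeff_carlitzPoly hN).1

lemma carlitzPoly_ne_zero [IsDomain R] {N : F[X]} (hN : N ≠ 0) : carlitzPoly R N ≠ 0 := by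
  refine ne_zero_of_natDegree_gt (n := 0) ?_
  rw [natDegree_carlitzPoly hN]
  exact pow_pos Fintype.card_pos _

lemma monic_carlitzPoly [IsDomain R] {N : F[X]} (hN : N.Monic) : (carlitzPoly R N).Monic := by
  rw [Monic, (natDegree_leadingCoeff_carlitzPoly hN.ne_zero).2, hN.leadingCoeff, C_1, map_one]

end Action

section Torsion

variable {F : Type*} [Field F] [Fintype F]

/-- The group `Λ_N` of `N`-torsion points of the Carlitz module in `R`. -/
noncomputable def torsion (R : Type*) [CommRing R] [Algebra F[X] R] (N : F[X]) : AddSubgroup R :=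
  (carlitz R N).ker

variable {R : Type*} [CommRing R] [Algebra F[X] R]

lemma mem_torsion {N : F[X]} {x : R} : x ∈ torsion R N ↔ carlitz R N x = 0 := Iff.rfl

lemma carlitz_mem_torsion (M : F[X]) {N : F[X]} {x : R} (hx : x ∈ torsion R N) :
    carlitz R M x ∈ torsion R N := by
  rw [mem_torsion, carlitz_comm, mem_torsion.mp hx, map_zero]

lemma torsion_mono {M N : F[X]} (h : M ∣ N) : torsion R M ≤ torsion R N := by
  obtain ⟨D, rfl⟩ := h
  intro x hx
  rw [mem_torsion, mul_comm, carlitz_mul_apply, mem_torsion.mp hx, map_zero]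

lemma eq_zero_of_mem_torsion_of_isCoprime {M N : F[X]} (h : IsCoprime M N) {x : R}
    (hM : x ∈ torsion R M) (hN : x ∈ torsion R N) : x = 0 := by
  obtain ⟨a, b, hab⟩ := h
  rw [← carlitz_one_apply (F := F) x, ← hab, carlitz_add_apply, carlitz_mul_apply,
    carlitz_mul_apply, mem_torsion.mp hM, mem_torsion.mp hN, map_zero, map_zero, add_zero]

lemma carlitz_eq_carlitz_of_dvd_sub {M B B' : F[X]} (h : M ∣ B - B') {x : R}
    (hx : x ∈ torsion R M) : carlitz R B x = carlitz R B' x := by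
  obtain ⟨D, hD⟩ := h
  rw [eq_add_of_sub_eq hD, carlitz_add_apply, mul_comm M D, carlitz_mul_apply, mem_torsion.mp hx,
    map_zero, zero_add]

/-- The Carlitz action of `𝔽_q[T]` on the torsion points. -/
noncomputable instance (N : F[X]) : Module F[X] (torsion R N) where
  smul M x := ⟨carlitz R M x, carlitz_mem_torsion M x.2⟩
  one_smul x := Subtype.ext (carlitz_one_apply (x : R))
  mul_smul M M' x := Subtype.ext (carlitz_mul_apply M M' (x : R))
  smul_zero M := Subtype.ext (map_zero (carlitz R M))
  smul_add M x y := Subtype.ext (map_add (carlitz R M) (x : R) y)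
  add_smul M M' x := Subtype.ext (carlitz_add_apply M M' (x : R))
  zero_smul x := Subtype.ext (DFunLike.congr_fun (map_zero (carlitz R)) (x : R))

lemma coe_smul_torsion {N : F[X]} (M : F[X]) (x : torsion R N) :
    ((M • x : torsion R N) : R) = carlitz R M x := rfl

lemma dvd_algebraMap_of_mem_torsion [IsDomain R] {N : F[X]} {x : R} (hx : x ∈ torsion R N)
    (hx₀ : x ≠ 0) : x ∣ algebraMap F[X] R N := by
  obtain ⟨k, hk⟩ := (carlitzPoly R N).binomExpansion 0 x
  rw [derivative_carlitzPoly, eval_C, zero_add, eval_carlitzPoly, eval_carlitzPoly, map_zero,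
    mem_torsion.mp hx] at hk
  refine ⟨-k, mul_left_cancel₀ hx₀ ?_⟩
  linear_combination -hk

lemma coe_torsion_eq_rootSet [IsDomain R] {N : F[X]} (hN : N ≠ 0) :
    (torsion R N : Set R) = (carlitzPoly R N).rootSet R := by
  ext x
  rw [mem_rootSet_of_ne (carlitzPoly_ne_zero hN), coe_aeval_eq_eval, eval_carlitzPoly]
  rfl

lemma finite_torsion [IsDomain R] {N : F[X]} (hN : N ≠ 0) : Finite (torsion R N) := by
  rw [← SetLike.coe_sort_coe, coe_torsion_eq_rootSet hN]
  infer_instance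

lemma card_torsion_le [IsDomain R] {N : F[X]} (hN : N ≠ 0) :
    Nat.card (torsion R N) ≤ Fintype.card F ^ N.natDegree := by
  rw [← natDegree_carlitzPoly (R := R) hN, ← SetLike.coe_sort_coe, coe_torsion_eq_rootSet hN,
    Nat.card_coe_set_eq]
  exact ncard_rootSet_le _ _

end Torsion

section Separability

variable {F : Type*} [Field F] [Fintype F]

lemma card_torsion_eq_iff {L : Type*} [Field L] [Algebra F[X] L] {N : F[X]}
    (hN : N ≠ 0) (hsplit : (carlitzPoly L N).Splits) :
    Nat.card (torsion L N) = Fintype.card F ^ N.natDegree ↔ (carlitzPoly L N).Separable := by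
  classical
  rw [← natDegree_carlitzPoly (R := L) hN, ← SetLike.coe_sort_coe, coe_torsion_eq_rootSet hN,
    Nat.card_eq_fintype_card, card_rootSet_eq_natDegree_iff_of_splits (carlitzPoly_ne_zero hN)]
  simpa using hsplit

lemma separable_carlitzPoly_sub_C {R : Type*} [CommRing R] [Algebra F[X] R] {N : F[X]}
    (hN : IsUnit (algebraMap F[X] R N)) (a : R) : (carlitzPoly R N - C a).Separable := by
  rw [separable_def, derivative_sub, derivative_carlitzPoly, derivative_C, sub_zero]
  exact isCoprime_one_right.of_isCoprime_of_dvd_right (hN.map C).dvd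

end Separability

section Cyclic

variable {F : Type*} [Field F] [Fintype F] {R : Type*} [CommRing R] [IsDomain R] [Algebra F[X] R]

lemma natCard_quotient_span_singleton {N : F[X]} (hN : N ≠ 0) :
    Nat.card (F[X] ⧸ Ideal.span {N}) = Fintype.card F ^ N.natDegree := by
  have : Module.Finite F (F[X] ⧸ Ideal.span {N}) := .of_basis (AdjoinRoot.powerBasis hN).basis
  rw [Module.natCard_eq_pow_finrank (K := F), finrank_quotient_span_eq_natDegree,
    Nat.card_eq_fintype_card]

lemma natDegree_le_of_torsion_le {N D : F[X]} (hD : D ≠ 0)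
    (hcard : Nat.card (torsion R N) = Fintype.card F ^ N.natDegree)
    (h : torsion R N ≤ torsion R D) : N.natDegree ≤ D.natDegree := by
  have := finite_torsion (R := R) hD
  refine (Nat.pow_le_pow_iff_right (Fintype.one_lt_card (α := F))).mp ?_
  rw [← hcard]
  exact (Nat.card_le_card_of_injective _ (AddSubgroup.inclusion_injective h)).trans
    (card_torsion_le hD)

lemma annihilator_torsion {N : F[X]} (hN : N ≠ 0)
    (hcard : Nat.card (torsion R N) = Fintype.card F ^ N.natDegree) :
    Module.annihilator F[X] (torsion R N) = Ideal.span {N} := by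
  obtain ⟨D, hD⟩ :=
    (IsPrincipalIdealRing.principal (Module.annihilator F[X] (torsion R N))).principal
  have hDN : D ∣ N := by
    rw [← Ideal.mem_span_singleton]
    change N ∈ Submodule.span F[X] {D}
    rw [← hD, Module.mem_annihilator]
    exact fun x ↦ Subtype.ext x.2
  have hle : torsion R N ≤ torsion R D := fun x hx ↦ by
    have hann := Module.mem_annihilator.mp (hD ▸ Submodule.mem_span_singleton_self D) ⟨x, hx⟩
    exact congrArg Subtype.val hann
  rw [hD]
  refine Ideal.span_singleton_eq_span_singleton.mpr (associated_of_dvd_of_natDegree_le hDN hN ?_)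
  exact natDegree_le_of_torsion_le (ne_zero_of_dvd_ne_zero hN hDN) hcard hle

lemma exists_torsion_generator {N : F[X]} (hN : N ≠ 0)
    (hcard : Nat.card (torsion R N) = Fintype.card F ^ N.natDegree) :
    ∃ lam : torsion R N,
      (LinearMap.toSpanSingleton F[X] _ lam).ker = Ideal.span {N} ∧
      Function.Surjective (LinearMap.toSpanSingleton F[X] _ lam) := by
  have := finite_torsion (R := R) hN
  obtain ⟨lam, hlam⟩ := Module.exists_ker_toSpanSingleton_eq_annihilator F[X] (torsion R N)
  rw [annihilator_torsion hN hcard] at hlam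
  refine ⟨lam, hlam, ?_⟩
  let f := (LinearMap.toSpanSingleton F[X] _ lam).ker.liftQ _ le_rfl
  have hf : Function.Bijective f := by
    refine (Nat.bijective_iff_injective_and_card _).mpr ⟨?_, ?_⟩
    · exact LinearMap.ker_eq_bot.mp (Submodule.ker_liftQ_eq_bot _ _ _ le_rfl)
    · rw [hcard, ← natCard_quotient_span_singleton hN, hlam]
  exact hf.2.comp (Submodule.mkQ_surjective _)

end Cyclic

section Reduction

variable {F : Type*} [Field F] [Fintype F]

lemma torsion_eq_bot_of_algebraMap_eq_zero {L : Type*} [Field L] [IsAlgClosed L] [Algebra F[X] L]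
    {P : F[X]} (hP : Irreducible P) (hP₀ : algebraMap F[X] L P = 0) : torsion L P = ⊥ := by
  -- A nonzero point would generate a copy of `𝔽_q[T]/(P)`, so the Carlitz polynomial of `P` would
  -- have as many roots as its degree and be separable, yet its derivative is `P = 0`.
  refine (AddSubgroup.eq_bot_iff_forall _).mpr fun w hw ↦ by_contra fun hw₀ ↦ ?_
  have := finite_torsion (R := L) hP.ne_zero
  let f := LinearMap.toSpanSingleton F[X] (torsion L P) ⟨w, hw⟩
  have hker : f.ker = Ideal.span {P} := by
    refine ((PrincipalIdealRing.isMaximal_of_irreducible hP).eq_of_le (fun htop ↦ hw₀ ?_) ?_).symm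
    · have h1 : (1 : F[X]) ∈ f.ker := htop ▸ Submodule.mem_top
      exact congrArg Subtype.val ((one_smul F[X] _).symm.trans h1)
    · exact (Ideal.span_singleton_le_iff_mem _).mpr (Subtype.ext hw)
  have hcard : Nat.card (torsion L P) = Fintype.card F ^ P.natDegree := by
    refine (card_torsion_le hP.ne_zero).antisymm ?_
    rw [← natCard_quotient_span_singleton hP.ne_zero, ← hker]
    exact Nat.card_le_card_of_injective (f.ker.liftQ f le_rfl)
      (LinearMap.ker_eq_bot.mp (Submodule.ker_liftQ_eq_bot _ _ _ le_rfl))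
  have hsep := (card_torsion_eq_iff hP.ne_zero (IsAlgClosed.splits _)).mp hcard
  rw [separable_def, derivative_carlitzPoly, hP₀, C_0, isCoprime_zero_right] at hsep
  have hdeg := natDegree_carlitzPoly (R := L) hP.ne_zero
  rw [natDegree_eq_zero_of_isUnit hsep] at hdeg
  exact (pow_pos Fintype.card_pos _).ne hdeg

lemma carlitz_apply_of_algebraMap_eq_zero {R : Type*} [CommRing R] [IsDomain R] [Algebra F[X] R]
    {P : F[X]} (hP : Irreducible P) (hPm : P.Monic) (hP₀ : algebraMap F[X] R P = 0) (x : R) :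
    carlitz R P x = x ^ Fintype.card F ^ P.natDegree := by
  let L := AlgebraicClosure (FractionRing R)
  have hL : algebraMap F[X] L P = 0 := by
    rw [IsScalarTower.algebraMap_apply F[X] R L, hP₀, map_zero]
  have hroots : (carlitzPoly L P).roots = Multiset.replicate (Fintype.card F ^ P.natDegree) 0 := by
    refine Multiset.eq_replicate.mpr ⟨?_, fun w hw ↦ ?_⟩
    · rw [← (IsAlgClosed.splits _).natDegree_eq_card_roots, natDegree_carlitzPoly hP.ne_zero]
    · have hmem : w ∈ torsion L P := by
        rw [mem_torsion, ← eval_carlitzPoly]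
        exact (mem_roots'.mp hw).2
      rwa [torsion_eq_bot_of_algebraMap_eq_zero hP hL, AddSubgroup.mem_bot] at hmem
  have hpoly : carlitzPoly L P = X ^ Fintype.card F ^ P.natDegree := by
    rw [(IsAlgClosed.splits _).eq_prod_roots_of_monic (monic_carlitzPoly hPm), hroots,
      Multiset.map_replicate, Multiset.prod_replicate, C_0, sub_zero]
  have hinj : Function.Injective (algebraMap R L) := by
    rw [IsScalarTower.algebraMap_eq R (FractionRing R) L]
    exact (algebraMap (FractionRing R) L).injective.comp (IsFractionRing.injective R _)
  refine hinj ?_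
  rw [map_pow, ← IsScalarTower.coe_toAlgHom' F[X] R L, map_carlitz, ← eval_carlitzPoly, hpoly,
    eval_pow, eval_X]

end Reduction

section Frobenius

lemma exists_isArithFrobAt_galRestrict (A K L S : Type*) [CommRing A] [IsDomain A]
    [IsIntegrallyClosed A] [IsNoetherianRing A] [Field K] [Algebra A K] [IsFractionRing A K]
    [Field L] [Algebra K L] [FiniteDimensional K L] [IsGalois K L] [Algebra A L]
    [IsScalarTower A K L] [CommRing S] [Algebra A S] [Algebra S L] [IsScalarTower A S L]
    [IsIntegralClosure S A L] (p : Ideal A) [p.IsPrime] [Finite (A ⧸ p)] :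
    ∃ (s : L ≃ₐ[K] L) (Q : Ideal S), Q.IsPrime ∧ Q.under A = p ∧
      (galRestrict A K L S s : S →ₐ[A] S).IsArithFrobAt Q := by
  have : IsDomain S := (IsIntegralClosure.algebraMap_injective S A L).isDomain
  have : IsFractionRing S L := IsIntegralClosure.isFractionRing_of_finite_extension A K L S
  have : Algebra.IsIntegral A S := IsIntegralClosure.isIntegral_algebra A L
  have : Module.Finite A S := IsIntegralClosure.finite A K L S
  have : Algebra.IsInvariant A S (S ≃ₐ[A] S) := Algebra.isInvariant_of_isGalois' A K L S
  have : Finite (S ≃ₐ[A] S) := .of_equiv _ (galRestrict A K L S).toEquiv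
  have hinj : Function.Injective (algebraMap A S) := by
    refine .of_comp (f := algebraMap S L) ?_
    rw [← RingHom.coe_comp, ← IsScalarTower.algebraMap_eq, IsScalarTower.algebraMap_eq A K L]
    exact (algebraMap K L).injective.comp (IsFractionRing.injective A K)
  obtain ⟨Q, hQ, rfl⟩ := Ideal.exists_ideal_over_prime_of_isIntegral_of_isDomain (S := S) p
    (by rw [(RingHom.injective_iff_ker_eq_bot _).mp hinj]; exact bot_le)
  have : Finite (A ⧸ Q.under A) := ‹_›
  have : Module.Finite (A ⧸ Q.under A) (S ⧸ Q) := .of_restrictScalars_finite A _ _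
  have : Finite (S ⧸ Q) := Module.finite_of_finite (A ⧸ Q.under A)
  obtain ⟨g, hg⟩ := IsArithFrobAt.exists_of_isInvariant A (S ≃ₐ[A] S) Q
  exact ⟨(galRestrict A K L S).symm g, Q, hQ, rfl, by rwa [MulEquiv.apply_symm_apply]⟩

variable {F : Type*} [Field F] [Fintype F]

lemma apply_eq_carlitz_of_isArithFrobAt {S : Type*} [CommRing S] [IsDomain S] [Algebra F[X] S]
    {P M : F[X]} (hP : Irreducible P) (hPm : P.Monic) (hPM : ¬ P ∣ M) {Q : Ideal S} [Q.IsPrime]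
    (hQ : Q.under F[X] = Ideal.span {P}) {φ : S →ₐ[F[X]] S} (hφ : φ.IsArithFrobAt Q) {x : S}
    (hx : x ∈ torsion S M) : φ x = carlitz S P x := by
  have hQ_iff (B : F[X]) : algebraMap F[X] S B ∈ Q ↔ P ∣ B := by
    rw [← Ideal.mem_span_singleton, ← hQ, Ideal.mem_comap]
  have hmod : φ x - carlitz S P x ∈ Q := by
    have hP₀ : algebraMap F[X] (S ⧸ Q) P = 0 := by
      rw [IsScalarTower.algebraMap_apply F[X] S (S ⧸ Q)]
      exact Ideal.Quotient.eq_zero_iff_mem.mpr ((hQ_iff P).mpr dvd_rfl)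
    rw [← Ideal.Quotient.eq, hφ.mk_apply, hQ, natCard_quotient_span_singleton hP.ne_zero,
      ← carlitz_apply_of_algebraMap_eq_zero hP hPm hP₀]
    exact (map_carlitz (Ideal.Quotient.mkₐ F[X] Q) P x).symm
  have htors : φ x - carlitz S P x ∈ torsion S M := by
    refine sub_mem ?_ (carlitz_mem_torsion P hx)
    rw [mem_torsion, ← map_carlitz, mem_torsion.mp hx, map_zero]
  by_contra hne
  refine hPM ((hQ_iff M).mp (Q.mem_of_dvd ?_ hmod))
  exact dvd_algebraMap_of_mem_torsion htors (sub_ne_zero.mpr hne)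

lemma isIntegral_of_mem_torsion {L : Type*} [CommRing L] [Algebra F[X] L] {M : F[X]} (hM : M ≠ 0)
    {x : L} (hx : x ∈ torsion L M) : IsIntegral F[X] x := by
  refine ⟨carlitzPoly F[X] (M * C M.leadingCoeff⁻¹),
    monic_carlitzPoly (monic_mul_leadingCoeff_inv hM), ?_⟩
  rw [← aeval_def, aeval_carlitzPoly]
  exact torsion_mono (dvd_mul_right _ _) hx

variable {K L : Type*} [Field K] [Field L] [Algebra K L] [Algebra F[X] L]

/-- The automorphism `s` acts on the `M`-torsion points as the Carlitz action of `B`, that is, it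
restricts to the automorphism `σ_B` of `K(Λ_M)`. -/
def ActsOnTorsionBy (s : L ≃ₐ[K] L) (M B : F[X]) : Prop :=
  ∀ x ∈ torsion L M, s x = carlitz L B x

lemma ActsOnTorsionBy.mul {s t : L ≃ₐ[K] L} {M B D : F[X]} (hs : ActsOnTorsionBy s M B)
    (ht : ActsOnTorsionBy t M D) : ActsOnTorsionBy (s * t) M (B * D) := fun x hx ↦ by
  rw [AlgEquiv.mul_apply, ht x hx, hs _ (carlitz_mem_torsion D hx), carlitz_mul_apply]

lemma ActsOnTorsionBy.congr {s : L ≃ₐ[K] L} {M B B' : F[X]} (hs : ActsOnTorsionBy s M B)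
    (h : M ∣ B - B') : ActsOnTorsionBy s M B' := fun x hx ↦
  (hs x hx).trans (carlitz_eq_carlitz_of_dvd_sub h hx)

variable [Algebra F[X] K] [IsFractionRing F[X] K] [IsScalarTower F[X] K L] [FiniteDimensional K L]
  [IsGalois K L]

variable (K L)

lemma exists_actsOnTorsionBy_of_irreducible {P M : F[X]} (hP : Irreducible P) (hPm : P.Monic)
    (hM : M ≠ 0) (hPM : ¬ P ∣ M) : ∃ s : L ≃ₐ[K] L, ActsOnTorsionBy s M P := by
  let S := integralClosure F[X] L
  have : (Ideal.span {P}).IsPrime := (Ideal.span_singleton_prime hP.ne_zero).mpr hP.prime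
  have : Finite (F[X] ⧸ Ideal.span {P}) := Nat.finite_of_card_ne_zero
    (by rw [natCard_quotient_span_singleton hP.ne_zero]; exact (pow_pos Fintype.card_pos _).ne')
  obtain ⟨s, Q, _, hQ, hs⟩ := exists_isArithFrobAt_galRestrict F[X] K L S (Ideal.span {P})
  refine ⟨s, fun x hx ↦ ?_⟩
  lift x to S using isIntegral_of_mem_torsion hM hx
  have hx' : x ∈ torsion S M := Subtype.ext ((map_carlitz S.val M x).trans hx)
  have hfrob := apply_eq_carlitz_of_isArithFrobAt hP hPm hPM hQ hs hx'
  calc s x = (galRestrict F[X] K L S s x : S) := (algebraMap_galRestrict_apply F[X] s x).symm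
    _ = carlitz L P x := (congrArg S.val hfrob).trans (map_carlitz S.val P x)

lemma exists_actsOnTorsionBy_of_monic {B M : F[X]} (hB : B.Monic) (hM : M ≠ 0)
    (hBM : IsCoprime B M) : ∃ s : L ≃ₐ[K] L, ActsOnTorsionBy s M B := by
  classical
  open UniqueFactorizationMonoid in
  rw [← hB.normalize_eq_self, ← prod_normalizedFactors_eq hB.ne_zero]
  refine Multiset.prod_induction (fun D ↦ ∃ s : L ≃ₐ[K] L, ActsOnTorsionBy s M D) _ ?_ ?_ ?_
  · rintro D D' ⟨s, hs⟩ ⟨s', hs'⟩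
    exact ⟨s * s', hs.mul hs'⟩
  · exact ⟨1, fun x _ ↦ (carlitz_one_apply x).symm⟩
  · intro P hP
    have hPi := irreducible_of_normalized_factor P hP
    have hPm : P.Monic := normalize_normalized_factor P hP ▸ monic_normalize hPi.ne_zero
    have hPM : IsCoprime P M := hBM.of_isCoprime_of_dvd_left (dvd_of_mem_normalizedFactors hP)
    exact exists_actsOnTorsionBy_of_irreducible K L hPi hPm hM
      fun h ↦ hPi.not_isUnit (hPM.isUnit_of_dvd' dvd_rfl h)

theorem exists_actsOnTorsionBy {B M : F[X]} (hM : M ≠ 0) (hBM : IsCoprime B M) :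
    ∃ s : L ≃ₐ[K] L, ActsOnTorsionBy s M B := by
  let D := X ^ (B.natDegree + 1) * C M.leadingCoeff⁻¹
  have hMD : M * D = X ^ (B.natDegree + 1) * (M * C M.leadingCoeff⁻¹) := mul_left_comm _ _ _
  have hmonic : (B + M * D).Monic := by
    refine Monic.add_of_right ?_ (degree_lt_degree ?_)
    · exact hMD ▸ (monic_X_pow _).mul (monic_mul_leadingCoeff_inv hM)
    · rw [hMD, natDegree_X_pow_mul _ (monic_mul_leadingCoeff_inv hM).ne_zero]
      lia
  obtain ⟨s, hs⟩ := exists_actsOnTorsionBy_of_monic K L hmonic hM (hBM.add_mul_left_left D)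
  exact ⟨s, hs.congr (by rw [add_sub_cancel_left]; exact dvd_mul_right M D)⟩

end Frobenius

section Kummer

variable {F : Type*} [Field F] [Fintype F] {K L : Type*} [Field K] [Field L] [Algebra K L]
  [Algebra F[X] L]

variable (K L) in
/-- The subgroup of `Gal(L/K)` fixing the `M`-torsion points `Λ_M` of `L` pointwise; when
`L = K(Λ_M, (1/M)Γ)` it is the group `H_Γ(M)`. -/
def torsionFixer (M : F[X]) : Subgroup (L ≃ₐ[K] L) :=
  fixingSubgroup (L ≃ₐ[K] L) (torsion L M : Set L)

lemma mem_torsionFixer {M : F[X]} {σ : L ≃ₐ[K] L} :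
    σ ∈ torsionFixer K L M ↔ ∀ x ∈ torsion L M, σ x = x :=
  mem_fixingSubgroup_iff _

variable [Algebra F[X] K] [IsScalarTower F[X] K L]

lemma coe_carlitz (E : IntermediateField K L) (N : F[X]) (x : E) :
    (carlitz E N x : L) = carlitz L N x :=
  map_carlitz (E.val.restrictScalars F[X]) N x

lemma carlitz_mem (E : IntermediateField K L) {N : F[X]} {x : L} (hx : x ∈ E) :
    carlitz L N x ∈ E :=
  coe_carlitz E N ⟨x, hx⟩ ▸ (carlitz E N ⟨x, hx⟩).2

lemma algEquiv_carlitz (s : L ≃ₐ[K] L) (N : F[X]) (x : L) :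
    s (carlitz L N x) = carlitz L N (s x) :=
  map_carlitz (s.restrictScalars F[X]) N x

lemma algEquiv_apply_mem_torsion (s : L ≃ₐ[K] L) {N : F[X]} {x : L} (hx : x ∈ torsion L N) :
    s x ∈ torsion L N := by
  rw [mem_torsion, ← algEquiv_carlitz, mem_torsion.mp hx, map_zero]

instance torsionFixer_normal (M : F[X]) : (torsionFixer K L M).Normal where
  conj_mem σ hσ s := mem_torsionFixer.mpr fun x hx ↦ by
    rw [AlgEquiv.mul_apply, AlgEquiv.mul_apply,
      mem_torsionFixer.mp hσ _ (algEquiv_apply_mem_torsion s⁻¹ hx), ← AlgEquiv.mul_apply,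
      mul_inv_cancel, AlgEquiv.one_apply]

lemma ActsOnTorsionBy.inv_mul_mem_torsionFixer {s : L ≃ₐ[K] L} {M B : F[X]}
    (hs : ActsOnTorsionBy s M B) (τ : L ≃ₐ[K] L) :
    (τ * s)⁻¹ * (s * τ) ∈ torsionFixer K L M := by
  refine mem_torsionFixer.mpr fun x hx ↦ (τ * s).injective ?_
  rw [← AlgEquiv.mul_apply, mul_inv_cancel_left, AlgEquiv.mul_apply, AlgEquiv.mul_apply,
    hs _ (algEquiv_apply_mem_torsion τ hx), hs x hx, algEquiv_carlitz]

section Root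

variable {M : F[X]} {α : L} (hα : carlitz L M α ∈ (⊥ : IntermediateField K L))
include hα

lemma apply_sub_mem_torsion (σ : L ≃ₐ[K] L) : σ α - α ∈ torsion L M := by
  obtain ⟨a, ha⟩ := mem_bot.mp hα
  rw [mem_torsion, map_sub, ← algEquiv_carlitz, ← ha, AlgEquiv.commutes, sub_self]

lemma mul_apply_sub {σ : L ≃ₐ[K] L} (hσ : σ ∈ torsionFixer K L M) (τ : L ≃ₐ[K] L) :
    (σ * τ) α - α = (σ α - α) + (τ α - α) := by
  have h := mem_torsionFixer.mp hσ _ (apply_sub_mem_torsion hα τ)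
  rw [map_sub] at h
  rw [AlgEquiv.mul_apply]
  linear_combination h

lemma conj_apply_sub {σ s : L ≃ₐ[K] L} {B : F[X]} (hσ : σ ∈ torsionFixer K L M)
    (hs : ActsOnTorsionBy s M B) : (s * σ * s⁻¹) α - α = carlitz L B (σ α - α) := by
  have hσs : σ (s⁻¹ α) = s⁻¹ α + (σ α - α) := by
    have h := mul_apply_sub hα hσ s⁻¹
    rw [AlgEquiv.mul_apply] at h
    linear_combination h
  rw [mul_assoc, AlgEquiv.mul_apply, AlgEquiv.mul_apply, hσs, map_add,
    hs _ (apply_sub_mem_torsion hα σ), ← AlgEquiv.mul_apply, mul_inv_cancel, AlgEquiv.one_apply,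
    add_sub_cancel_left]

lemma conj_mul_conj_apply_sub {σ s t : L ≃ₐ[K] L} {B D : F[X]} (hσ : σ ∈ torsionFixer K L M)
    (hs : ActsOnTorsionBy s M B) (ht : ActsOnTorsionBy t M D) :
    (s * σ * s⁻¹ * (t * σ * t⁻¹)) α - α = carlitz L (B + D) (σ α - α) := by
  rw [mul_apply_sub hα ((torsionFixer_normal M).conj_mem σ hσ s), conj_apply_sub hα hσ hs,
    conj_apply_sub hα hσ ht, carlitz_add_apply]

lemma exists_torsion_apply_sub_eq_self {s : L ≃ₐ[K] L} {B : F[X]} (hs : ActsOnTorsionBy s M B)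
    (hB : IsCoprime (B - 1) M) : ∃ l ∈ torsion L M, s (α - l) = α - l := by
  obtain ⟨D, D', hD⟩ := hB
  have hμ := apply_sub_mem_torsion hα s
  have hl := carlitz_mem_torsion D hμ
  refine ⟨carlitz L D (s α - α), hl, ?_⟩
  have hinv : carlitz L ((B - 1) * D) (s α - α) = s α - α := by
    rw [carlitz_eq_carlitz_of_dvd_sub (B' := 1) ⟨-D', by linear_combination hD⟩ hμ,
      carlitz_one_apply]
  have hB_eq : carlitz L B (carlitz L D (s α - α)) =
      carlitz L (B - 1) (carlitz L D (s α - α)) + carlitz L D (s α - α) := by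
    rw [← sub_add_cancel B 1, carlitz_add_apply, carlitz_one_apply, sub_add_cancel]
  rw [map_sub, hs _ hl, hB_eq, ← carlitz_mul_apply, hinv]
  ring

lemma mem_bot_of_fixed_of_actsOnTorsionBy [IsGalois K L] {s : L ≃ₐ[K] L} {B : F[X]}
    (hs : ActsOnTorsionBy s M B) (hB : IsCoprime (B - 1) M) (hsα : s α = α)
    (hfix : ∀ σ ∈ torsionFixer K L M, σ α = α) : α ∈ (⊥ : IntermediateField K L) := by
  refine (InfiniteGalois.mem_bot_iff_fixed α).mpr fun τ ↦ ?_
  have hsτ : s (τ α) = τ α := by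
    have hcomm := hfix _ (hs.inv_mul_mem_torsionFixer τ)
    rw [← AlgEquiv.mul_apply, ← mul_inv_cancel_left (τ * s) (s * τ), AlgEquiv.mul_apply, hcomm,
      AlgEquiv.mul_apply, hsα]
  have hτ := apply_sub_mem_torsion hα τ
  refine sub_eq_zero.mp (eq_zero_of_mem_torsion_of_isCoprime hB ?_ hτ)
  have h := hs _ hτ
  rw [map_sub, hsτ, hsα, ← sub_add_cancel B 1, carlitz_add_apply, carlitz_one_apply] at h
  exact mem_torsion.mpr (right_eq_add.mp h)

end Root

variable [IsFractionRing F[X] K] [FiniteDimensional K L] [IsGalois K L]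

lemma exists_torsion_sub_mem_bot {M : F[X]} (hM : M ≠ 0)
    (hv : ∃ v, IsCoprime v M ∧ IsCoprime (v - 1) M) {β : L}
    (hβ : carlitz L M β ∈ (⊥ : IntermediateField K L))
    (hfix : ∀ σ ∈ torsionFixer K L M, σ β = β) :
    ∃ l ∈ torsion L M, β - l ∈ (⊥ : IntermediateField K L) := by
  obtain ⟨B, hB, hB1⟩ := hv
  obtain ⟨s, hs⟩ := exists_actsOnTorsionBy K L hM hB
  obtain ⟨l, hl, hsl⟩ := exists_torsion_apply_sub_eq_self hβ hs hB1
  refine ⟨l, hl, mem_bot_of_fixed_of_actsOnTorsionBy (M := M) ?_ hs hB1 hsl fun σ hσ ↦ ?_⟩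
  · rwa [map_sub, mem_torsion.mp hl, sub_zero]
  · rw [map_sub, hfix σ hσ, mem_torsionFixer.mp hσ l hl]

variable (K L) in
lemma exists_actsOnTorsionBy_add {M : F[X]} (hM : M ≠ 0)
    (hv : ∃ v, IsCoprime v M ∧ IsCoprime (v - 1) M) (f : F[X]) :
    ∃ (u : F[X]) (s t : L ≃ₐ[K] L), IsCoprime u M ∧ IsCoprime (f - u) M ∧
      ActsOnTorsionBy s M u ∧ ActsOnTorsionBy t M (f - u) := by
  obtain ⟨u, hu, hfu⟩ := exists_isCoprime_isCoprime_sub hM hv f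
  obtain ⟨s, hs⟩ := exists_actsOnTorsionBy K L hM hu
  obtain ⟨t, ht⟩ := exists_actsOnTorsionBy K L hM hfu
  exact ⟨u, s, t, hu, hfu, hs, ht⟩

variable {ι : Type*} {M : F[X]} {α : ι → L}

/-- The image of `torsionFixer K L M` under the Kummer map `σ ↦ (σ αᵢ - αᵢ)ᵢ`. It is stable under
`𝔽_q[T]`, because every scalar is a sum of two units modulo `M` and units act by conjugation. -/
def kummerImage (hM : M ≠ 0) (hv : ∃ v, IsCoprime v M ∧ IsCoprime (v - 1) M)
    (hα : ∀ i, carlitz L M (α i) ∈ (⊥ : IntermediateField K L)) :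
    Submodule F[X] (ι → torsion L M) where
  carrier := {w | ∃ σ ∈ torsionFixer K L M, ∀ i, σ (α i) - α i = w i}
  zero_mem' := ⟨1, one_mem _, fun i ↦ sub_self (α i)⟩
  add_mem' := by
    rintro w w' ⟨σ, hσ, hw⟩ ⟨τ, hτ, hw'⟩
    refine ⟨σ * τ, mul_mem hσ hτ, fun i ↦ ?_⟩
    rw [mul_apply_sub (hα i) hσ, hw, hw']
    rfl
  smul_mem' := by
    rintro f w ⟨σ, hσ, hw⟩
    obtain ⟨u, s, t, -, -, hs, ht⟩ := exists_actsOnTorsionBy_add K L hM hv f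
    have hconj := (torsionFixer_normal M).conj_mem σ hσ
    refine ⟨s * σ * s⁻¹ * (t * σ * t⁻¹), mul_mem (hconj s) (hconj t), fun i ↦ ?_⟩
    rw [conj_mul_conj_apply_sub (hα i) hσ hs ht, hw, add_sub_cancel]
    rfl

theorem exists_mem_torsionFixer_apply_sub_eq [Fintype ι] (hM : M ≠ 0)
    (hv : ∃ v, IsCoprime v M ∧ IsCoprime (v - 1) M)
    (hcard : Nat.card (torsion L M) = Fintype.card F ^ M.natDegree)
    (hα : ∀ i, carlitz L M (α i) ∈ (⊥ : IntermediateField K L))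
    (hdvd : ∀ g : ι → F[X], ∀ y ∈ (⊥ : IntermediateField K L),
      carlitz L M y = ∑ i, carlitz L (g i) (carlitz L M (α i)) → ∀ i, M ∣ g i)
    (w : ι → torsion L M) : ∃ σ ∈ torsionFixer K L M, ∀ i, σ (α i) - α i = w i := by
  obtain ⟨lam, hker, hsurj⟩ := exists_torsion_generator hM hcard
  suffices h : kummerImage hM hv hα = ⊤ from (h ▸ Submodule.mem_top : w ∈ kummerImage hM hv hα)
  refine pi_submodule_eq_top_of_forall_dvd hM hker hsurj _ fun g hg ↦ ?_
  let β := ∑ i, carlitz L (g i) (α i)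
  have hMβ : carlitz L M β = ∑ i, carlitz L (g i) (carlitz L M (α i)) := by
    rw [map_sum]; exact Finset.sum_congr rfl fun i _ ↦ carlitz_comm _ _ _
  have hβ : carlitz L M β ∈ (⊥ : IntermediateField K L) :=
    hMβ ▸ sum_mem fun i _ ↦ carlitz_mem _ (hα i)
  have hfix : ∀ σ ∈ torsionFixer K L M, σ β = β := fun σ hσ ↦ by
    let w i : torsion L M := ⟨σ (α i) - α i, apply_sub_mem_torsion (hα i) σ⟩
    have hw : ∑ i, g i • w i = 0 := hg w ⟨σ, hσ, fun _ ↦ rfl⟩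
    calc σ β = β + ↑(∑ i, g i • w i) := by
          rw [AddSubgroup.val_finsetSum, map_sum, ← Finset.sum_add_distrib]
          exact Finset.sum_congr rfl fun i _ ↦ by
            rw [coe_smul_torsion, map_sub, algEquiv_carlitz, add_sub_cancel]
      _ = β := by rw [hw, ZeroMemClass.coe_zero, add_zero]
  obtain ⟨l, hl, hβl⟩ := exists_torsion_sub_mem_bot hM hv hβ hfix
  exact hdvd g (β - l) hβl (by rw [map_sub, mem_torsion.mp hl, sub_zero, hMβ])

end Kummer

section KummerField

lemma mem_bot_of_coe_mem_bot {K Ω : Type*} [Field K] [Field Ω] [Algebra K Ω]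
    {E : IntermediateField K Ω} {x : E}
    (hx : (x : Ω) ∈ (⊥ : IntermediateField K Ω)) : x ∈ (⊥ : IntermediateField K E) := by
  obtain ⟨a, ha⟩ := mem_bot.mp hx
  exact mem_bot.mpr ⟨a, Subtype.ext ha⟩

variable {F : Type*} [Field F] [Fintype F] {K Ω : Type*} [Field K] [Field Ω] [Algebra K Ω]
  [Algebra F[X] Ω]

variable (K) in
/-- The Kummer extension `K(Λ_M, (1/M)Γ)`. Since `0 ∈ Γ`, the set `(1/M)Γ` contains `Λ_M`. -/
def kummerField (M : F[X]) (Γ : AddSubgroup Ω) : IntermediateField K Ω :=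
  adjoin K {x | carlitz Ω M x ∈ Γ}

lemma mem_kummerField_of_mem_torsion {M : F[X]} {Γ : AddSubgroup Ω} {x : Ω}
    (hx : x ∈ torsion Ω M) : x ∈ kummerField K M Γ := by
  refine subset_adjoin K _ ?_
  rw [Set.mem_ofPred_eq, mem_torsion.mp hx]
  exact Γ.zero_mem

lemma finiteDimensional_of_eq_adjoin_torsion {ι : Type*} [Finite ι] [Algebra.IsAlgebraic K Ω]
    {M : F[X]} (hM : M ≠ 0) {E : IntermediateField K Ω} {α : ι → Ω}
    (hE : E = adjoin K (torsion Ω M ∪ Set.range α)) :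
    FiniteDimensional K E := by
  have := finite_torsion (R := Ω) hM
  have : Finite ↥((torsion Ω M : Set Ω) ∪ Set.range α) :=
    ((torsion Ω M : Set Ω).toFinite.union (Set.finite_range α)).to_subtype
  rw [hE]
  exact finiteDimensional_adjoin fun x _ ↦ Algebra.IsIntegral.isIntegral x

variable [Algebra F[X] K] [IsScalarTower F[X] K Ω]

lemma coe_mem_torsion {E : IntermediateField K Ω} {M : F[X]} {x : E} :
    (x : Ω) ∈ torsion Ω M ↔ x ∈ torsion E M := by
  rw [mem_torsion, mem_torsion, ← coe_carlitz, ZeroMemClass.coe_eq_zero]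

lemma kummerField_eq_adjoin {ι : Type*} [Fintype ι] {M : F[X]} {Γ : AddSubgroup Ω} {α : ι → Ω}
    (hα : ∀ i, carlitz Ω M (α i) ∈ Γ)
    (hgen : ∀ x ∈ Γ, ∃ g : ι → F[X], x = ∑ i, carlitz Ω (g i) (carlitz Ω M (α i))) :
    kummerField K M Γ = adjoin K (torsion Ω M ∪ Set.range α) := by
  refine le_antisymm (adjoin_le_iff.mpr fun x hx ↦ ?_) (adjoin_le_iff.mpr ?_)
  · obtain ⟨g, hg⟩ := hgen _ hx
    have hsum : ∑ i, carlitz Ω (g i) (α i) ∈ adjoin K (torsion Ω M ∪ Set.range α) :=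
      sum_mem fun i _ ↦ carlitz_mem _ (subset_adjoin K _ (.inr ⟨i, rfl⟩))
    have htors : x - ∑ i, carlitz Ω (g i) (α i) ∈ torsion Ω M := by
      simp only [mem_torsion, map_sub, map_sum, carlitz_comm M, hg, sub_self]
    simpa using add_mem (subset_adjoin K _ (.inl htors)) hsum
  · rintro _ (hx | ⟨i, rfl⟩)
    · exact mem_kummerField_of_mem_torsion hx
    · exact subset_adjoin K _ (hα i)

lemma algEquiv_eq_of_mem_torsionFixer {ι : Type*} {M : F[X]} {E : IntermediateField K Ω}
    {α : ι → E} (hE : E = adjoin K (torsion Ω M ∪ Set.range fun i ↦ (α i : Ω)))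
    {σ τ : E ≃ₐ[K] E} (hσ : σ ∈ torsionFixer K E M) (hτ : τ ∈ torsionFixer K E M)
    (h : ∀ i, σ (α i) = τ (α i)) : σ = τ := by
  suffices hhom : (σ : E →ₐ[K] E) = τ from AlgEquiv.coe_toAlgHom_injective hhom
  refine algHom_ext_of_eq_adjoin K hE ?_
  rintro x (hx | ⟨i, rfl⟩)
  · have hx' : (⟨x, hE.ge (subset_adjoin K _ (.inl hx))⟩ : E) ∈ torsion E M :=
      coe_mem_torsion.mp hx
    exact (mem_torsionFixer.mp hσ _ hx').trans (mem_torsionFixer.mp hτ _ hx').symm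
  · exact h i

variable [IsFractionRing F[X] K]

lemma isGalois_kummerField [Normal K Ω] {M : F[X]} (hM : M ≠ 0) {Γ : AddSubgroup Ω}
    (hΓ : ∀ x ∈ Γ, x ∈ (⊥ : IntermediateField K Ω)) : IsGalois K (kummerField K M Γ) := by
  refine isGalois_adjoin (fun x hx ↦ ?_) fun σ x hx ↦ ?_
  all_goals obtain ⟨a, ha⟩ := mem_bot.mp (hΓ _ hx)
  · have hMK : algebraMap F[X] K M ≠ 0 := by
      rwa [Ne, IsFractionRing.to_map_eq_zero_iff]
    refine (separable_carlitzPoly_sub_C hMK.isUnit a).of_dvd (minpoly.dvd _ _ ?_)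
    rw [map_sub, aeval_carlitzPoly, aeval_C, ha, sub_self]
  · have hσx : σ (carlitz Ω M x) = carlitz Ω M (σ x) := map_carlitz (σ.restrictScalars F[X]) M x
    rwa [Set.mem_ofPred_eq, ← hσx, ← ha, σ.commutes, ha]

lemma natCard_torsion [IsAlgClosed Ω] {M : F[X]} (hM : M ≠ 0) {E : IntermediateField K Ω}
    (hE : ∀ x ∈ torsion Ω M, x ∈ E) :
    Nat.card (torsion E M) = Fintype.card F ^ M.natDegree := by
  have hME : algebraMap F[X] E M ≠ 0 := by
    rw [IsScalarTower.algebraMap_apply F[X] K E]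
    simpa using hM
  refine (card_torsion_eq_iff hM ?_).mpr ?_
  · rw [← map_carlitzPoly (R := K)]
    refine splits_of_splits (IsAlgClosed.splits _) fun x hx ↦ hE x ?_
    rw [mem_torsion, ← aeval_carlitzPoly (R := K)]
    exact aeval_eq_zero_of_mem_rootSet hx
  · simpa using separable_carlitzPoly_sub_C hME.isUnit 0

theorem bijOn_apply_sub [IsAlgClosed Ω] {ι : Type*} [Fintype ι] {M : F[X]} (hM : M ≠ 0)
    (hv : ∃ v, IsCoprime v M ∧ IsCoprime (v - 1) M) {E : IntermediateField K Ω}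
    [FiniteDimensional K E] [IsGalois K E] {α : ι → E}
    (hE : E = adjoin K (torsion Ω M ∪ Set.range fun i ↦ (α i : Ω)))
    (hα : ∀ i, carlitz E M (α i) ∈ (⊥ : IntermediateField K E))
    (hdvd : ∀ g : ι → F[X], ∀ y ∈ (⊥ : IntermediateField K Ω),
      carlitz Ω M y = ∑ i, carlitz Ω (g i) (carlitz Ω M (α i)) → ∀ i, M ∣ g i) :
    Set.BijOn (fun (σ : E ≃ₐ[K] E) i ↦ (σ (α i) : Ω) - α i) (torsionFixer K E M)
      {w | ∀ i, w i ∈ torsion Ω M} := by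
  have hΛE : ∀ x ∈ torsion Ω M, x ∈ E := fun x hx ↦ hE ▸ subset_adjoin K _ (.inl hx)
  refine ⟨fun σ _ i ↦ coe_mem_torsion.mpr (apply_sub_mem_torsion (hα i) σ),
    fun σ hσ τ hτ h ↦ algEquiv_eq_of_mem_torsionFixer hE hσ hτ fun i ↦ ?_, fun w hw ↦ ?_⟩
  · exact Subtype.ext (sub_left_injective (congrFun h i))
  · have hdvdE (g : ι → F[X]) (y : E) (hy : y ∈ (⊥ : IntermediateField K E))
        (hMy : carlitz E M y = ∑ i, carlitz E (g i) (carlitz E M (α i))) : ∀ i, M ∣ g i := by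
      obtain ⟨a, rfl⟩ := mem_bot.mp hy
      refine hdvd g _ (mem_bot.mpr ⟨a, rfl⟩) ?_
      simpa [coe_carlitz] using congrArg (Subtype.val : E → Ω) hMy
    obtain ⟨σ, hσ, h⟩ := exists_mem_torsionFixer_apply_sub_eq hM hv (natCard_torsion hM hΛE) hα
      hdvdE fun i ↦ ⟨⟨w i, hΛE _ (hw i)⟩, coe_mem_torsion.mp (hw i)⟩
    exact ⟨σ, hσ, funext fun i ↦ congrArg Subtype.val (h i)⟩

end KummerField

section AlgebraicClosure

variable {F : Type} [Field F] [Fintype F]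

lemma eq_carlitz_of_isCarlitz {ψ : F[X] →+* AddMonoid.End (AlgebraicClosure (RatFunc F))}
    (hψ : IsCarlitz ψ) : ψ = carlitz (AlgebraicClosure (RatFunc F)) := by
  refine Polynomial.ringHom_ext (fun c ↦ ?_) ?_ <;> ext x
  · rw [hψ.2, carlitz_C_apply, IsScalarTower.algebraMap_apply F[X] (RatFunc F),
      RatFunc.algebraMap_C]
  · rw [hψ.1, carlitz_X_apply, IsScalarTower.algebraMap_apply F[X] (RatFunc F),
      RatFunc.algebraMap_X]

variable {M : F[X]} {E : IntermediateField (RatFunc F) (AlgebraicClosure (RatFunc F))}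

lemma fixesTorsion_carlitz_iff {σ : E ≃ₐ[RatFunc F] E} :
    FixesTorsion (carlitz _) M σ ↔ σ ∈ torsionFixer (RatFunc F) E M := by
  rw [mem_torsionFixer]
  exact forall_congr' fun x ↦ imp_congr_left coe_mem_torsion

lemma ActsOnTorsionBy.extendsSigma {s : E ≃ₐ[RatFunc F] E} {B : F[X]}
    (hs : ActsOnTorsionBy s M B) : ExtendsSigma (carlitz _) M s B := fun x hx ↦ by
  rw [hs x (coe_mem_torsion.mp hx), coe_carlitz]

lemma apply_sub_of_isDecompConjAction [FiniteDimensional (RatFunc F) E] [IsGalois (RatFunc F) E]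
    {c : F[X] → (E ≃ₐ[RatFunc F] E) → (E ≃ₐ[RatFunc F] E)} (hM : M ≠ 0)
    (hv : ∃ v, IsCoprime v M ∧ IsCoprime (v - 1) M) (hc : IsDecompConjAction (carlitz _) M c)
    {σ : E ≃ₐ[RatFunc F] E} (hσ : σ ∈ torsionFixer (RatFunc F) E M) {α : E}
    (hα : carlitz E M α ∈ (⊥ : IntermediateField (RatFunc F) E)) (f : F[X]) :
    c f σ α - α = carlitz E f (σ α - α) := by
  obtain ⟨u, s, t, hu, hfu, hs, ht⟩ := exists_actsOnTorsionBy_add (RatFunc F) E hM hv f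
  have hcf : c f σ = s * σ * s⁻¹ * (t * σ * t⁻¹) := by
    rw [hc f σ (fixesTorsion_carlitz_iff.mpr hσ) 2 ![u, f - u] (Fin.forall_fin_two.mpr ⟨hu, hfu⟩)
      (by simp) ![s, t] (Fin.forall_fin_two.mpr ⟨hs.extendsSigma, ht.extendsSigma⟩)]
    simp [List.ofFn_succ]
  rw [hcf, conj_mul_conj_apply_sub hα hσ hs ht, add_sub_cancel]

end AlgebraicClosure

end Carlitz

/-- **Corollary 2.11.**
Suppose `q ≠ 2`, or `q = 2` and `T ∤ M` and `(T+1) ∤ M`.  If `e_M(Γ) = 1` and `Γ` is a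
free `A`-module of rank `r` with basis `{a_1, …, a_r}`, and `φ_i : H_Γ(M) → Λ_M` is
defined by `φ_i(σ) = σ(α_i) - α_i` where `α_i^M = a_i`, then the map
`H_Γ(M) → Λ_M × ⋯ × Λ_M` (`r` copies), `σ ↦ (φ_1(σ), …, φ_r(σ))`, is an `A`-module
(equivalently `A/(M)`-module) isomorphism. -/
theorem carlitz_kummer_galois_group_is_full
    {Fq : Type} [Field Fq] [Fintype Fq]
    (ψ : Polynomial Fq →+* AddMonoid.End (AlgebraicClosure (RatFunc Fq)))
    (hψ : IsCarlitz ψ)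
    (M : Polynomial Fq) (hM : 0 < M.natDegree)
    (hq : ¬ (Fintype.card Fq = 2 ∧ (X ∣ M ∨ X + 1 ∣ M)))
    -- Γ : a free A-submodule of (k, +) of rank r with basis a_1, …, a_r
    (Γ : AddSubgroup (AlgebraicClosure (RatFunc Fq)))
    (hΓk : ∀ x ∈ Γ, x ∈ Set.range (algebraMap (RatFunc Fq) (AlgebraicClosure (RatFunc Fq))))
    (hΓA : ∀ (f : Polynomial Fq), ∀ x ∈ Γ, ψ f x ∈ Γ)
    (r : ℕ) (a : Fin r → AlgebraicClosure (RatFunc Fq))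
    (haΓ : ∀ i, a i ∈ Γ)
    (hgen : ∀ x ∈ Γ, ∃ g : Fin r → Polynomial Fq, x = ∑ i, ψ (g i) (a i))
    (hind : ∀ g : Fin r → Polynomial Fq, ∑ i, ψ (g i) (a i) = 0 → ∀ i, g i = 0)
    -- k_{M,Γ} = k(Λ_M, (1/M)Γ)
    (E : IntermediateField (RatFunc Fq) (AlgebraicClosure (RatFunc Fq)))
    (hE : E = adjoin (RatFunc Fq) {x | ψ M x ∈ Γ})
    -- e = e(Γ'/Γ) : the exponent of Γ' = (1/M)Γ ∩ k over Γ, with e_M(Γ) = gcd(e, M) = 1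
    (e : Polynomial Fq) (he : e.Monic)
    (heΓ : ∀ x : AlgebraicClosure (RatFunc Fq),
      x ∈ Set.range (algebraMap (RatFunc Fq) (AlgebraicClosure (RatFunc Fq))) →
      ψ M x ∈ Γ → ψ e x ∈ Γ)
    (hemin : ∀ e' : Polynomial Fq, e'.Monic →
      (∀ x : AlgebraicClosure (RatFunc Fq),
        x ∈ Set.range (algebraMap (RatFunc Fq) (AlgebraicClosure (RatFunc Fq))) →
        ψ M x ∈ Γ → ψ e' x ∈ Γ) →
      e.degree ≤ e'.degree)
    (hcop : IsCoprime e M)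
    -- the natural A-module structure on H_Γ(M) = Gal(k_{M,Γ}/K)
    (c : Polynomial Fq → (↥E ≃ₐ[RatFunc Fq] ↥E) → (↥E ≃ₐ[RatFunc Fq] ↥E))
    (hc : IsDecompConjAction ψ M c)
    (hcH : ∀ f τ, FixesTorsion ψ M τ → FixesTorsion ψ M (c f τ))
    -- the chosen roots α_i with α_i^M = a_i
    (α : Fin r → ↥E)
    (hα : ∀ i, ψ M ((α i : AlgebraicClosure (RatFunc Fq))) = a i) :
    -- σ ↦ (φ_1(σ), …, φ_r(σ)) is an A-module isomorphism H_Γ(M) ≃ Λ_M × ⋯ × Λ_M :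
    -- it is additive,
    (∀ σ τ, FixesTorsion ψ M σ → FixesTorsion ψ M τ → ∀ i,
      ((σ * τ) (α i) : AlgebraicClosure (RatFunc Fq)) - (α i : AlgebraicClosure (RatFunc Fq))
        = ((σ (α i) : AlgebraicClosure (RatFunc Fq)) - (α i : AlgebraicClosure (RatFunc Fq)))
          + ((τ (α i) : AlgebraicClosure (RatFunc Fq))
              - (α i : AlgebraicClosure (RatFunc Fq)))) ∧
    -- A-linear,
    (∀ f σ, FixesTorsion ψ M σ → ∀ i,
      (c f σ (α i) : AlgebraicClosure (RatFunc Fq)) - (α i : AlgebraicClosure (RatFunc Fq))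
        = ψ f ((σ (α i) : AlgebraicClosure (RatFunc Fq))
            - (α i : AlgebraicClosure (RatFunc Fq)))) ∧
    -- and a bijection from H_Γ(M) onto Λ_M × ⋯ × Λ_M (r copies)
    Set.BijOn
      (fun σ : ↥E ≃ₐ[RatFunc Fq] ↥E =>
        fun i => (σ (α i) : AlgebraicClosure (RatFunc Fq))
          - (α i : AlgebraicClosure (RatFunc Fq)))
      {σ | FixesTorsion ψ M σ}
      {v : Fin r → AlgebraicClosure (RatFunc Fq) | ∀ i, ψ M (v i) = 0} := by
  obtain rfl := Carlitz.eq_carlitz_of_isCarlitz hψ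
  have hM₀ : M ≠ 0 := ne_zero_of_natDegree_gt hM
  have hv := Carlitz.exists_isCoprime_isCoprime_sub_one hq
  have hΓ : ∀ x ∈ Γ, x ∈ (⊥ : IntermediateField (RatFunc Fq) (AlgebraicClosure (RatFunc Fq))) :=
    fun x hx ↦ mem_bot.mpr (hΓk x hx)
  obtain rfl : a = _ := funext fun i ↦ (hα i).symm
  have hE' := hE.trans (Carlitz.kummerField_eq_adjoin haΓ hgen)
  have : IsGalois (RatFunc Fq) E := hE ▸ Carlitz.isGalois_kummerField hM₀ hΓ
  have : FiniteDimensional (RatFunc Fq) E := Carlitz.finiteDimensional_of_eq_adjoin_torsion hM₀ hE'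
  have hαM (i : Fin r) : Carlitz.carlitz E M (α i) ∈ (⊥ : IntermediateField (RatFunc Fq) E) :=
    Carlitz.mem_bot_of_coe_mem_bot (Carlitz.coe_carlitz E M (α i) ▸ hΓ _ (haΓ i))
  simp only [Carlitz.fixesTorsion_carlitz_iff]
  refine ⟨fun σ τ hσ _ i ↦ ?_, fun f σ hσ i ↦ ?_, ?_⟩
  · exact congrArg Subtype.val (Carlitz.mul_apply_sub (hαM i) hσ τ)
  · have h := Carlitz.apply_sub_of_isDecompConjAction hM₀ hv hc hσ (hαM i) f
    exact (congrArg Subtype.val h).trans (Carlitz.coe_carlitz E f _)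
  · refine Carlitz.bijOn_apply_sub hM₀ hv hE' hαM fun g y hy hMy ↦ ?_
    refine Carlitz.dvd_of_apply_eq_sum haΓ hΓA hgen hind hcop (heΓ y (mem_bot.mp hy) ?_) hMy
    exact hMy ▸ sum_mem fun i _ ↦ hΓA _ _ (haΓ i)
end
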